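/- arXiv:math/0301245 — 2 statements merged into one kernel-verified Lean document; each statement's English description precedes it below -/
import Mathlib

section
/- (Theorem 6) The limit lim_{n→∞} (Σ_{k > n/2} a_{n,k})^{1/n} exists and equals 1/x_0, where x_0 := sup_{ζ>0} r(ζ)√ζ; moreover 2.91938 < 1/x_0 < 2.91939. -/
open SimpleGraph

/-- A rooted tree on vertex set `Fin n`: a connected acyclic simple graph
with a distinguished root vertex. -/
structure RTree (n : ℕ) where
  adj : SimpleGraph (Fin n)
  connected : adj.Connected
  acyclic : adj.IsAcyclic
  root : Fin n

/-- `v` is a leaf of the rooted tree `t`: a vertex of degree one other than the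
root, except that in the one-vertex tree the root counts as a leaf. -/
def IsLeafV {n : ℕ} (t : RTree n) (v : Fin n) : Prop :=
  n = 1 ∨ ((t.adj.neighborSet v).ncard = 1 ∧ v ≠ t.root)

/-- The number of leaves of a rooted tree. -/
noncomputable def numLeaves {n : ℕ} (t : RTree n) : ℕ :=
  Nat.card {v : Fin n // IsLeafV t v}

/-- Root-preserving isomorphism of rooted trees. -/
def treeSetoid (n : ℕ) : Setoid (RTree n) where
  r t t' := ∃ e : t.adj ≃g t'.adj, e t.root = t'.root
  iseqv := by
    constructor
    · intro t; exact ⟨RelIso.refl _, rfl⟩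
    · rintro t t' ⟨e, he⟩
      exact ⟨e.symm, by rw [← he]; exact e.symm_apply_apply t.root⟩
    · rintro a b c ⟨e, he⟩ ⟨f, hf⟩
      exact ⟨e.trans f, by simp [RelIso.trans_apply, he, hf]⟩

/-- `aCount n k` : the number of isomorphism classes of rooted trees with `n`
vertices and exactly `k` leaves. -/
noncomputable def aCount (n k : ℕ) : ℕ :=
  Nat.card (Quotient (Setoid.comap
    (Subtype.val : {t : RTree n // numLeaves t = k} → RTree n)
    (treeSetoid n)))

/-- The real bivariate generating function `T(x,z) = Σ_{n,k} a_{n,k} x^n z^k`. -/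
noncomputable def Treal (x z : ℝ) : ℝ :=
  ∑' p : ℕ × ℕ, (aCount p.1 p.2 : ℝ) * x ^ p.1 * z ^ p.2

/-- `r(ζ)`, the radius of convergence in `x` of `T(x,ζ)` for `ζ > 0`. -/
noncomputable def rFun (ζ : ℝ) : ℝ :=
  sSup {x : ℝ | 0 < x ∧
    Summable (fun p : ℕ × ℕ => (aCount p.1 p.2 : ℝ) * x ^ p.1 * ζ ^ p.2)}

/-- `a_n^+ = Σ_{k > n/2} a_{n,k}`: the number of rooted trees with `n`
vertices more than half of whose vertices are leaves. -/
noncomputable def aPlusN (n : ℕ) : ℕ :=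
  Nat.card (Quotient (Setoid.comap
    (Subtype.val : {t : RTree n // n < 2 * numLeaves t} → RTree n)
    (treeSetoid n)))

/-- `x₀ = sup_{ζ>0} r(ζ)·√ζ`. -/
noncomputable def xZero : ℝ :=
  sSup {y : ℝ | ∃ ζ : ℝ, 0 < ζ ∧ y = rFun ζ * Real.sqrt ζ}



/-- index of a prime -/
noncomputable def ixP (p : ℕ) : ℕ := Nat.count Nat.Prime p + 1
/-- the b-th prime, b ≥ 1 -/
noncomputable def prP (b : ℕ) : ℕ := Nat.nth Nat.Prime (b - 1)

theorem prP_prime (b : ℕ) : (prP b).Prime := Nat.prime_nth_prime _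

theorem ixP_prP {b : ℕ} (hb : 0 < b) : ixP (prP b) = b := by
  unfold ixP prP
  rw [Nat.count_nth_of_infinite Nat.infinite_setOfPred_prime]; omega

theorem prP_ixP {p : ℕ} (hp : p.Prime) : prP (ixP p) = p := by
  unfold ixP prP
  simp [Nat.nth_count hp]

theorem ixP_pos (p : ℕ) : 0 < ixP p := Nat.succ_pos _

theorem ixP_lt {p : ℕ} (hp : p.Prime) : ixP p < p := by
  have h : ∀ k, Nat.count Nat.Prime (k + 2) ≤ k := by
    intro k
    induction k with
    | zero => simp [Nat.count_succ, Nat.not_prime_zero, Nat.not_prime_one]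
    | succ k ih =>
      rw [show k + 1 + 2 = (k + 2) + 1 by ring, Nat.count_succ]
      split_ifs <;> omega
  obtain ⟨k, rfl⟩ : ∃ k, p = k + 2 := ⟨p - 2, by have := hp.two_le; omega⟩
  have := h k
  unfold ixP
  omega

theorem ixP_inj {p q : ℕ} (hp : p.Prime) (hq : q.Prime) (h : ixP p = ixP q) : p = q := by
  rw [← prP_ixP hp, ← prP_ixP hq, h]

/-- number of vertices of the tree with Matula number `n`. -/
noncomputable def szM (n : ℕ) : ℕ :=
  1 + (n.primeFactorsList.attach.map (fun p => szM (ixP p.1))).sum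
termination_by n
decreasing_by
  have h := p.2
  exact lt_of_lt_of_le (ixP_lt (Nat.prime_of_mem_primeFactorsList h)) (Nat.le_of_mem_primeFactorsList h)

/-- number of leaves below the root of the tree with Matula number `n` (0 if `n = 1`). -/
noncomputable def lsM (n : ℕ) : ℕ :=
  (n.primeFactorsList.attach.map (fun p => lsM (ixP p.1) + if ixP p.1 = 1 then 1 else 0)).sum
termination_by n
decreasing_by
  have h := p.2
  exact lt_of_lt_of_le (ixP_lt (Nat.prime_of_mem_primeFactorsList h)) (Nat.le_of_mem_primeFactorsList h)

/-- number of leaves. -/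
noncomputable def lvM (n : ℕ) : ℕ := lsM n + if n = 1 then 1 else 0

theorem szM_eq (n : ℕ) : szM n = 1 + (n.primeFactorsList.map (fun p => szM (ixP p))).sum := by
  rw [szM]; congr 2
  exact List.attach_map_val (f := fun p => szM (ixP p))

theorem lsM_eq (n : ℕ) : lsM n = (n.primeFactorsList.map (fun p => lvM (ixP p))).sum := by
  rw [lsM]; congr 1
  exact List.attach_map_val (f := fun p => lvM (ixP p))

theorem szM_one : szM 1 = 1 := by rw [szM_eq]; simp
theorem lsM_one : lsM 1 = 0 := by rw [lsM_eq]; simp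
theorem lvM_one : lvM 1 = 1 := by rw [lvM, lsM_one]; simp
theorem szM_pos (n : ℕ) : 0 < szM n := by rw [szM_eq]; omega

theorem szM_mul {a b : ℕ} (ha : a ≠ 0) (hb : b ≠ 0) : szM (a * b) + 1 = szM a + szM b := by
  rw [szM_eq (a*b), szM_eq a, szM_eq b,
    ((Nat.perm_primeFactorsList_mul ha hb).map _).sum_eq, List.map_append, List.sum_append]
  omega

theorem lsM_mul {a b : ℕ} (ha : a ≠ 0) (hb : b ≠ 0) : lsM (a * b) = lsM a + lsM b := by
  rw [lsM_eq (a*b), lsM_eq a, lsM_eq b,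
    ((Nat.perm_primeFactorsList_mul ha hb).map _).sum_eq, List.map_append, List.sum_append]

theorem szM_prime {p : ℕ} (hp : p.Prime) : szM p = 1 + szM (ixP p) := by
  rw [szM_eq, Nat.primeFactorsList_prime hp]; simp
theorem lsM_prime {p : ℕ} (hp : p.Prime) : lsM p = lvM (ixP p) := by
  rw [lsM_eq, Nat.primeFactorsList_prime hp]; simp
theorem lvM_of_ne {n : ℕ} (h : n ≠ 1) : lvM n = lsM n := by simp [lvM, h]

theorem lvM_bounds (n : ℕ) (hn : 0 < n) : 1 ≤ lvM n ∧ lvM n ≤ szM n ∧ (n ≠ 1 → lvM n < szM n) := by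
  induction n using Nat.strong_induction_on with
  | _ n ih =>
    by_cases h1 : n = 1
    · subst h1; simp [lvM_one, szM_one]
    · have hp := Nat.minFac_prime h1
      obtain ⟨a, ha⟩ := Nat.minFac_dvd n
      have ha0 : a ≠ 0 := by rintro rfl; omega
      generalize hq : n.minFac = p at *
      have hi : ixP p < n := lt_of_lt_of_le (ixP_lt hp) (Nat.le_of_dvd hn ⟨a, ha⟩)
      have h2 := ih _ hi (ixP_pos p)
      have h3 : a < n := by
        have := hp.two_le
        nlinarith [Nat.pos_of_ne_zero ha0]
      have h4 := ih a h3 (Nat.pos_of_ne_zero ha0)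
      have e1 := szM_mul hp.ne_zero ha0
      have e2 := lsM_mul hp.ne_zero ha0
      rw [← ha, szM_prime hp] at e1
      rw [← ha, lsM_prime hp] at e2
      rw [lvM_of_ne h1, e2]
      have h5 : lsM a + 1 ≤ szM a := by
        by_cases h : a = 1
        · subst h; simp [lsM_one, szM_one]
        · rw [← lvM_of_ne h]; exact h4.2.2 h
      omega


section PTreeSec
open scoped Classical
set_option linter.unusedSectionVars false

/-- A rooted tree given by a parent function and a depth function. -/
structure PTree (V : Type) where
  r : V
  par : V → V
  dep : V → ℕ
  dep_r : dep r = 0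
  dep_par : ∀ v, v ≠ r → dep (par v) + 1 = dep v

namespace PTree

variable {V W : Type} [Fintype V] [Fintype W]

/-- child relation -/
def Ch (t : PTree V) (c v : V) : Prop := c ≠ t.r ∧ t.par c = v

theorem Ch.dep {t : PTree V} {c v : V} (h : t.Ch c v) : t.dep c = t.dep v + 1 := by
  rw [← t.dep_par c h.1, h.2]

theorem wf (t : PTree V) : WellFounded t.Ch := by
  have : ∃ D, ∀ v, t.dep v ≤ D :=
    ⟨∑ v, t.dep v, fun v => Finset.single_le_sum (f := t.dep) (fun _ _ => Nat.zero_le _) (Finset.mem_univ v)⟩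
  obtain ⟨D, hD⟩ := this
  refine Subrelation.wf (r := InvImage (· < ·) (fun v => D - t.dep v)) ?_ (InvImage.wf _ wellFounded_lt)
  intro c v h
  have := Ch.dep h
  have := hD c
  show D - t.dep c < D - t.dep v
  omega

/-- Matula code of the subtree at `v` -/
noncomputable def code (t : PTree V) : V → ℕ :=
  t.wf.fix (fun v rec => ∏ c : {c // t.Ch c v}, prP (rec c.1 c.2))

theorem code_eq' (t : PTree V) (v : V) : t.code v = ∏ c : {c // t.Ch c v}, prP (t.code c.1) := by
  rw [code, WellFounded.fix_eq]

theorem code_eq (t : PTree V) (v : V) :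
    t.code v = ∏ c, if t.Ch c v then prP (t.code c) else 1 := by
  rw [code_eq', ← Finset.prod_filter]
  exact (Finset.prod_subtype (Finset.univ.filter (fun c => t.Ch c v)) (by simp) (fun c => prP (t.code c))).symm

theorem code_unique (t : PTree V) (κ : V → ℕ)
    (h : ∀ v, κ v = ∏ c, if t.Ch c v then prP (κ c) else 1) (v : V) : κ v = t.code v := by
  induction v using t.wf.induction with
  | _ v ih =>
    rw [h, code_eq]
    refine Finset.prod_congr rfl fun c _ => ?_
    split_ifs with hc
    · rw [ih c hc]
    · rfl

theorem code_pos (t : PTree V) (v : V) : 0 < t.code v := by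
  rw [code_eq]
  refine Finset.prod_pos fun c _ => ?_
  split_ifs
  · exact (prP_prime _).pos
  · exact one_pos

theorem code_factorization (t : PTree V) (v : V) (b : ℕ) (hb : 0 < b) :
    (t.code v).factorization (prP b) = Fintype.card {c : {c // t.Ch c v} // t.code c.1 = b} := by
  rw [code_eq', Nat.factorization_prod (fun c _ => (prP_prime _).ne_zero), Finset.sum_apply',
    Fintype.card_subtype, Finset.card_filter]
  refine Finset.sum_congr rfl fun c _ => ?_
  rw [(prP_prime _).factorization, Finsupp.single_apply]
  congr 1
  refine propext ⟨fun h => ?_, fun h => by rw [h]⟩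
  rw [← ixP_prP (t.code_pos c.1), h, ixP_prP hb]

/-- telescoping sum -/
theorem telescope (t : PTree V) (f g : V → ℕ)
    (h : ∀ v, f v = g v + ∑ c, if t.Ch c v then f c else 0) : f t.r = ∑ v, g v := by
  have h1 : ∑ v, f v = ∑ v, g v + ∑ v, ∑ c, if t.Ch c v then f c else 0 := by
    rw [← Finset.sum_add_distrib]; exact Finset.sum_congr rfl fun v _ => h v
  have h2 : ∑ v, ∑ c, (if t.Ch c v then f c else 0) = ∑ c, if c ≠ t.r then f c else 0 := by
    rw [Finset.sum_comm]
    refine Finset.sum_congr rfl fun c _ => ?_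
    simp only [Ch]
    by_cases hc : c = t.r
    · simp [hc]
    · simp [hc]
  have h3 : ∑ v, f v = f t.r + ∑ c, if c ≠ t.r then f c else 0 := by
    have : ∀ v, f v = (if v = t.r then f v else 0) + (if v ≠ t.r then f v else 0) := by
      intro v; by_cases hv : v = t.r <;> simp [hv]
    conv_lhs => rw [Finset.sum_congr rfl fun v _ => this v, Finset.sum_add_distrib]
    simp
  omega

theorem szM_prod {ι : Type} (s : Finset ι) (f : ι → ℕ) (hf : ∀ i, 0 < f i) :
    szM (∏ i ∈ s, prP (f i)) = 1 + ∑ i ∈ s, szM (f i) := by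
  induction s using Finset.induction_on with
  | empty => simp [szM_one]
  | insert a s ha ih =>
    rw [Finset.prod_insert ha, Finset.sum_insert ha]
    have := szM_mul (prP_prime (f a)).ne_zero
      (Finset.prod_ne_zero_iff.mpr fun i (_ : i ∈ s) => (prP_prime (f i)).ne_zero)
    rw [szM_prime (prP_prime _), ixP_prP (hf a), ih] at this
    omega

theorem lsM_prod {ι : Type} (s : Finset ι) (f : ι → ℕ) (hf : ∀ i, 0 < f i) :
    lsM (∏ i ∈ s, prP (f i)) = ∑ i ∈ s, lvM (f i) := by
  induction s using Finset.induction_on with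
  | empty => simp [lsM_one]
  | insert a s ha ih =>
    rw [Finset.prod_insert ha, Finset.sum_insert ha]
    have := lsM_mul (prP_prime (f a)).ne_zero
      (Finset.prod_ne_zero_iff.mpr fun i (_ : i ∈ s) => (prP_prime (f i)).ne_zero)
    rw [lsM_prime (prP_prime _), ixP_prP (hf a), ih] at this
    omega

theorem code_eq_one_iff (t : PTree V) (v : V) : t.code v = 1 ↔ ∀ c, ¬ t.Ch c v := by
  constructor
  · intro h c hc
    rw [code_eq'] at h
    have := Finset.prod_eq_one_iff.mp h ⟨c, hc⟩ (Finset.mem_univ _)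
    exact (prP_prime _).ne_one this
  · intro h
    rw [code_eq]
    exact Finset.prod_eq_one fun c _ => by simp [h c]

theorem szM_code (t : PTree V) : szM (t.code t.r) = Fintype.card V := by
  rw [telescope t (fun v => szM (t.code v)) (fun _ => 1)]
  · simp
  · intro v
    rw [code_eq, ← Finset.prod_filter, szM_prod _ _ t.code_pos, Finset.sum_filter]

theorem lvM_code (t : PTree V) :
    lvM (t.code t.r) = Nat.card {v : V // ∀ c, ¬ t.Ch c v} := by
  rw [telescope t (fun v => lvM (t.code v)) (fun v => if ∀ c, ¬ t.Ch c v then 1 else 0)]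
  · rw [Nat.card_eq_fintype_card, Fintype.card_subtype, Finset.card_filter]
  · intro v
    rw [lvM, if_congr (t.code_eq_one_iff v) rfl rfl, add_comm]
    congr 1
    rw [code_eq, ← Finset.prod_filter, lsM_prod _ _ t.code_pos, Finset.sum_filter]

/-- isomorphisms of parent structures -/
def IsIso (t : PTree V) (s : PTree W) (e : V ≃ W) : Prop :=
  e t.r = s.r ∧ ∀ v, v ≠ t.r → e (t.par v) = s.par (e v)

theorem IsIso.ch {t : PTree V} {s : PTree W} {e : V ≃ W} (h : t.IsIso s e) (c v : V) :
    s.Ch (e c) (e v) ↔ t.Ch c v := by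
  unfold Ch
  rw [← h.1]
  simp only [ne_eq, EmbeddingLike.apply_eq_iff_eq]
  constructor
  · rintro ⟨h1, h2⟩
    exact ⟨h1, e.injective (by rw [h.2 c h1, h2])⟩
  · rintro ⟨h1, h2⟩
    exact ⟨h1, by rw [← h.2 c h1, h2]⟩

theorem IsIso.code {t : PTree V} {s : PTree W} {e : V ≃ W} (h : t.IsIso s e) (v : V) :
    s.code (e v) = t.code v := by
  refine code_unique t (fun v => s.code (e v)) (fun v => ?_) v
  rw [code_eq, ← e.prod_comp]
  exact Finset.prod_congr rfl fun c _ => by rw [if_congr (h.ch c v) rfl rfl]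

theorem exists_sigma (t : PTree V) (s : PTree W) (v : V) (w : W) (h : t.code v = s.code w) :
    ∃ σ : V → W, (∀ c, t.Ch c v → s.Ch (σ c) w ∧ s.code (σ c) = t.code c) ∧
      ∀ c c', t.Ch c v → t.Ch c' v → σ c = σ c' → c = c' := by
  have hf : ∀ b : ℕ, Nonempty ({c : {c // t.Ch c v} // t.code c.1 = b} ≃
      {c : {c // s.Ch c w} // s.code c.1 = b}) := by
    intro b
    by_cases hb : 0 < b
    · rw [← Fintype.card_eq, ← code_factorization t v b hb, ← code_factorization s w b hb, h]
    · have h1 : IsEmpty {c : {c // t.Ch c v} // t.code c.1 = b} :=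
        ⟨fun c => hb (c.2 ▸ t.code_pos _)⟩
      have h2 : IsEmpty {c : {c // s.Ch c w} // s.code c.1 = b} :=
        ⟨fun c => hb (c.2 ▸ s.code_pos _)⟩
      exact ⟨Equiv.equivOfIsEmpty _ _⟩
  let e := Equiv.ofFiberEquiv (f := fun c : {c // t.Ch c v} => t.code c.1)
    (g := fun c : {c // s.Ch c w} => s.code c.1) (fun b => (hf b).some)
  have he : ∀ c, s.code (e c).1 = t.code c.1 := fun c =>
    Equiv.ofFiberEquiv_map (f := fun c : {c // t.Ch c v} => t.code c.1)
      (g := fun c : {c // s.Ch c w} => s.code c.1) (fun b => (hf b).some) c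
  refine ⟨fun c => if hc : t.Ch c v then (e ⟨c, hc⟩).1 else w, ?_, ?_⟩
  · intro c hc
    simp only [hc, dif_pos]
    exact ⟨(e ⟨c, hc⟩).2, he _⟩
  · intro c c' hc hc' heq
    simp only [hc, hc', dif_pos] at heq
    have := e.injective (Subtype.ext heq)
    exact congrArg Subtype.val this

theorem exists_iso (t : PTree V) (s : PTree W) (h : t.code t.r = s.code s.r) :
    ∃ e : V ≃ W, t.IsIso s e := by
  choose! σ hσ1 hσ2 using exists_sigma t s
  have hwf : WellFounded (fun a b : V => b ≠ t.r ∧ a = t.par b) := by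
    refine Subrelation.wf (r := InvImage (· < ·) t.dep) ?_ (InvImage.wf _ wellFounded_lt)
    rintro a b ⟨h1, rfl⟩
    have := t.dep_par b h1
    show t.dep (t.par b) < t.dep b
    omega
  let φ : V → W := hwf.fix (fun v rec => if hv : v = t.r then s.r else
    σ (t.par v) (rec (t.par v) ⟨hv, rfl⟩) v)
  have hφ : ∀ v, φ v = if v = t.r then s.r else σ (t.par v) (φ (t.par v)) v := by
    intro v
    show hwf.fix _ v = _
    rw [WellFounded.fix_eq]
    rfl
  have hφr : φ t.r = s.r := by rw [hφ]; simp
  have key : ∀ v, s.code (φ v) = t.code v ∧ (v ≠ t.r → s.Ch (φ v) (φ (t.par v))) ∧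
      s.dep (φ v) = t.dep v := by
    intro v
    induction v using hwf.induction with
    | _ v ih =>
      by_cases hv : v = t.r
      · subst hv; rw [hφr]; simp [h, t.dep_r, s.dep_r]
      · obtain ⟨h1, -, h3⟩ := ih (t.par v) ⟨hv, rfl⟩
        have h2 := hσ1 (t.par v) (φ (t.par v)) h1.symm v ⟨hv, rfl⟩
        have h4 : φ v = σ (t.par v) (φ (t.par v)) v := by rw [hφ, if_neg hv]
        rw [← h4] at h2
        refine ⟨h2.2, fun _ => h2.1, ?_⟩
        rw [h2.1.dep, h3, t.dep_par v hv]
  have inj : ∀ a b, φ a = φ b → a = b := by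
    intro a
    induction a using hwf.induction with
    | _ a ih =>
      intro b hab
      have hd : t.dep a = t.dep b := by rw [← (key a).2.2, hab, (key b).2.2]
      by_cases ha : a = t.r
      · by_contra hb
        have := t.dep_par b (fun h => hb (by rw [h, ha]))
        rw [ha, t.dep_r] at hd
        omega
      · have hb : b ≠ t.r := by
          rintro rfl
          have := t.dep_par a ha
          rw [t.dep_r] at hd
          omega
        have hpa := (key a).2.1 ha
        have hpb := (key b).2.1 hb
        have hp : t.par a = t.par b := by
          refine ih _ ⟨ha, rfl⟩ _ ?_
          rw [← hpa.2, ← hpb.2, hab]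
        rw [hφ a, hφ b, if_neg ha, if_neg hb, ← hp] at hab
        exact hσ2 _ _ (key _).1.symm _ _ ⟨ha, rfl⟩ ⟨hb, hp.symm⟩ hab
  have hbij : Function.Bijective φ := by
    rw [Fintype.bijective_iff_injective_and_card]
    exact ⟨fun a b => inj a b, by rw [← szM_code t, ← szM_code s, h]⟩
  exact ⟨Equiv.ofBijective φ hbij, hφr, fun v hv => ((key v).2.1 hv).2.symm⟩

/-- one vertex -/
def single : PTree Unit := ⟨(), fun _ => (), fun _ => 0, rfl, fun _ h => absurd rfl h⟩

/-- attach `s` below the root of `t` -/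
noncomputable def graft (t : PTree V) (s : PTree W) : PTree (V ⊕ W) where
  r := Sum.inl t.r
  par := Sum.elim (fun v => Sum.inl (t.par v))
    (fun w => if w = s.r then Sum.inl t.r else Sum.inr (s.par w))
  dep := Sum.elim t.dep (fun w => s.dep w + 1)
  dep_r := by simp [t.dep_r]
  dep_par := by
    rintro (v | w) h
    · simp only [Sum.elim_inl]
      exact t.dep_par v (fun h' => h (by rw [h']))
    · simp only [Sum.elim_inr]
      split_ifs with hw
      · simp [hw, t.dep_r, s.dep_r]
      · simp [s.dep_par w hw]

theorem graft_code (t : PTree V) (s : PTree W) :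
    (t.graft s).code (t.graft s).r = t.code t.r * prP (s.code s.r) := by
  have h := code_unique (t.graft s) (Sum.elim
    (fun v => t.code v * if v = t.r then prP (s.code s.r) else 1) s.code) ?_ (t.graft s).r
  · rw [← h]
    simp [graft]
  · have hll : ∀ c v, (t.graft s).Ch (Sum.inl c) (Sum.inl v) ↔ t.Ch c v := by
      intro c v; simp [Ch, graft]
    have hlr : ∀ c v, ¬ (t.graft s).Ch (Sum.inl c) (Sum.inr v) := by
      intro c v; simp [Ch, graft]
    have hrr : ∀ c v, (t.graft s).Ch (Sum.inr c) (Sum.inr v) ↔ s.Ch c v := by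
      intro c v
      by_cases hc : c = s.r <;> simp [Ch, graft, hc]
    have hrl : ∀ c v, (t.graft s).Ch (Sum.inr c) (Sum.inl v) ↔ (c = s.r ∧ v = t.r) := by
      intro c v
      by_cases hc : c = s.r <;> simp [Ch, graft, hc, eq_comm]
    rintro (v | w)
    · rw [Fintype.prod_sum_type]
      simp only [hll, hrl, Sum.elim_inl, Sum.elim_inr]
      rw [code_eq t v]
      congr 1
      · refine Finset.prod_congr rfl fun c _ => ?_
        split_ifs with h1 h2
        · exact absurd h2 h1.1
        · simp
        · rfl
      · by_cases hv : v = t.r <;> simp [hv]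
    · rw [Fintype.prod_sum_type]
      simp only [hrr, hlr, Sum.elim_inr, if_false, Finset.prod_const_one, one_mul]
      exact code_eq s w

/-- transport along an equivalence -/
def trans (t : PTree V) (e : V ≃ W) : PTree W where
  r := e t.r
  par w := e (t.par (e.symm w))
  dep w := t.dep (e.symm w)
  dep_r := by simp [t.dep_r]
  dep_par w h := by
    simp only [Equiv.symm_apply_apply]
    exact t.dep_par _ (fun h' => h (by rw [← h']; simp))

theorem trans_iso (t : PTree V) (e : V ≃ W) : t.IsIso (t.trans e) e :=
  ⟨rfl, fun v _ => by simp [trans]⟩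

theorem exists_code_aux (m : ℕ) (hm : 0 < m) :
    ∃ (V : Type) (_ : Fintype V) (t : PTree V), t.code t.r = m := by
  induction m using Nat.strong_induction_on with
  | _ m ih =>
    by_cases h1 : m = 1
    · refine ⟨Unit, inferInstance, single, ?_⟩
      rw [h1, code_eq_one_iff]
      intro c hc
      exact hc.1 rfl
    · have hp := Nat.minFac_prime h1
      obtain ⟨a, ha⟩ := Nat.minFac_dvd m
      have ha0 : a ≠ 0 := by rintro rfl; omega
      generalize hq : m.minFac = p at *
      have hi : ixP p < m := lt_of_lt_of_le (ixP_lt hp) (Nat.le_of_dvd hm ⟨a, ha⟩)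
      have h3 : a < m := by
        have := hp.two_le
        nlinarith [Nat.pos_of_ne_zero ha0]
      obtain ⟨V, _, t, ht⟩ := ih a h3 (Nat.pos_of_ne_zero ha0)
      obtain ⟨W, _, s, hs⟩ := ih _ hi (ixP_pos p)
      refine ⟨V ⊕ W, inferInstance, t.graft s, ?_⟩
      rw [graft_code, ht, hs, prP_ixP hp, ha, mul_comm]

theorem exists_code (m : ℕ) (hm : 0 < m) : ∃ t : PTree (Fin (szM m)), t.code t.r = m := by
  obtain ⟨V, _, t, ht⟩ := exists_code_aux m hm
  have hc : Fintype.card V = szM m := by rw [← ht, szM_code]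
  let e := Fintype.equivFinOfCardEq hc
  exact ⟨t.trans e, by rw [show (t.trans e).r = e t.r from rfl, (t.trans_iso e).code, ht]⟩

end PTree
end PTreeSec


section GraphSec
open scoped Classical
open SimpleGraph
set_option linter.unusedSectionVars false

variable {V W : Type} [Fintype V] [Fintype W]

/-- the graph of a parent structure -/
def Compat (t : PTree V) (G : SimpleGraph V) : Prop :=
  ∀ a b, G.Adj a b ↔ t.Ch a b ∨ t.Ch b a

theorem exists_compat (G : SimpleGraph V) (hG : G.IsTree) (r : V) :
    ∃ t : PTree V, t.r = r ∧ Compat t G := by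
  choose p hp1 hp2 using fun v => hG.connected.exists_path_of_dist r v
  have hadj : ∀ v, v ≠ r → G.Adj (p v).penultimate v := fun v hv =>
    (p v).adj_penultimate (Walk.not_nil_of_ne (Ne.symm hv))
  have huniq : ∀ v w, G.Adj w v → G.dist r v = G.dist r w + 1 → w = (p v).penultimate := by
    intro v w h hd
    have h1 : ((p w).concat h).length = G.dist r v := by rw [Walk.length_concat, hp2, hd]
    have h2 := Walk.isPath_of_length_eq_dist _ h1
    have h3 : (p w).concat h = p v := congrArg Subtype.val
      ((hG.isAcyclic.subsingleton_path r v).elim ⟨_, h2⟩ ⟨_, hp1 v⟩)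
    rw [← h3, Walk.penultimate_concat]
  have hdist : ∀ v, v ≠ r → G.dist r (p v).penultimate + 1 = G.dist r v := by
    intro v hv
    rcases hG.dist_eq_dist_add_one_of_adj r (hadj v hv) with h | h
    · exfalso
      have h1 := G.dist_le (p v).dropLast
      have h2 : (p v).dropLast.length ≤ (p v).length := by
        rw [Walk.length_dropLast]; omega
      rw [hp2] at h2
      omega
    · omega
  refine ⟨⟨r, fun v => (p v).penultimate, G.dist r, by simp, hdist⟩, rfl, ?_⟩
  intro a b
  simp only [PTree.Ch]
  constructor
  · intro h
    rcases hG.dist_eq_dist_add_one_of_adj r h with h1 | h1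
    · left
      exact ⟨by rintro rfl; simp at h1, (huniq a b h.symm h1).symm⟩
    · right
      exact ⟨by rintro rfl; simp at h1, (huniq b a h h1).symm⟩
  · rintro (⟨h, rfl⟩ | ⟨h, rfl⟩)
    · exact (hadj a h).symm
    · exact hadj b h

/-- the graph of a parent structure -/
def PTree.graph (t : PTree V) : SimpleGraph V where
  Adj a b := t.Ch a b ∨ t.Ch b a
  symm := ⟨fun _ _ h => h.symm⟩
  loopless := ⟨by
    intro a h
    have h1 : t.Ch a a := by tauto
    have := h1.dep
    omega⟩

theorem PTree.graph_compat (t : PTree V) : Compat t t.graph := fun _ _ => Iff.rfl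

theorem Compat.isTree {t : PTree V} {G : SimpleGraph V} (h : Compat t G) : G.IsTree := by
  rw [isTree_iff_connected_and_card]
  constructor
  · have hr : ∀ n v, t.dep v = n → G.Reachable v t.r := by
      intro n
      induction n with
      | zero =>
        intro v hv
        by_cases h1 : v = t.r
        · rw [h1]
        · have := t.dep_par v h1; omega
      | succ n ih =>
        intro v hv
        have h1 : v ≠ t.r := by rintro rfl; rw [t.dep_r] at hv; omega
        have h2 := t.dep_par v h1
        have h3 : G.Adj v (t.par v) := (h _ _).2 (Or.inl ⟨h1, rfl⟩)
        exact h3.reachable.trans (ih _ (by omega))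
    have : Nonempty V := ⟨t.r⟩
    exact ⟨fun a b => (hr _ a rfl).trans (hr _ b rfl).symm⟩
  · have hb : Function.Bijective (fun v : {v // v ≠ t.r} =>
        (⟨s(v.1, t.par v.1), (h _ _).2 (Or.inl ⟨v.2, rfl⟩)⟩ : G.edgeSet)) := by
      constructor
      · rintro ⟨a, ha⟩ ⟨b, hb⟩ hab
        replace hab := congrArg Subtype.val hab
        simp only at hab
        rw [Sym2.eq_iff] at hab
        rcases hab with hab | hab
        · exact Subtype.ext hab.1
        · have h1 := t.dep_par a ha
          have h2 := t.dep_par b hb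
          rw [hab.2] at h1
          rw [← hab.1] at h2
          omega
      · rintro ⟨e, he⟩
        induction e using Sym2.ind with
        | _ a b =>
          rcases (h _ _).1 he with h1 | h1
          · exact ⟨⟨a, h1.1⟩, by simp [h1.2]⟩
          · exact ⟨⟨b, h1.1⟩, by simp [h1.2, Sym2.eq_swap]⟩
    rw [← Nat.card_eq_of_bijective _ hb, Nat.card_eq_fintype_card, Nat.card_eq_fintype_card,
      Fintype.card_subtype_compl, Fintype.card_subtype_eq]
    have : 0 < Fintype.card V := Fintype.card_pos_iff.mpr ⟨t.r⟩
    omega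

theorem Compat.isIso {t : PTree V} {s : PTree W} {G : SimpleGraph V} {H : SimpleGraph W}
    (hG : Compat t G) (hH : Compat s H) (e : G ≃g H) (he : e t.r = s.r) :
    t.IsIso s e.toEquiv := by
  refine ⟨he, ?_⟩
  have key : ∀ n v, t.dep v = n → v ≠ t.r → e (t.par v) = s.par (e v) := by
    intro n
    induction n with
    | zero => intro v hv hr; have := t.dep_par v hr; omega
    | succ n ih =>
      intro v hv hr
      have h1 := t.dep_par v hr
      have h2 : H.Adj (e v) (e (t.par v)) := e.map_rel_iff.2 ((hG _ _).2 (Or.inl ⟨hr, rfl⟩))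
      rcases (hH _ _).1 h2 with h3 | h3
      · exact h3.2.symm
      · exfalso
        have h4 : t.par v ≠ t.r := by
          intro h; apply h3.1; rw [h, he]
        have h5 := ih (t.par v) (by omega) h4
        rw [h3.2] at h5
        have h6 : t.par (t.par v) = v := e.injective h5
        have h7 := t.dep_par _ h4
        rw [h6] at h7
        omega
  exact fun v hv => key _ v rfl hv

theorem Compat.of_isIso {t : PTree V} {s : PTree W} {G : SimpleGraph V} {H : SimpleGraph W}
    (hG : Compat t G) (hH : Compat s H) (e : V ≃ W) (he : t.IsIso s e) :
    ∃ e' : G ≃g H, e' t.r = s.r := by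
  refine ⟨⟨e, ?_⟩, he.1⟩
  intro a b
  rw [hG, hH, he.ch, he.ch]

theorem Compat.nbr {t : PTree V} {G : SimpleGraph V} (h : Compat t G) (v : V) (hv : v ≠ t.r) :
    (G.neighborSet v).ncard = 1 ↔ ∀ c, ¬ t.Ch c v := by
  have hp : t.par v ∈ G.neighborSet v := (h _ _).2 (Or.inl ⟨hv, rfl⟩)
  constructor
  · intro h1 c hc
    obtain ⟨a, ha⟩ := Set.ncard_eq_one.1 h1
    have h2 : c ∈ G.neighborSet v := (h _ _).2 (Or.inr hc)
    rw [ha] at h2 hp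
    have h3 : c = t.par v := by rw [h2, hp]
    have h4 := t.dep_par v hv
    have h5 := hc.dep
    rw [h3] at h5
    omega
  · intro h1
    rw [Set.ncard_eq_one]
    refine ⟨t.par v, Set.eq_singleton_iff_unique_mem.2 ⟨hp, fun c hc => ?_⟩⟩
    rcases (h _ _).1 hc with h2 | h2
    · exact h2.2.symm
    · exact absurd h2 (h1 c)

/-- the chosen parent structure of a rooted tree -/
noncomputable def RTree.pt {n : ℕ} (t : RTree n) : PTree (Fin n) :=
  (exists_compat t.adj ⟨t.connected, t.acyclic⟩ t.root).choose

theorem RTree.pt_r {n : ℕ} (t : RTree n) : t.pt.r = t.root :=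
  (exists_compat t.adj ⟨t.connected, t.acyclic⟩ t.root).choose_spec.1

theorem RTree.pt_compat {n : ℕ} (t : RTree n) : Compat t.pt t.adj :=
  (exists_compat t.adj ⟨t.connected, t.acyclic⟩ t.root).choose_spec.2

/-- Matula number of a rooted tree -/
noncomputable def RTree.mat {n : ℕ} (t : RTree n) : ℕ := t.pt.code t.pt.r

theorem RTree.mat_pos {n : ℕ} (t : RTree n) : 0 < t.mat := PTree.code_pos _ _

theorem RTree.szM_mat {n : ℕ} (t : RTree n) : szM t.mat = n := by
  rw [RTree.mat, PTree.szM_code, Fintype.card_fin]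

theorem RTree.lvM_mat {n : ℕ} (t : RTree n) : lvM t.mat = numLeaves t := by
  rw [RTree.mat, PTree.lvM_code, numLeaves]
  refine Nat.card_congr (Equiv.subtypeEquivRight fun v => ?_)
  unfold IsLeafV
  by_cases hv : v = t.pt.r
  · rw [← t.pt_r]
    simp only [hv, ne_eq, not_true, and_false, or_false]
    constructor
    · intro h
      by_contra hn
      have hpos : 0 < n := Nat.pos_of_ne_zero (by rintro rfl; exact Fin.elim0 v)
      have h1 : t.mat = 1 := (PTree.code_eq_one_iff _ _).2 h
      have h2 := t.szM_mat
      rw [h1, szM_one] at h2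
      exact hn h2.symm
    · rintro rfl c hc
      exact hc.1 (Subsingleton.elim _ _)
  · rw [t.pt_compat.nbr v hv, ← t.pt_r]
    simp only [hv, ne_eq, not_false_iff, and_true]
    constructor
    · intro h; exact Or.inr h
    · rintro (h | h)
      · subst h; exact absurd (Subsingleton.elim _ _) hv
      · exact h

theorem RTree.mat_eq_iff {n : ℕ} (t s : RTree n) :
    t.mat = s.mat ↔ (treeSetoid n).r t s := by
  constructor
  · intro h
    obtain ⟨e, he⟩ := PTree.exists_iso t.pt s.pt h
    obtain ⟨e', he'⟩ := t.pt_compat.of_isIso s.pt_compat e he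
    rw [t.pt_r, s.pt_r] at he'
    exact ⟨e', he'⟩
  · rintro ⟨e, he⟩
    rw [← t.pt_r, ← s.pt_r] at he
    have h := t.pt_compat.isIso s.pt_compat e he
    rw [RTree.mat, RTree.mat, ← h.code, h.1]

theorem RTree.mat_surj {n m : ℕ} (hm : 0 < m) (hn : szM m = n) : ∃ t : RTree n, t.mat = m := by
  subst hn
  obtain ⟨t, ht⟩ := PTree.exists_code m hm
  have hT := t.graph_compat.isTree
  refine ⟨⟨t.graph, hT.connected, hT.isAcyclic, t.r⟩, ?_⟩
  set s : RTree (szM m) := ⟨t.graph, hT.connected, hT.isAcyclic, t.r⟩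
  have h := s.pt_compat.isIso t.graph_compat (RelIso.refl _) s.pt_r
  rw [RTree.mat, ← h.code, h.1, ht]

theorem card_quot (n : ℕ) (P : ℕ → Prop) :
    Nat.card (Quotient (Setoid.comap
      (Subtype.val : {t : RTree n // P (numLeaves t)} → RTree n) (treeSetoid n))) =
    Nat.card {m : ℕ // 0 < m ∧ szM m = n ∧ P (lvM m)} := by
  refine Nat.card_eq_of_bijective (Quotient.lift
    (fun t : {t : RTree n // P (numLeaves t)} =>
      (⟨t.1.mat, t.1.mat_pos, t.1.szM_mat, by rw [t.1.lvM_mat]; exact t.2⟩ :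
        {m : ℕ // 0 < m ∧ szM m = n ∧ P (lvM m)})) ?_) ⟨?_, ?_⟩
  · intro a b h
    exact Subtype.ext ((RTree.mat_eq_iff _ _).2 h)
  · intro a b
    induction a using Quotient.inductionOn with | _ a =>
    induction b using Quotient.inductionOn with | _ b =>
    intro h
    exact Quotient.sound ((RTree.mat_eq_iff _ _).1 (congrArg Subtype.val h))
  · rintro ⟨m, h1, h2, h3⟩
    obtain ⟨t, rfl⟩ := RTree.mat_surj h1 h2
    exact ⟨Quotient.mk _ ⟨t, by rw [← t.lvM_mat]; exact h3⟩, rfl⟩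

theorem aCount_eq (n k : ℕ) : aCount n k = Nat.card {m : ℕ // 0 < m ∧ szM m = n ∧ lvM m = k} :=
  card_quot n (fun l => l = k)

theorem aPlusN_eq (n : ℕ) : aPlusN n = Nat.card {m : ℕ // 0 < m ∧ szM m = n ∧ n < 2 * lvM m} :=
  card_quot n (fun l => n < 2 * l)

theorem finite_szM (n : ℕ) : Set.Finite {m : ℕ | 0 < m ∧ szM m = n} := by
  have : Finite (RTree n) := by
    refine Finite.of_injective (fun t : RTree n => (t.adj, t.root)) ?_
    rintro ⟨a, _, _, b⟩ ⟨c, _, _, d⟩ h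
    simp only [Prod.mk.injEq] at h
    obtain ⟨rfl, rfl⟩ := h
    rfl
  refine (Set.finite_range (fun t : RTree n => t.mat)).subset ?_
  rintro m ⟨h1, h2⟩
  exact RTree.mat_surj h1 h2

end GraphSec


/-- weight of the tree with Matula number `m` -/
noncomputable def wt (x z : ℝ) (m : ℕ) : ℝ := if m = 0 then 0 else x ^ szM m * z ^ lvM m

/-- weight of the planted forest with Matula number `n` -/
noncomputable def FM (x z : ℝ) : ℕ →* ℝ where
  toFun n := if n = 0 then 0 else x ^ (szM n - 1) * z ^ lsM n
  map_one' := by simp [szM_one, lsM_one]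
  map_mul' a b := by
    by_cases ha : a = 0
    · simp [ha]
    by_cases hb : b = 0
    · simp [hb]
    have h1 := szM_mul ha hb
    have h2 := lsM_mul ha hb
    have h3 := szM_pos a
    have h4 := szM_pos b
    simp only [ha, hb, mul_eq_zero, or_self, if_false]
    rw [h2, show szM (a * b) - 1 = (szM a - 1) + (szM b - 1) by omega, pow_add, pow_add]
    ring

theorem FM_apply (x z : ℝ) (n : ℕ) : FM x z n = if n = 0 then 0 else x ^ (szM n - 1) * z ^ lsM n := rfl

theorem FM_prime {x z : ℝ} {p : ℕ} (hp : p.Prime) : FM x z p = wt x z (ixP p) := by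
  rw [FM_apply, wt, if_neg hp.ne_zero, if_neg (ixP_pos p).ne', szM_prime hp, lsM_prime hp]
  simp

theorem wt_eq_FM (x z : ℝ) (n : ℕ) :
    wt x z n = x * FM x z n + if n = 1 then x * (z - 1) else 0 := by
  rw [FM_apply, wt]
  by_cases h0 : n = 0
  · simp [h0]
  by_cases h1 : n = 1
  · simp [h1, szM_one, lsM_one, lvM_one]; ring
  · have := szM_pos n
    obtain ⟨k, hk⟩ : ∃ k, szM n = k + 1 := ⟨szM n - 1, by omega⟩
    simp only [h0, h1, if_false, lvM_of_ne h1, hk, Nat.add_sub_cancel]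
    ring

theorem wt_pow {x z : ℝ} {j : ℕ} (hj : j ≠ 0) (m : ℕ) : wt (x ^ j) (z ^ j) m = wt x z m ^ j := by
  unfold wt
  split_ifs with h
  · simp [hj]
  · rw [mul_pow]; ring

theorem wt_nonneg {x z : ℝ} (hx : 0 < x) (hz : 0 < z) (m : ℕ) : 0 ≤ wt x z m := by
  unfold wt; split_ifs <;> positivity

theorem FM_nonneg {x z : ℝ} (hx : 0 < x) (hz : 0 < z) (m : ℕ) : 0 ≤ FM x z m := by
  rw [FM_apply]; split_ifs <;> positivity

theorem wt_le {x z : ℝ} (hx : 0 < x) (hx1 : x ≤ 1) (hz : 1 ≤ z) (hxz : x * z < 1) (m : ℕ) :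
    wt x z m ≤ x * z := by
  have hz0 : 0 < z := by linarith
  unfold wt
  split_ifs with h
  · positivity
  · obtain ⟨h1, h2, -⟩ := lvM_bounds m (Nat.pos_of_ne_zero h)
    obtain ⟨a, ha⟩ : ∃ a, lvM m = a + 1 := ⟨lvM m - 1, by omega⟩
    obtain ⟨b, hb⟩ : ∃ b, szM m = lvM m + b := ⟨szM m - lvM m, by omega⟩
    calc x ^ szM m * z ^ lvM m = x ^ b * ((x * z) ^ a * (x * z)) := by
          rw [hb, ha, mul_pow]; ring
      _ ≤ 1 * (1 * (x * z)) := by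
          gcongr
          · exact pow_le_one₀ hx.le hx1
          · exact pow_le_one₀ (by positivity) hxz.le
      _ = x * z := by ring

theorem FM_prime_lt {x z : ℝ} (hx : 0 < x) (hx1 : x ≤ 1) (hz : 1 ≤ z) (hxz : x * z < 1)
    {p : ℕ} (hp : p.Prime) : ‖FM x z p‖ < 1 := by
  rw [Real.norm_of_nonneg (FM_nonneg hx (by linarith) p), FM_prime hp]
  exact (wt_le hx hx1 hz hxz _).trans_lt hxz

theorem FM_sum_le {x z : ℝ} (hx : 0 < x) (hx1 : x ≤ 1) (hz : 1 ≤ z) (hxz : x * z < 1) (N : ℕ) :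
    ∑ n ∈ Finset.range N, FM x z n ≤ ∏ m ∈ (Nat.primesBelow N).image ixP, (1 - wt x z m)⁻¹ := by
  have hz0 : 0 < z := by linarith
  rw [Finset.prod_image (fun p hp q hq h => ixP_inj (Nat.prime_of_mem_primesBelow hp)
    (Nat.prime_of_mem_primesBelow hq) h)]
  rw [Finset.prod_congr rfl (g := fun p => (1 - FM x z p)⁻¹)
    (fun p hp => by rw [FM_prime (Nat.prime_of_mem_primesBelow hp)])]
  obtain ⟨hs, hh⟩ := EulerProduct.summable_and_hasSum_smoothNumbers_prod_primesBelow_geometric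
    (f := FM x z) (fun {p} hp => FM_prime_lt hx hx1 hz hxz hp) N
  rw [← hh.tsum_eq, tsum_subtype (Nat.smoothNumbers N) (fun n => FM x z n)]
  have hs' : Summable (Set.indicator (Nat.smoothNumbers N) (fun n => FM x z n)) :=
    summable_subtype_iff_indicator.mp hh.summable
  refine le_trans (Finset.sum_le_sum (fun n hn => ?_)) (hs'.sum_le_tsum (Finset.range N) ?_)
  · by_cases h0 : n = 0
    · subst h0; simp [FM_apply, Set.indicator]
    · rw [Set.indicator_of_mem]
      rw [Nat.mem_smoothNumbers]
      refine ⟨h0, fun p hp => ?_⟩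
      exact (Nat.le_of_mem_primeFactorsList hp).trans_lt (Finset.mem_range.mp hn)
  · intro n _
    exact Set.indicator_nonneg (fun n _ => FM_nonneg hx hz0 n) n

theorem sum_wt_eq (x z : ℝ) (N : ℕ) : ∑ n ∈ Finset.range N, wt x z n =
    x * ∑ n ∈ Finset.range N, FM x z n + if 1 < N then x * (z - 1) else 0 := by
  simp_rw [wt_eq_FM]
  rw [Finset.sum_add_distrib, Finset.mul_sum, Finset.sum_ite_eq']
  simp

theorem upper_core {x z y E : ℝ} (hx : 0 < x) (hx1 : x ≤ 1) (hz : 1 ≤ z) (hxz : x * z < 1)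
    (hy : 0 ≤ y)
    (hE : ∀ A : Finset ℕ, ∑ m ∈ A, wt x z m ≤ y → ∏ m ∈ A, (1 - wt x z m)⁻¹ ≤ E)
    (h : x * (z - 1) + x * E ≤ y) (A : Finset ℕ) : ∑ m ∈ A, wt x z m ≤ y := by
  have hz0 : 0 < z := by linarith
  have key : ∀ N, ∑ m ∈ Finset.range N, wt x z m ≤ y := by
    intro N
    induction N with
    | zero => simpa using hy
    | succ N ih =>
      rw [sum_wt_eq]
      have h1 : ∑ m ∈ (Nat.primesBelow (N+1)).image ixP, wt x z m ≤ y := by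
        refine le_trans (Finset.sum_le_sum_of_subset_of_nonneg ?_ (fun _ _ _ => wt_nonneg hx hz0 _)) ih
        intro m hm
        obtain ⟨p, hp, rfl⟩ := Finset.mem_image.mp hm
        have := Nat.lt_of_mem_primesBelow hp
        have := ixP_lt (Nat.prime_of_mem_primesBelow hp)
        rw [Finset.mem_range]; omega
      have h2 := (FM_sum_le hx hx1 hz hxz (N+1)).trans (hE _ h1)
      have h3 : x * ∑ n ∈ Finset.range (N+1), FM x z n ≤ x * E := by gcongr
      have h4 : 0 ≤ x * (z - 1) := mul_nonneg hx.le (by linarith)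
      split_ifs <;> linarith
  obtain ⟨N, hN⟩ := A.exists_nat_subset_range
  exact (Finset.sum_le_sum_of_subset_of_nonneg hN (fun _ _ _ => wt_nonneg hx hz0 _)).trans (key N)

theorem sum_range_shift (t : ℝ) (I : ℕ) :
    ∑ i ∈ Finset.range I, t ^ (i+1) / ((i:ℝ) + 1) = ∑ i ∈ Finset.Icc 1 I, t ^ i / (i:ℝ) := by
  induction I with
  | zero => simp
  | succ I ih => rw [Finset.sum_range_succ, ih, Finset.sum_Icc_succ_top (by omega)]; push_cast; rfl

theorem neg_log_le {t : ℝ} (h0 : 0 ≤ t) (h1 : t < 1) (I : ℕ) :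
    -Real.log (1 - t) ≤ ∑ i ∈ Finset.Icc 1 I, t ^ i / (i:ℝ) + t ^ (I+1) / (1 - t) := by
  have h := Real.abs_log_sub_add_sum_range_le (x := t) (by rwa [abs_of_nonneg h0]) I
  rw [abs_of_nonneg h0, sum_range_shift] at h
  have := (abs_le.mp h).1
  linarith

theorem le_neg_log {t : ℝ} (h0 : 0 ≤ t) (h1 : t < 1) (I : ℕ) :
    ∑ i ∈ Finset.Icc 1 I, t ^ i / (i:ℝ) ≤ -Real.log (1 - t) := by
  have h := Real.hasSum_pow_div_log_of_abs_lt_one (x := t) (by rwa [abs_of_nonneg h0])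
  rw [← sum_range_shift]
  exact sum_le_hasSum _ (fun i _ => by positivity) h

theorem prod_upper {t : ℕ → ℝ} {c Y : ℝ} (h0 : ∀ m, 0 ≤ t m) (hc : ∀ m, t m ≤ c) (hc1 : c < 1)
    {j I K : ℕ} (hj : 1 ≤ j) (hK : K ≤ (I + 1) * j) (A : Finset ℕ) (B : ℕ → ℝ)
    (hB : ∀ i ∈ Finset.Icc 1 I, ∑ m ∈ A, t m ^ (i * j) ≤ B i)
    (hY : ∑ m ∈ A, t m ^ K ≤ Y) :
    ∏ m ∈ A, (1 - t m ^ j)⁻¹ ≤ Real.exp (∑ i ∈ Finset.Icc 1 I, B i / i + Y / (1 - c)) := by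
  have htj : ∀ m, 0 ≤ t m ^ j ∧ t m ^ j ≤ c := fun m => ⟨pow_nonneg (h0 m) j, by
    calc t m ^ j ≤ t m ^ 1 := pow_le_pow_of_le_one (h0 m) ((hc m).trans hc1.le) hj
      _ ≤ c := by simpa using hc m⟩
  have e : ∏ m ∈ A, (1 - t m ^ j)⁻¹ = Real.exp (∑ m ∈ A, -Real.log (1 - t m ^ j)) := by
    rw [Real.exp_sum]
    refine Finset.prod_congr rfl (fun m _ => ?_)
    rw [Real.exp_neg, Real.exp_log]
    linarith [(htj m).2]
  rw [e, Real.exp_le_exp]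
  have hb : ∀ m, -Real.log (1 - t m ^ j) ≤
      ∑ i ∈ Finset.Icc 1 I, t m ^ (i * j) / (i:ℝ) + t m ^ K / (1 - c) := by
    intro m
    refine (neg_log_le (htj m).1 ((htj m).2.trans_lt hc1) I).trans ?_
    have e1 : ∀ i, (t m ^ j) ^ i = t m ^ (i * j) := fun i => by rw [← pow_mul, mul_comm]
    simp_rw [e1]
    refine add_le_add le_rfl ?_
    have : t m ^ ((I+1) * j) ≤ t m ^ K := pow_le_pow_of_le_one (h0 m) ((hc m).trans hc1.le) hK
    have h3 : 0 < 1 - c := by linarith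
    have h4 : 1 - c ≤ 1 - t m ^ j := by linarith [(htj m).2]
    exact div_le_div₀ (pow_nonneg (h0 m) _) this h3 h4
  refine (Finset.sum_le_sum (fun m _ => hb m)).trans ?_
  rw [Finset.sum_add_distrib, Finset.sum_comm, ← Finset.sum_div]
  have h3 : 0 < 1 - c := by linarith
  gcongr with i hi
  rw [← Finset.sum_div]
  gcongr
  exact hB i hi


theorem upper_cert {x z Y τ : ℝ} {J : ℕ} (U : ℕ → ℝ) (hx : 0 < x) (hx1 : x ≤ 1) (hz : 1 ≤ z)
    (hxz : x * z < 1) (hY0 : 0 ≤ Y) (hτ : Y / (1 - x * z) ≤ τ)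
    (hY : x ^ (J+1) * (z ^ (J+1) - 1) + x ^ (J+1) * Real.exp τ ≤ Y)
    (hU0 : ∀ j ∈ Finset.Icc 1 J, 0 ≤ U j)
    (hU : ∀ j ∈ Finset.Icc 1 J, x ^ j * (z ^ j - 1) + x ^ j *
      Real.exp (U j + ∑ i ∈ Finset.Icc 2 (J / j), U (i * j) / i + τ) ≤ U j)
    (hJ : 1 ≤ J) : Summable (wt x z) := by
  have hz0 : 0 < z := by linarith
  have h0 := wt_nonneg hx hz0
  have hc := wt_le hx hx1 hz hxz
  have hpow : ∀ j, 1 ≤ j → 0 < x ^ j ∧ x ^ j ≤ 1 ∧ 1 ≤ z ^ j ∧ x ^ j * z ^ j < 1 := fun j hj =>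
    ⟨by positivity, pow_le_one₀ hx.le hx1, one_le_pow₀ hz, by
      rw [← mul_pow]; exact pow_lt_one₀ (by positivity) hxz (by omega)⟩
  have hYb : ∀ A : Finset ℕ, ∑ m ∈ A, wt x z m ^ (J+1) ≤ Y := by
    obtain ⟨p1, p2, p3, p4⟩ := hpow (J+1) (by omega)
    have := upper_core (y := Y) (E := Real.exp τ) p1 p2 p3 p4 hY0 (fun A hA => ?_) hY
    · simpa only [wt_pow (Nat.succ_ne_zero J)] using this
    · simp only [wt_pow (Nat.succ_ne_zero J)] at hA ⊢
      refine (prod_upper (Y := Y) (I := 0) (K := J+1) h0 hc hxz (j := J+1) (by omega) (by omega) A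
        (fun _ => 0) (by simp) hA).trans ?_
      simpa using hτ
  have hb : ∀ d j, J - j = d → j ∈ Finset.Icc 1 J → ∀ A : Finset ℕ, ∑ m ∈ A, wt x z m ^ j ≤ U j := by
    intro d
    induction d using Nat.strong_induction_on with
    | _ d ih =>
      intro j hd hj
      obtain ⟨hj1, hj2⟩ := Finset.mem_Icc.mp hj
      obtain ⟨p1, p2, p3, p4⟩ := hpow j hj1
      have hne : j ≠ 0 := by omega
      have := upper_core (y := U j) p1 p2 p3 p4 (hU0 j hj) (fun A hA => ?_) (hU j hj)
      · simpa only [wt_pow hne] using this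
      · simp only [wt_pow hne] at hA ⊢
        refine (prod_upper (Y := Y) (I := J / j) (K := J+1) h0 hc hxz (j := j) hj1 ?_ A
          (fun i => U (i * j)) ?_ (hYb A)).trans ?_
        · have := Nat.lt_div_mul_add (a := J) (b := j) (by omega)
          rw [add_mul]; omega
        · intro i hi
          obtain ⟨hi1, hi2⟩ := Finset.mem_Icc.mp hi
          rcases Nat.eq_or_lt_of_le hi1 with h | h
          · subst h; simpa using hA
          · have h5 : i * j ≤ J := (Nat.mul_le_mul_right j hi2).trans (Nat.div_mul_le_self J j)
            have h6 : j < i * j := by nlinarith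
            exact ih (J - i * j) (by omega) (i * j) rfl (Finset.mem_Icc.mpr ⟨by omega, h5⟩) A
        · rw [Real.exp_le_exp]
          have h7 : 1 ≤ J / j := (Nat.one_le_div_iff (by omega)).mpr hj2
          rw [← Finset.add_sum_Ioc_eq_sum_Icc h7]
          have : Finset.Ioc 1 (J / j) = Finset.Icc 2 (J / j) := by
            ext i; simp [Finset.mem_Icc, Finset.mem_Ioc, Nat.succ_le_iff]
          rw [this]
          simp only [one_mul, Nat.cast_one, div_one]
          linarith
  refine summable_of_sum_le h0 (c := U 1) (fun A => ?_)
  have := hb _ 1 rfl (Finset.mem_Icc.mpr ⟨le_refl _, hJ⟩) A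
  simpa using this

theorem lower_core {x z : ℝ} (hx : 0 < x) (hx1 : x ≤ 1) (hz : 1 ≤ z)
    (hxz : x * z < 1) (hs : Summable (wt x z)) {j I : ℕ} (hj : 1 ≤ j) :
    x ^ j * (z ^ j - 1) + x ^ j * Real.exp (∑ i ∈ Finset.Icc 1 I, (∑' m, wt x z m ^ (i * j)) / i)
      ≤ ∑' m, wt x z m ^ j := by
  have hz0 : 0 < z := by linarith
  have h0 := wt_nonneg hx hz0
  have hc := wt_le hx hx1 hz hxz
  have hne : j ≠ 0 := by omega
  obtain ⟨p1, p2, p3, p4⟩ : 0 < x ^ j ∧ x ^ j ≤ 1 ∧ 1 ≤ z ^ j ∧ x ^ j * z ^ j < 1 := 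
    ⟨by positivity, pow_le_one₀ hx.le hx1, one_le_pow₀ hz, by
      rw [← mul_pow]; exact pow_lt_one₀ (by positivity) hxz (by omega)⟩
  have hsk : ∀ k, 1 ≤ k → Summable (fun m => wt x z m ^ k) := fun k hk =>
    Summable.of_nonneg_of_le (fun m => pow_nonneg (h0 m) k) (fun m => by
      calc wt x z m ^ k ≤ wt x z m ^ 1 := pow_le_pow_of_le_one (h0 m) ((hc m).trans hxz.le) hk
        _ = wt x z m := pow_one _) hs
  have hF0 := FM_nonneg p1 (lt_of_lt_of_le one_pos p3)
  have hsF : Summable (fun n => FM (x^j) (z^j) n) := by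
    refine Summable.of_nonneg_of_le hF0 (fun n => ?_) ((hsk j hj).mul_left (x^j)⁻¹)
    rw [← wt_pow hne, wt_eq_FM]
    rw [mul_add, inv_mul_cancel_left₀ p1.ne']
    have : 0 ≤ (x ^ j)⁻¹ * (if n = 1 then x ^ j * (z ^ j - 1) else 0) := by
      split_ifs
      · have : 0 ≤ z ^ j - 1 := by linarith
        positivity
      · simp
    linarith
  set G := ∑' n, FM (x^j) (z^j) n with hG
  have hT : ∑' m, wt x z m ^ j = x ^ j * G + x ^ j * (z ^ j - 1) := by
    have e : (fun m => wt x z m ^ j) = fun m => x ^ j * FM (x^j) (z^j) m +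
        (if m = 1 then x ^ j * (z ^ j - 1) else 0) := by
      funext m; rw [← wt_pow hne, wt_eq_FM]
    rw [e]
    have h1 := hsF.hasSum.mul_left (x^j)
    have h2 := hasSum_ite_eq 1 (x ^ j * (z ^ j - 1))
    exact (h1.add h2).tsum_eq
  have hfin : ∀ A : Finset ℕ, ∏ m ∈ A, (1 - wt (x^j) (z^j) m)⁻¹ ≤ G := by
    intro A
    have hf1 : ∀ m, 1 ≤ (1 - wt (x^j) (z^j) m)⁻¹ := fun m => by
      have := wt_le p1 p2 p3 p4 m
      have := wt_nonneg p1 (lt_of_lt_of_le one_pos p3) m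
      exact (one_le_inv₀ (by linarith)).mpr (by linarith)
    obtain ⟨N, hN⟩ := (A.image prP).exists_nat_subset_range
    obtain ⟨hs', hh⟩ := EulerProduct.summable_and_hasSum_smoothNumbers_prod_primesBelow_geometric
      (f := FM (x^j) (z^j)) (fun {p} hp => FM_prime_lt p1 p2 p3 p4 hp) N
    have h3 : ∏ p ∈ Nat.primesBelow N, (1 - FM (x^j) (z^j) p)⁻¹ ≤ G := by
      rw [← hh.tsum_eq]
      exact Summable.tsum_subtype_le (fun n => FM (x^j) (z^j) n) _ hF0 hsF
    refine le_trans ?_ h3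
    rw [Finset.prod_congr (s₁ := Nat.primesBelow N) rfl (g := fun p => (1 - wt (x^j) (z^j) (ixP p))⁻¹)
      (fun p hp => by rw [FM_prime (Nat.prime_of_mem_primesBelow hp)])]
    rw [← Finset.prod_image (s := Nat.primesBelow N) (g := ixP)
      (f := fun m => (1 - wt (x^j) (z^j) m)⁻¹) (fun p hp q hq h =>
      ixP_inj (Nat.prime_of_mem_primesBelow hp) (Nat.prime_of_mem_primesBelow hq) h)]
    have h4 : A.erase 0 ⊆ (Nat.primesBelow N).image ixP := by
      intro m hm
      obtain ⟨hm0, hmA⟩ := Finset.mem_erase.mp hm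
      refine Finset.mem_image.mpr ⟨prP m, ?_, ixP_prP (Nat.pos_of_ne_zero hm0)⟩
      rw [Nat.mem_primesBelow]
      exact ⟨Finset.mem_range.mp (hN (Finset.mem_image_of_mem _ hmA)), prP_prime m⟩
    have h5 : ∏ m ∈ A, (1 - wt (x^j) (z^j) m)⁻¹ = ∏ m ∈ A.erase 0, (1 - wt (x^j) (z^j) m)⁻¹ := by
      by_cases hA : 0 ∈ A
      · rw [← Finset.mul_prod_erase A _ hA]; simp [wt]
      · rw [Finset.erase_eq_of_notMem hA]
    rw [h5]
    rw [← Finset.prod_sdiff h4]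
    refine le_mul_of_one_le_left (Finset.prod_nonneg (fun m _ => by linarith [hf1 m])) ?_
    have := Finset.prod_le_prod (s := (Nat.primesBelow N).image ixP \ A.erase 0)
      (f := fun _ => (1:ℝ)) (fun _ _ => zero_le_one) (fun m _ => hf1 m)
    simpa using this
  have hGpos : 0 < G := lt_of_lt_of_le (by simp) (hfin ∅)
  have hlog : ∑ i ∈ Finset.Icc 1 I, (∑' m, wt x z m ^ (i * j)) / i ≤ Real.log G := by
    have hsum : HasSum (fun m => ∑ i ∈ Finset.Icc 1 I, wt x z m ^ (i * j) / i)
        (∑ i ∈ Finset.Icc 1 I, (∑' m, wt x z m ^ (i * j)) / i) := by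
      refine hasSum_sum (fun i hi => ?_)
      have := (Finset.mem_Icc.mp hi).1
      exact (hsk (i * j) (by nlinarith)).hasSum.div_const _
    refine le_of_tendsto hsum (Filter.Eventually.of_forall (fun A => ?_))
    have h1 : ∏ m ∈ A, (1 - wt (x^j) (z^j) m)⁻¹ = Real.exp (∑ m ∈ A, -Real.log (1 - wt (x^j) (z^j) m)) := by
      rw [Real.exp_sum]
      refine Finset.prod_congr rfl (fun m _ => ?_)
      rw [Real.exp_neg, Real.exp_log]
      linarith [wt_le p1 p2 p3 p4 m]
    have h2 := hfin A
    rw [h1, ← Real.le_log_iff_exp_le hGpos] at h2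
    refine le_trans (Finset.sum_le_sum (fun m _ => ?_)) h2
    have := le_neg_log (wt_nonneg p1 (lt_of_lt_of_le one_pos p3) m) ((wt_le p1 p2 p3 p4 m).trans_lt p4) I
    simpa only [wt_pow hne, ← pow_mul, mul_comm j] using this
  rw [hT, add_comm]
  gcongr
  rwa [← Real.le_log_iff_exp_le hGpos]

theorem lower_cert {x z : ℝ} {J : ℕ} (L : ℕ → ℝ) (hx : 0 < x) (hx1 : x ≤ 1) (hz : 1 ≤ z)
    (hxz : x * z < 1)
    (hL : ∀ j ∈ Finset.Icc 2 J, L j ≤ x ^ j * (z ^ j - 1) + x ^ j *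
      Real.exp (L j + ∑ i ∈ Finset.Icc 2 (J / j), L (i * j) / i) ∧ 
      x ^ j * Real.exp (L j + ∑ i ∈ Finset.Icc 2 (J / j), L (i * j) / i) ≤ 1)
    (hJ : 1 ≤ J)
    (h1 : 1 < x * Real.exp (1 + x * (z - 1) + ∑ i ∈ Finset.Icc 2 J, L i / i)) :
    ¬ Summable (wt x z) := by
  intro hs
  have hcore : ∀ j, 1 ≤ j → j ≤ J → x ^ j * (z ^ j - 1) + x ^ j *
      Real.exp (∑' m, wt x z m ^ j + ∑ i ∈ Finset.Icc 2 (J / j), (∑' m, wt x z m ^ (i * j)) / i)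
      ≤ ∑' m, wt x z m ^ j := by
    intro j hj hj2
    have := lower_core hx hx1 hz hxz hs (I := J / j) hj
    have h7 : 1 ≤ J / j := (Nat.one_le_div_iff (by omega)).mpr hj2
    rw [← Finset.add_sum_Ioc_eq_sum_Icc h7] at this
    have h8 : Finset.Ioc 1 (J / j) = Finset.Icc 2 (J / j) := by
      ext i; simp [Finset.mem_Icc, Finset.mem_Ioc, Nat.succ_le_iff]
    rw [h8] at this
    simpa only [one_mul, Nat.cast_one, div_one] using this
  have hb : ∀ d j, J - j = d → j ∈ Finset.Icc 2 J → L j ≤ ∑' m, wt x z m ^ j := by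
    intro d
    induction d using Nat.strong_induction_on with
    | _ d ih =>
      intro j hd hj
      obtain ⟨hj1, hj2⟩ := Finset.mem_Icc.mp hj
      have hc := hcore j (by omega) hj2
      set S := ∑ i ∈ Finset.Icc 2 (J / j), L (i * j) / i
      set T := ∑' m, wt x z m ^ j
      have hS : S ≤ ∑ i ∈ Finset.Icc 2 (J / j), (∑' m, wt x z m ^ (i * j)) / i := by
        refine Finset.sum_le_sum (fun i hi => ?_)
        obtain ⟨hi1, hi2⟩ := Finset.mem_Icc.mp hi
        have h5 : i * j ≤ J := (Nat.mul_le_mul_right j hi2).trans (Nat.div_mul_le_self J j)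
        have h6 : j < i * j := by nlinarith
        gcongr
        exact ih (J - i * j) (by omega) (i * j) rfl (Finset.mem_Icc.mpr ⟨by omega, h5⟩)
      obtain ⟨hL1, hL2⟩ := hL j hj
      by_contra hlt
      push Not at hlt
      -- L ≤ a + b e^L, T ≥ a + b e^T, T < L, b e^L ≤ 1
      have hpos : 0 < x ^ j := by positivity
      have h9 : x ^ j * Real.exp (T + S) ≤ x ^ j * 
          Real.exp (T + ∑ i ∈ Finset.Icc 2 (J / j), (∑' m, wt x z m ^ (i * j)) / i) := by
        gcongr
      have h10 : T - L j + 1 < Real.exp (T - L j) := Real.add_one_lt_exp (by linarith)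
      have h11 : Real.exp (T + S) = Real.exp (L j + S) * Real.exp (T - L j) := by
        rw [← Real.exp_add]; congr 1; ring
      have h12 : 0 < x ^ j * Real.exp (L j + S) := by positivity
      rw [h11] at h9
      nlinarith
  have hc := hcore 1 le_rfl hJ
  simp only [pow_one, Nat.div_one, mul_one] at hc
  set T := ∑' m, wt x z m
  have hS : ∑ i ∈ Finset.Icc 2 J, L i / i ≤ ∑ i ∈ Finset.Icc 2 J, (∑' m, wt x z m ^ i) / i := by
    refine Finset.sum_le_sum (fun i hi => ?_)
    gcongr
    exact hb _ i rfl hi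
  set S := ∑ i ∈ Finset.Icc 2 J, L i / i
  set S' := ∑ i ∈ Finset.Icc 2 J, (∑' m, wt x z m ^ i) / i
  have h2 : x * Real.exp (T + S) ≤ x * Real.exp (T + S') := by gcongr
  have h3 : Real.exp (T + S) = Real.exp (1 + x * (z - 1) + S) * Real.exp (T - x * (z - 1) - 1) := by
    rw [← Real.exp_add]; congr 1; ring
  have h4 := Real.add_one_le_exp (T - x * (z - 1) - 1)
  have h5 : 0 < Real.exp (T - x * (z - 1) - 1) := Real.exp_pos _
  rw [h3] at h2
  nlinarith


/-- lower rational approximation of the exponential -/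
def eLo (q : ℚ) : ℚ := ∑ k ∈ Finset.range 22, q ^ k / (k.factorial : ℚ)

/-- upper rational approximation of the exponential -/
def eHi (q : ℚ) : ℚ := (∑ k ∈ Finset.range 16, (q / 2) ^ k / (k.factorial : ℚ) +
  (q / 2) ^ 16 * (16 + 1) / ((16 : ℕ).factorial * 16)) ^ 2

theorem eLo_le {q : ℚ} (h : 0 ≤ q) : ((eLo q : ℚ) : ℝ) ≤ Real.exp q := by
  have := Real.sum_le_exp_of_nonneg (x := (q : ℝ)) (by exact_mod_cast h) 22
  rw [eLo]; push_cast; exact this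

theorem le_eHi {q : ℚ} (h : 0 ≤ q) (h2 : q ≤ 2) : Real.exp q ≤ ((eHi q : ℚ) : ℝ) := by
  have h3 : (0:ℝ) ≤ q := by exact_mod_cast h
  have h4 : (q:ℝ) ≤ 2 := by exact_mod_cast h2
  have := Real.exp_bound' (x := (q : ℝ) / 2) (by linarith) (by linarith) (n := 16) (by norm_num)
  have e : Real.exp q = Real.exp ((q:ℝ) / 2) ^ 2 := by
    rw [← Real.exp_nat_mul]; congr 1; push_cast; ring
  rw [e, eHi, Rat.cast_pow]
  gcongr
  push_cast
  push_cast at this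
  exact this

/-- decimal table -/
def tab (l : List ℕ) (j : ℕ) : ℚ := ((l.getD j 0 : ℕ) : ℚ) / 100000000000000

/-- the exponent in the functional equation -/
def exq (L : ℕ → ℚ) (J j : ℕ) : ℚ := L j + ∑ i ∈ Finset.Icc 2 (J / j), L (i * j) / i

theorem lower_rat (x z : ℚ) (J : ℕ) (L : ℕ → ℚ)
    (h : 0 < x ∧ x ≤ 1 ∧ 1 ≤ z ∧ x * z < 1 ∧ 1 ≤ J ∧
      (∀ j ∈ Finset.Icc 2 J, 0 ≤ exq L J j ∧ exq L J j ≤ 2 ∧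
        L j ≤ x ^ j * (z ^ j - 1) + x ^ j * eLo (exq L J j) ∧ x ^ j * eHi (exq L J j) ≤ 1) ∧
      0 ≤ 1 + x * (z - 1) + ∑ i ∈ Finset.Icc 2 J, L i / i ∧
      1 < x * eLo (1 + x * (z - 1) + ∑ i ∈ Finset.Icc 2 J, L i / i)) :
    ¬ Summable (wt (x : ℝ) (z : ℝ)) := by
  obtain ⟨h1, h2, h3, h4, h5, h6, h7, h8⟩ := h
  have hx : (0:ℝ) < x := by exact_mod_cast h1
  refine lower_cert (J := J) (fun j => (L j : ℝ)) hx (by exact_mod_cast h2)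
    (by exact_mod_cast h3) (by exact_mod_cast h4) (fun j hj => ?_) h5 ?_
  · obtain ⟨a1, a2, a3, a4⟩ := h6 j hj
    have e : (L j : ℝ) + ∑ i ∈ Finset.Icc 2 (J / j), (L (i * j) : ℝ) / i = ((exq L J j : ℚ) : ℝ) := by
      rw [exq]; push_cast; rfl
    rw [e]
    have b1 := eLo_le a1
    have b2 := le_eHi a1 a2
    have a3' : (L j : ℝ) ≤ x ^ j * (z ^ j - 1) + x ^ j * (eLo (exq L J j) : ℚ) := by exact_mod_cast a3
    have a4' : (x : ℝ) ^ j * (eHi (exq L J j) : ℚ) ≤ 1 := by exact_mod_cast a4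
    constructor
    · exact a3'.trans (by gcongr)
    · refine le_trans ?_ a4'
      gcongr
  · have b1 := eLo_le h7
    have h8' : (1:ℝ) < x * (eLo (1 + x * (z - 1) + ∑ i ∈ Finset.Icc 2 J, L i / i) : ℚ) := by
      exact_mod_cast h8
    push_cast at b1
    exact h8'.trans_le (by gcongr)

theorem upper_rat (x z Y τ : ℚ) (J : ℕ) (U : ℕ → ℚ)
    (h : 0 < x ∧ x ≤ 1 ∧ 1 ≤ z ∧ x * z < 1 ∧ 1 ≤ J ∧ 0 ≤ Y ∧ Y / (1 - x * z) ≤ τ ∧ 0 ≤ τ ∧ τ ≤ 2 ∧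
      x ^ (J+1) * (z ^ (J+1) - 1) + x ^ (J+1) * eHi τ ≤ Y ∧
      (∀ j ∈ Finset.Icc 1 J, 0 ≤ U j ∧ 0 ≤ exq U J j + τ ∧ exq U J j + τ ≤ 2 ∧
        x ^ j * (z ^ j - 1) + x ^ j * eHi (exq U J j + τ) ≤ U j)) :
    Summable (wt (x : ℝ) (z : ℝ)) := by
  obtain ⟨h1, h2, h3, h4, h5, h6, h7, h8, h9, h10, h11⟩ := h
  have hx : (0:ℝ) < x := by exact_mod_cast h1
  refine upper_cert (J := J) (Y := Y) (τ := τ) (fun j => (U j : ℝ)) hx (by exact_mod_cast h2)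
    (by exact_mod_cast h3) (by exact_mod_cast h4) (by exact_mod_cast h6) (by exact_mod_cast h7)
    ?_ (fun j hj => by exact_mod_cast (h11 j hj).1) (fun j hj => ?_) h5
  · have b := le_eHi h8 h9
    have h10' : (x:ℝ) ^ (J+1) * (z ^ (J+1) - 1) + x ^ (J+1) * (eHi τ : ℚ) ≤ Y := by exact_mod_cast h10
    exact le_trans (by gcongr) h10'
  · obtain ⟨a0, a1, a2, a3⟩ := h11 j hj
    have e : (U j : ℝ) + ∑ i ∈ Finset.Icc 2 (J / j), (U (i * j) : ℝ) / i + (τ:ℝ)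
        = ((exq U J j + τ : ℚ) : ℝ) := by
      rw [exq]; push_cast; rfl
    rw [e]
    have b2 := le_eHi a1 a2
    have a3' : (x:ℝ) ^ j * (z ^ j - 1) + x ^ j * (eHi (exq U J j + τ) : ℚ) ≤ (U j : ℝ) := by
      exact_mod_cast a3
    exact le_trans (by gcongr) a3'


theorem cert_upM : Summable (wt ((((342538480817 / 1000000000000 : ℚ) / (1218572/1000000*10000/10001) : ℚ) : ℝ)) (((1218572/1000000*10000/10001 : ℚ) ^ 2 : ℚ) : ℝ)) := by
  refine upper_rat _ _ (9887438 / 1000000000000000000) (17138229 / 1000000000000000000) 28 (tab [0, 113623968542063, 19265851348295, 7448763430066, 3054042733777, 1268699402831,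
    528832803072, 220638019373, 92077609908, 38428990702, 16038830119, 6694048578,
    2793866977, 1166065066, 486675968, 203122035, 84776248, 35382733,
    14767556, 6163480, 2572431, 1073649, 448109, 187029,
    78063, 32585, 13604, 5681, 2375]) ?_
  decide +kernel

theorem cert_loM : ¬ Summable (wt ((((342538481262 / 1000000000000 : ℚ) / (1218572/1000000*10000/10001) : ℚ) : ℝ)) (((1218572/1000000*10000/10001 : ℚ) ^ 2 : ℚ) : ℝ)) := by
  refine lower_rat _ _ 28 (tab [0, 0, 19265851404601, 7448763459810, 3054042749729, 1268699411071,
    528832807182, 220638021367, 92077610852, 38428991138, 16038830315, 6694048661,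
    2793867008, 1166065073, 486675964, 203122026, 84776237, 35382720,
    14767543, 6163468, 2572418, 1073636, 448096, 187016,
    78050, 32572, 13591, 5668, 2362]) ?_
  decide +kernel

theorem cert_upZ : Summable (wt ((((342538481927 / 1000000000000 : ℚ) / (1218572/1000000) : ℚ) : ℝ)) (((1218572/1000000 : ℚ) ^ 2 : ℚ) : ℝ)) := by
  refine upper_rat _ _ (9916153 / 1000000000000000000) (17189233 / 1000000000000000000) 28 (tab [0, 113630953229583, 19269382147613, 7450947793257, 3055256900598, 1269332784120,
    529150035639, 220792495895, 92151297297, 38463591374, 16054876640, 6701415947,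
    2797221570, 1167581909, 487357779, 203426941, 84911996, 35442933,
    14794161, 6175202, 2577581, 1075906, 449095, 187460,
    78251, 32666, 13639, 5697, 2382]) ?_
  decide +kernel

theorem cert_loZ : ¬ Summable (wt ((((342538482372 / 1000000000000 : ℚ) / (1218572/1000000) : ℚ) : ℝ)) (((1218572/1000000 : ℚ) ^ 2 : ℚ) : ℝ)) := by
  refine lower_rat _ _ 28 (tab [0, 0, 19269382203928, 7450947823009, 3055256916556, 1269332792364,
    529150039751, 220792497890, 92151298242, 38463591810, 16054876835, 6701416030,
    2797221601, 1167581916, 487357775, 203426932, 84911985, 35442921,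
    14794148, 6175189, 2577568, 1075893, 449082, 187447,
    78238, 32653, 13626, 5684, 2369]) ?_
  decide +kernel

theorem cert_upP : Summable (wt ((((342538480813 / 1000000000000 : ℚ) / (1218572/1000000*10001/10000) : ℚ) : ℝ)) (((1218572/1000000*10001/10000 : ℚ) ^ 2 : ℚ) : ℝ)) := by
  refine upper_rat _ _ (9944949 / 1000000000000000000) (17240385 / 1000000000000000000) 28 (tab [0, 113637937964896, 19272913388879, 7453132663717, 3056471473309, 1269966440873,
    529467437962, 220947070543, 92225038868, 38498220950, 16070938171, 6708790945,
    2800579972, 1169100627, 488040502, 203732285, 85047953, 35503233,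
    14820812, 6186945, 2582741, 1078168, 450084, 187891,
    78439, 32748, 13674, 5712, 2388]) ?_
  decide +kernel

theorem cert_loP : ¬ Summable (wt ((((342538481257 / 1000000000000 : ℚ) / (1218572/1000000*10001/10000) : ℚ) : ℝ)) (((1218572/1000000*10001/10000 : ℚ) ^ 2 : ℚ) : ℝ)) := by
  refine lower_rat _ _ 28 (tab [0, 0, 19272913445076, 7453132693410, 3056471489238, 1269966449103,
    529467442068, 220947072535, 92225039812, 38498221386, 16070938366, 6708791028,
    2800580003, 1169100634, 488040498, 203732276, 85047941, 35503220,
    14820799, 6186932, 2582728, 1078155, 450071, 187878,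
    78426, 32735, 13661, 5699, 2375]) ?_
  decide +kernel



/-- Matula numbers of trees with `n - 1` vertices and excess `d`. -/
noncomputable def SS (n : ℕ) (d : ℤ) : Finset ℕ :=
  (finite_szM (n - 1)).toFinset.filter (fun m => szM m + 1 = n ∧ 2 * (lvM m : ℤ) - szM m - 1 = d)

theorem mem_SS {n : ℕ} {d : ℤ} {m : ℕ} :
    m ∈ SS n d ↔ 0 < m ∧ szM m + 1 = n ∧ 2 * (lvM m : ℤ) - szM m - 1 = d := by
  simp only [SS, Finset.mem_filter, Set.Finite.mem_toFinset, Set.mem_ofPred_eq]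
  constructor
  · rintro ⟨⟨h1, h2⟩, h3, h4⟩; exact ⟨h1, h3, h4⟩
  · rintro ⟨h1, h3, h4⟩; exact ⟨⟨h1, by omega⟩, h3, h4⟩

/-- log of half of the count -/
noncomputable def gg (n : ℕ) (d : ℤ) : ℝ := Real.log ((SS n d).card / 2)

theorem card_eq_exp {n : ℕ} {d : ℤ} (h : (SS n d).Nonempty) :
    ((SS n d).card : ℝ) = 2 * Real.exp (gg n d) := by
  have : 0 < ((SS n d).card : ℝ) := by exact_mod_cast h.card_pos
  rw [gg, Real.exp_log (by positivity)]; ring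

theorem aCount_card (n k : ℕ) : aCount n k = (SS (n + 1) (2 * (k:ℤ) - n - 1)).card := by
  rw [aCount_eq, ← Nat.card_eq_finsetCard]
  refine Nat.card_congr (Equiv.subtypeEquivRight (fun m => ?_))
  rw [mem_SS]
  omega

theorem SS_mul {n n' : ℕ} {d d' : ℤ} :
    (SS n d).card * (SS n' d').card ≤ 2 * (SS (n + n') (d + d')).card := by
  rw [← Finset.card_product]
  have h1 : ((SS n d ×ˢ SS n' d').image (fun p : ℕ × ℕ => prP p.1 * prP p.2)) ⊆ SS (n + n') (d + d') := by
    intro a ha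
    obtain ⟨⟨p, q⟩, hpq, rfl⟩ := Finset.mem_image.mp ha
    obtain ⟨hp, hq⟩ := Finset.mem_product.mp hpq
    obtain ⟨p1, p2, p3⟩ := mem_SS.mp hp
    obtain ⟨q1, q2, q3⟩ := mem_SS.mp hq
    simp only at p1 p2 p3 q1 q2 q3 ⊢
    have e1 := szM_mul (prP_prime p).ne_zero (prP_prime q).ne_zero
    have e2 := lsM_mul (prP_prime p).ne_zero (prP_prime q).ne_zero
    rw [szM_prime (prP_prime p), szM_prime (prP_prime q), ixP_prP p1, ixP_prP q1] at e1
    rw [lsM_prime (prP_prime p), lsM_prime (prP_prime q), ixP_prP p1, ixP_prP q1] at e2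
    have hne : prP p * prP q ≠ 1 := by
      have := (prP_prime p).one_lt
      have := (prP_prime q).one_lt
      nlinarith
    rw [← lvM_of_ne hne] at e2
    have : 0 < prP p * prP q := Nat.mul_pos (prP_prime p).pos (prP_prime q).pos
    rw [mem_SS]
    refine ⟨this, by omega, by omega⟩
  refine (Finset.card_le_mul_card_image (f := fun p : ℕ × ℕ => prP p.1 * prP p.2) _ 2 ?_).trans
    (Nat.mul_le_mul_left 2 (Finset.card_le_card h1))
  intro a ha
  obtain ⟨⟨p, q⟩, hpq, rfl⟩ := Finset.mem_image.mp ha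
  have inj : ∀ {x y : ℕ}, 0 < x → 0 < y → prP x = prP y → x = y := fun hx hy h => by
    rw [← ixP_prP hx, ← ixP_prP hy, h]
  obtain ⟨hp, hq⟩ := Finset.mem_product.mp hpq
  have hp1 := (mem_SS.mp hp).1
  have hq1 := (mem_SS.mp hq).1
  refine le_trans (Finset.card_le_card (t := {(p, q), (q, p)}) ?_) Finset.card_le_two
  rintro ⟨r, s⟩ hrs
  obtain ⟨h2, h3⟩ := Finset.mem_filter.mp hrs
  obtain ⟨hr, hs⟩ := Finset.mem_product.mp h2
  have hr1 := (mem_SS.mp hr).1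
  have hs1 := (mem_SS.mp hs).1
  simp only at h3 hp1 hq1 hr1 hs1
  have h4 : prP r ∣ prP p * prP q := ⟨prP s, h3.symm⟩
  simp only [Finset.mem_insert, Finset.mem_singleton, Prod.mk.injEq]
  rcases (prP_prime r).dvd_mul.mp h4 with h | h
  · have e := (Nat.prime_dvd_prime_iff_eq (prP_prime r) (prP_prime p)).mp h
    rw [e] at h3
    exact Or.inl ⟨inj hr1 hp1 e, inj hs1 hq1 (Nat.eq_of_mul_eq_mul_left (prP_prime p).pos h3)⟩
  · have e := (Nat.prime_dvd_prime_iff_eq (prP_prime r) (prP_prime q)).mp h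
    rw [e, mul_comm (prP p)] at h3
    exact Or.inr ⟨inj hr1 hq1 e, inj hs1 hp1 (Nat.eq_of_mul_eq_mul_left (prP_prime q).pos h3)⟩

theorem gg_add {n n' : ℕ} {d d' : ℤ} (h : (SS n d).Nonempty) (h' : (SS n' d').Nonempty) :
    (SS (n + n') (d + d')).Nonempty ∧ gg n d + gg n' d' ≤ gg (n + n') (d + d') := by
  have h1 := SS_mul (n := n) (n' := n') (d := d) (d' := d')
  have a1 := h.card_pos
  have a2 := h'.card_pos
  have a3 : 0 < (SS (n + n') (d + d')).card := by
    have := Nat.mul_pos a1 a2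
    omega
  refine ⟨Finset.card_pos.mp a3, ?_⟩
  have b1 : (0:ℝ) < (SS n d).card := by exact_mod_cast a1
  have b2 : (0:ℝ) < (SS n' d').card := by exact_mod_cast a2
  have h1' : ((SS n d).card : ℝ) * (SS n' d').card ≤ 2 * (SS (n + n') (d + d')).card := by
    exact_mod_cast h1
  unfold gg
  rw [← Real.log_mul (by positivity) (by positivity)]
  apply Real.log_le_log (by positivity)
  linarith

theorem gg_pow {n : ℕ} {d : ℤ} (h : (SS n d).Nonempty) (k : ℕ) :
    (SS ((k + 1) * n) ((k + 1) * d)).Nonempty ∧ (k + 1) * gg n d ≤ gg ((k + 1) * n) ((k + 1) * d) := by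
  induction k with
  | zero => simpa using h
  | succ k ih =>
    obtain ⟨h1, h2⟩ := ih
    obtain ⟨h3, h4⟩ := gg_add h1 h
    have e1 : (k + 1) * n + n = (k + 1 + 1) * n := by ring
    have e2 : ((k:ℤ) + 1) * d + d = (((k + 1 : ℕ) : ℤ) + 1) * d := by push_cast; ring
    rw [e1, e2] at h3 h4
    refine ⟨h3, ?_⟩
    push_cast at h4 ⊢
    linarith

/-- domination, in logarithmic coordinates. -/
def DomL (a υ : ℝ) : Prop := ∀ (n : ℕ) (d : ℤ), (SS n d).Nonempty → gg n d ≤ n * a - d * υ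

theorem DomL.mono {a b υ : ℝ} (h : DomL a υ) (hab : a ≤ b) : DomL b υ := fun n d hn => by
  have := h n d hn
  have : (n:ℝ) * a ≤ n * b := by gcongr
  linarith

theorem DomL.interp {a b υ ν θ : ℝ} (h : DomL a υ) (h' : DomL b ν) (h0 : 0 ≤ θ) (h1 : θ ≤ 1) :
    DomL (θ * a + (1 - θ) * b) (θ * υ + (1 - θ) * ν) := fun n d hn => by
  have e1 := h n d hn
  have e2 := h' n d hn
  nlinarith

theorem ixP_two : ixP 2 = 1 := by
  have := ixP_lt Nat.prime_two
  have := ixP_pos 2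
  omega
theorem szM_two : szM 2 = 2 := by rw [szM_prime Nat.prime_two, ixP_two, szM_one]
theorem lsM_two : lsM 2 = 1 := by rw [lsM_prime Nat.prime_two, ixP_two, lvM_one]

theorem ne20 : (SS 2 0).Nonempty := ⟨1, mem_SS.mpr (by simp [szM_one, lvM_one])⟩
theorem ne3 : (SS 3 (-1)).Nonempty := ⟨2, mem_SS.mpr (by
  rw [szM_two, lvM_of_ne (by norm_num), lsM_two]; norm_num)⟩
theorem ne5 : (SS 5 1).Nonempty := ⟨2 * (2 * 2), mem_SS.mpr (by
  have h1 := szM_mul (a := 2) (b := 2) (by norm_num) (by norm_num)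
  have h2 := szM_mul (a := 2) (b := 2 * 2) (by norm_num) (by norm_num)
  have h3 := lsM_mul (a := 2) (b := 2) (by norm_num) (by norm_num)
  have h4 := lsM_mul (a := 2) (b := 2 * 2) (by norm_num) (by norm_num)
  rw [szM_two] at h1 h2
  rw [lsM_two] at h3 h4
  rw [lvM_of_ne (by norm_num)]
  refine ⟨by norm_num, by omega, by omega⟩)⟩

theorem minimax {a : ℝ} (h : ∀ n, (SS n 0).Nonempty → gg n 0 ≤ n * a) : ∃ υ, DomL a υ := by
  let Lo : Set ℝ := {t | ∃ (n e : ℕ), (SS n (-((e:ℤ) + 1))).Nonempty ∧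
    t = (gg n (-((e:ℤ) + 1)) - n * a) / (e + 1)}
  let Up : Set ℝ := {t | ∃ (n d : ℕ), (SS n ((d:ℤ) + 1)).Nonempty ∧
    t = (n * a - gg n ((d:ℤ) + 1)) / (d + 1)}
  have hlo : Lo.Nonempty := ⟨_, 3, 0, by simpa using ne3, rfl⟩
  have hup : Up.Nonempty := ⟨_, 5, 0, by simpa using ne5, rfl⟩
  obtain ⟨υ, h1, h2⟩ := exists_between_of_forall_le hlo hup (by
    rintro s ⟨n, e, hn, rfl⟩ t ⟨n', d, hn', rfl⟩
    rw [div_le_div_iff₀ (by positivity) (by positivity)]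
    obtain ⟨p1, p2⟩ := gg_pow hn d
    obtain ⟨q1, q2⟩ := gg_pow hn' e
    obtain ⟨r1, r2⟩ := gg_add p1 q1
    have e0 : ((d:ℤ) + 1) * (-((e:ℤ) + 1)) + (e + 1) * (d + 1) = 0 := by ring
    rw [e0] at r1 r2
    have := h _ r1
    push_cast at this
    nlinarith)
  refine ⟨υ, fun n d hn => ?_⟩
  rcases lt_trichotomy d 0 with hd | hd | hd
  · obtain ⟨e, rfl⟩ : ∃ e : ℕ, d = -((e:ℤ) + 1) := ⟨(-d - 1).toNat, by omega⟩
    have := h1 ⟨n, e, hn, rfl⟩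
    rw [div_le_iff₀ (by positivity)] at this
    push_cast
    linarith
  · subst hd
    simpa using h n hn
  · obtain ⟨e, rfl⟩ : ∃ e : ℕ, d = (e:ℤ) + 1 := ⟨(d - 1).toNat, by omega⟩
    have := h2 ⟨n, e, hn, rfl⟩
    rw [le_div_iff₀ (by positivity)] at this
    push_cast
    linarith


theorem summable_iff {x z : ℝ} (hx : 0 < x) (hz : 0 < z) :
    Summable (fun p : ℕ × ℕ => (aCount p.1 p.2 : ℝ) * x ^ p.1 * z ^ p.2) ↔ Summable (wt x z) := by
  have h1 : Summable (wt x z) ↔ Summable (fun m : {m : ℕ // 0 < m} => wt x z m) := by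
    have h2 := summable_subtype_iff_indicator (f := wt x z) (s := {m : ℕ | 0 < m})
    refine Iff.trans ?_ h2.symm
    have : Set.indicator {m | 0 < m} (wt x z) = wt x z := by
      rw [Set.indicator_eq_self]
      intro m hm
      rcases Nat.eq_zero_or_pos m with h | h
      · subst h; simp [wt] at hm
      · exact h
    rw [this]
  let φ : {m : ℕ // 0 < m} → ℕ × ℕ := fun m => (szM m, lvM m)
  have hfin : ∀ p, Finite {m // φ m = p} := by
    rintro ⟨n, k⟩
    have := (finite_szM n).to_subtype
    refine Finite.of_injective (β := {m : ℕ | 0 < m ∧ szM m = n})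
      (fun m => ⟨m.1.1, m.1.2, (Prod.ext_iff.mp m.2).1⟩) ?_
    intro a b hab
    simpa [Subtype.ext_iff] using hab
  have hval : ∀ p, ∀ m : {m // φ m = p}, wt x z m.1 = x ^ p.1 * z ^ p.2 := by
    rintro ⟨n, k⟩ ⟨⟨m, hm⟩, hp⟩
    obtain ⟨h2, h3⟩ := Prod.ext_iff.mp hp
    simp only [φ] at h2 h3
    simp [wt, hm.ne', h2, h3]
  rw [h1, ← (Equiv.sigmaFiberEquiv φ).summable_iff, summable_sigma_of_nonneg (f := (fun m : {m : ℕ // 0 < m} => wt x z m) ∘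
    (Equiv.sigmaFiberEquiv φ)) (fun _ => wt_nonneg hx hz _)]
  have h4 : ∀ p : ℕ × ℕ, ∑' m : {m // φ m = p},
      ((fun m : {m : ℕ // 0 < m} => wt x z m) ∘ (Equiv.sigmaFiberEquiv φ)) ⟨p, m⟩ =
      (aCount p.1 p.2 : ℝ) * x ^ p.1 * z ^ p.2 := by
    intro p
    have : ∀ m : {m // φ m = p}, ((fun m : {m : ℕ // 0 < m} => wt x z m) ∘ (Equiv.sigmaFiberEquiv φ)) ⟨p, m⟩
       = x ^ p.1 * z ^ p.2 := fun m => hval p m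
    rw [tsum_congr this, tsum_const, nsmul_eq_mul, mul_assoc, aCount_eq]
    congr 2
    refine Nat.card_congr ⟨fun m => ⟨m.1.1, m.1.2, (Prod.ext_iff.mp m.2).1, (Prod.ext_iff.mp m.2).2⟩,
      fun m => ⟨⟨m.1, m.2.1⟩, Prod.ext m.2.2.1 m.2.2.2⟩, fun m => rfl, fun m => rfl⟩
  constructor
  · intro h
    refine ⟨fun p => ?_, ?_⟩
    · have := hfin p
      exact Summable.of_finite
    · simpa only [h4] using h
  · rintro ⟨-, h⟩
    simpa only [h4] using h

theorem wt_log {w u : ℝ} (hw : 0 < w) (hu : 0 < u) {n : ℕ} {d : ℤ} {m : ℕ} (hm : m ∈ SS n d) :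
    wt (w / u) (u ^ 2) m = Real.exp (n * Real.log w + d * Real.log u) * (u / w) := by
  obtain ⟨h1, h2, h3⟩ := mem_SS.mp hm
  rw [wt, if_neg h1.ne']
  have hxl : Real.log (w / u) = Real.log w - Real.log u := Real.log_div hw.ne' hu.ne'
  have e := Real.exp_log (show 0 < (w / u) ^ szM m * (u ^ 2) ^ lvM m * (w / u) by positivity)
  rw [eq_div_of_mul_eq (show w / u ≠ 0 by positivity) e.symm, div_eq_mul_inv, inv_div]
  congr 2
  rw [Real.log_mul (by positivity) (by positivity), Real.log_mul (by positivity) (by positivity),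
    Real.log_pow, Real.log_pow, Real.log_pow, hxl, ← h2, ← h3]
  push_cast
  ring

theorem dom_of_sum {w u : ℝ} (hw : 0 < w) (hu : 0 < u) (hs : Summable (wt (w / u) (u ^ 2))) :
    DomL (-Real.log w) (Real.log u) := by
  set C := (∑' m, wt (w / u) (u ^ 2) m) * (w / u) / 2 with hC
  have h0 := wt_nonneg (x := w / u) (z := u ^ 2) (by positivity) (by positivity)
  have key : ∀ n d, (SS n d).Nonempty → gg n d + n * Real.log w + d * Real.log u ≤ Real.log C := by
    intro n d hn
    have h1 : ∑ m ∈ SS n d, wt (w / u) (u ^ 2) m ≤ ∑' m, wt (w / u) (u ^ 2) m :=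
      hs.sum_le_tsum _ (fun m _ => h0 m)
    rw [Finset.sum_congr rfl (fun m hm => wt_log hw hu hm), Finset.sum_const, nsmul_eq_mul,
      card_eq_exp hn] at h1
    have h2 : Real.exp (gg n d + n * Real.log w + d * Real.log u) ≤ C := by
      rw [add_assoc, Real.exp_add, hC]
      calc _ = (2 * Real.exp (gg n d) * (Real.exp (n * Real.log w + d * Real.log u) * (u / w))) * (w / u) / 2 := by
            field_simp
        _ ≤ _ := by gcongr
    exact (Real.le_log_iff_exp_le (lt_of_lt_of_le (Real.exp_pos _) h2)).mpr h2
  intro n d hn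
  by_contra hlt
  push Not at hlt
  have hpos : 0 < gg n d + n * Real.log w + d * Real.log u := by linarith
  obtain ⟨k, hk⟩ := exists_nat_gt (Real.log C / (gg n d + n * Real.log w + d * Real.log u))
  rw [div_lt_iff₀ hpos] at hk
  obtain ⟨p1, p2⟩ := gg_pow hn k
  have := key _ _ p1
  push_cast at this
  nlinarith

theorem sum_of_dom {a υ w : ℝ} (h : DomL a υ) (hw : 0 < w) (hlt : w < Real.exp (-a)) :
    Summable (wt (w / Real.exp υ) (Real.exp υ ^ 2)) := by
  have hu := Real.exp_pos υ
  rw [← summable_iff (by positivity) (by positivity)]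
  set q := w * Real.exp a with hq
  have hq0 : 0 < q := by positivity
  have hq1 : q < 1 := by
    calc q < Real.exp (-a) * Real.exp a := by rw [hq]; gcongr
      _ = 1 := by rw [← Real.exp_add]; simp
  set r := Real.sqrt q with hr
  have hr0 : 0 < r := Real.sqrt_pos.mpr hq0
  have hr1 : r < 1 := by rw [hr, Real.sqrt_lt' one_pos]; simpa using hq1
  have hrr : r * r = q := Real.mul_self_sqrt hq0.le
  have hs : Summable (fun p : ℕ × ℕ => (2 * Real.exp (a + υ)) * (r ^ p.1 * r ^ p.2)) := by
    have := summable_geometric_of_lt_one hr0.le hr1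
    exact (this.mul_of_nonneg this (fun _ => by positivity) (fun _ => by positivity)).mul_left _
  refine Summable.of_nonneg_of_le (fun p => by positivity) ?_ hs
  rintro ⟨n, k⟩
  simp only
  rcases Nat.eq_zero_or_pos (aCount n k) with h0 | h0
  · rw [h0]; simp; positivity
  rw [aCount_card] at h0 ⊢
  obtain ⟨m, hm⟩ := Finset.card_pos.mp h0
  have hm' := mem_SS.mp hm
  have hk : k ≤ n := by
    have := (lvM_bounds m hm'.1).2.1
    omega
  have hne : (SS (n + 1) (2 * (k:ℤ) - n - 1)).Nonempty := ⟨m, hm⟩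
  rw [card_eq_exp hne]
  have hd := h _ _ hne
  push_cast at hd
  have e1 : (w / Real.exp υ) ^ n * (Real.exp υ ^ 2) ^ k = w ^ n * Real.exp ((2 * k - n) * υ) := by
    rw [div_pow, ← Real.exp_nat_mul, ← Real.exp_nat_mul, ← Real.exp_nat_mul, div_mul_eq_mul_div,
      mul_div_assoc, ← Real.exp_sub]
    congr 2; push_cast; ring
  have e2 : Real.exp ((n + 1) * a - (2 * k - n - 1) * υ) * Real.exp ((2 * k - n) * υ)
      = Real.exp a ^ n * Real.exp (a + υ) := by
    rw [← Real.exp_add, ← Real.exp_nat_mul, ← Real.exp_add]; congr 1; ring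
  have e3 : q ^ n ≤ r ^ n * r ^ k := by
    rw [← hrr, mul_pow]
    exact mul_le_mul_of_nonneg_left (pow_le_pow_of_le_one hr0.le hr1.le hk) (by positivity)
  calc 2 * Real.exp (gg (n + 1) (2 * (k:ℤ) - n - 1)) * (w / Real.exp υ) ^ n * (Real.exp υ ^ 2) ^ k
      = 2 * Real.exp (gg (n + 1) (2 * (k:ℤ) - n - 1)) * (w ^ n * Real.exp ((2 * k - n) * υ)) := by
        rw [← e1]; ring
    _ ≤ 2 * Real.exp ((n + 1) * a - (2 * k - n - 1) * υ) * (w ^ n * Real.exp ((2 * k - n) * υ)) := by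
        gcongr
    _ = 2 * w ^ n * (Real.exp ((n + 1) * a - (2 * k - n - 1) * υ) * Real.exp ((2 * k - n) * υ)) := by ring
    _ = 2 * Real.exp (a + υ) * q ^ n := by rw [e2, hq, mul_pow]; ring
    _ ≤ 2 * Real.exp (a + υ) * (r ^ n * r ^ k) := by gcongr


theorem dom_up {w : ℚ} {u : ℚ} (hw : 0 < w) (hu : 0 < u)
    (hs : Summable (wt (((w / u : ℚ)) : ℝ) ((u ^ 2 : ℚ) : ℝ))) :
    DomL (-Real.log (w:ℝ)) (Real.log (u:ℝ)) := by
  push_cast at hs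
  exact dom_of_sum (by exact_mod_cast hw) (by exact_mod_cast hu) hs

theorem dom_lo {w : ℚ} {u : ℚ} (hw : 0 < w) (hu : 0 < u)
    (hs : ¬ Summable (wt (((w / u : ℚ)) : ℝ) ((u ^ 2 : ℚ) : ℝ))) {a : ℝ}
    (h : DomL a (Real.log (u:ℝ))) : -Real.log (w:ℝ) ≤ a := by
  by_contra hlt
  push Not at hlt
  apply hs
  have hw' : (0:ℝ) < w := by exact_mod_cast hw
  have hu' : (0:ℝ) < u := by exact_mod_cast hu
  have h1 : (w:ℝ) < Real.exp (-a) := by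
    rw [← Real.log_lt_iff_lt_exp hw']; linarith
  have := sum_of_dom h hw' h1
  rw [Real.exp_log hu'] at this
  push_cast
  exact this

/-- three point localisation -/
theorem localize {a υ : ℝ} (h : DomL a υ) (hmin : ∀ b ν, DomL b ν → a ≤ b) :
    0 < υ ∧ Real.log 2.91938 < a ∧ a < Real.log 2.91939 := by
  have upM := dom_up (by norm_num) (by norm_num) cert_upM
  have upZ := dom_up (by norm_num) (by norm_num) cert_upZ
  have upP := dom_up (by norm_num) (by norm_num) cert_upP
  have loM : ∀ {b}, DomL b _ → _ ≤ b := dom_lo (by norm_num) (by norm_num) cert_loM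
  have loZ : ∀ {b}, DomL b _ → _ ≤ b := dom_lo (by norm_num) (by norm_num) cert_loZ
  have loP : ∀ {b}, DomL b _ → _ ≤ b := dom_lo (by norm_num) (by norm_num) cert_loP
  push_cast at upM upZ upP loM loZ loP
  set u : ℝ := 1218572 / 1000000 with hu
  have hu0 : 0 < u := by norm_num [hu]
  have eM : Real.log (u * 10000 / 10001) = Real.log u - Real.log (10001 / 10000) := by
    rw [← Real.log_div (by positivity) (by norm_num)]; congr 1; field_simp
  have eP : Real.log (u * 10001 / 10000) = Real.log u + Real.log (10001 / 10000) := by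
    rw [← Real.log_mul (by positivity) (by norm_num)]; congr 1; field_simp
  have hδ : 0 < Real.log (10001 / 10000 : ℝ) := Real.log_pos (by norm_num)
  have hMpos : 0 < Real.log (u * 10000 / 10001) := Real.log_pos (by norm_num [hu])
  rw [eM] at upM loM hMpos
  rw [eP] at upP loP
  set U := Real.log u
  set δ := Real.log (10001 / 10000 : ℝ)
  have c1 : Real.log (342538481262 / 1000000000000) < Real.log (342538481927 / 1000000000000) :=
    Real.log_lt_log (by norm_num) (by norm_num)
  have c2 : Real.log (342538481257 / 1000000000000) < Real.log (342538481927 / 1000000000000) :=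
    Real.log_lt_log (by norm_num) (by norm_num)
  have lc : ∀ v c : ℝ, 0 < v → 0 < c → 1 < v * c → -Real.log v < Real.log c := by
    intro v c hv hc h1
    have := Real.log_pos h1
    rw [Real.log_mul hv.ne' hc.ne'] at this
    linarith
  have lc' : ∀ v c : ℝ, 0 < v → 0 < c → v * c < 1 → Real.log c < -Real.log v := by
    intro v c hv hc h1
    have := Real.log_neg (by positivity) h1
    rw [Real.log_mul hv.ne' hc.ne'] at this
    linarith
  have c3 : -Real.log (342538481927 / 1000000000000) < Real.log 2.91939 :=
    lc _ _ (by norm_num) (by norm_num) (by norm_num)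
  have c4 : Real.log 2.91938 < -Real.log (342538480817 / 1000000000000) :=
    lc' _ _ (by norm_num) (by norm_num) (by norm_num)
  have c5 : Real.log 2.91938 < -Real.log (342538480813 / 1000000000000) :=
    lc' _ _ (by norm_num) (by norm_num) (by norm_num)
  have c6 : ∀ v w : ℝ, 0 < v → 0 < w → w ^ 2 * 2.91938 < v →
      Real.log 2.91938 + (-Real.log v) < 2 * (-Real.log w) := by
    intro v w hv hw h1
    have := Real.log_lt_log (by positivity) h1
    rw [Real.log_mul (by positivity) (by norm_num), Real.log_pow] at this
    push_cast at this
    linarith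
  have c7 := c6 (342538480817 / 1000000000000) (342538482372 / 1000000000000)
    (by norm_num) (by norm_num) (by norm_num)
  have c8 := c6 (342538480813 / 1000000000000) (342538482372 / 1000000000000)
    (by norm_num) (by norm_num) (by norm_num)
  have haZ := hmin _ _ upZ
  -- υ < U + δ
  have hP : υ < U + δ := by
    by_contra hge
    push Not at hge
    have hpos : 0 < υ - U := by linarith
    have hθ0 : 0 ≤ δ / (υ - U) := by positivity
    have hθ1 : δ / (υ - U) ≤ 1 := by rw [div_le_one hpos]; linarith
    have := h.interp upZ hθ0 hθ1
    have e : δ / (υ - U) * υ + (1 - δ / (υ - U)) * U = U + δ := by field_simp; ring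
    rw [e] at this
    have := loP this
    nlinarith
  have hM : U - δ < υ := by
    by_contra hge
    push Not at hge
    have hpos : 0 < U - υ := by linarith
    have hθ0 : 0 ≤ δ / (U - υ) := by positivity
    have hθ1 : δ / (U - υ) ≤ 1 := by rw [div_le_one hpos]; linarith
    have := h.interp upZ hθ0 hθ1
    have e : δ / (U - υ) * υ + (1 - δ / (U - υ)) * U = U - δ := by field_simp; ring
    rw [e] at this
    have := loM this
    nlinarith
  refine ⟨by linarith, ?_, by linarith⟩
  by_contra hle
  push Not at hle
  rcases le_total υ U with hu1 | hu1
  · have hpos : 0 < U + δ - υ := by linarith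
    have hθ0 : 0 ≤ δ / (U + δ - υ) := by positivity
    have hθ1 : δ / (U + δ - υ) ≤ 1 := by rw [div_le_one hpos]; linarith
    have hθ2 : 1 / 2 ≤ δ / (U + δ - υ) := by rw [div_le_div_iff₀ (by norm_num) hpos]; linarith
    have := h.interp upP hθ0 hθ1
    have e : δ / (U + δ - υ) * υ + (1 - δ / (U + δ - υ)) * (U + δ) = U := by field_simp; ring
    rw [e] at this
    have := loZ this
    nlinarith
  · have hpos : 0 < υ - U + δ := by linarith
    have hθ0 : 0 ≤ δ / (υ - U + δ) := by positivity
    have hθ1 : δ / (υ - U + δ) ≤ 1 := by rw [div_le_one hpos]; linarith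
    have hθ2 : 1 / 2 ≤ δ / (υ - U + δ) := by rw [div_le_div_iff₀ (by norm_num) hpos]; linarith
    have := h.interp upM hθ0 hθ1
    have e : δ / (υ - U + δ) * υ + (1 - δ / (υ - U + δ)) * (U - δ) = U := by field_simp; ring
    rw [e] at this
    have := loZ this
    nlinarith


theorem even_of_ne {n : ℕ} (h : (SS n 0).Nonempty) : ∃ k, n = 2 * (k + 1) := by
  obtain ⟨m, hm⟩ := h
  obtain ⟨h1, h2, h3⟩ := mem_SS.mp hm
  have := (lvM_bounds m h1).1
  exact ⟨lvM m - 1, by omega⟩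

theorem ne_even (k : ℕ) : (SS (2 * (k + 1)) 0).Nonempty := by
  have := (gg_pow ne20 k).1
  simpa [mul_comm] using this

theorem gg_zero : gg 0 0 = 0 := by
  have : SS 0 0 = ∅ := by
    rw [Finset.eq_empty_iff_forall_notMem]
    intro m hm
    have := (mem_SS.mp hm).2.1
    omega
  simp [gg, this]

theorem sub_s : Subadditive (fun k : ℕ => -gg (2 * k) 0) := by
  intro m n
  rcases m with _ | m
  · simp [gg_zero]
  rcases n with _ | n
  · simp [gg_zero]
  have := (gg_add (ne_even m) (ne_even n)).2
  rw [← mul_add, add_zero] at this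
  linarith

theorem bdd_s : BddBelow (Set.range fun k : ℕ => (-gg (2 * k) 0) / (k:ℝ)) := by
  obtain ⟨c, υ, h⟩ : ∃ c υ, DomL c υ := ⟨_, _, dom_up (by norm_num) (by norm_num) cert_upZ⟩
  refine ⟨-|2 * c|, ?_⟩
  rintro _ ⟨k, rfl⟩
  rcases k with _ | k
  · simp
  · have := h _ _ (ne_even k)
    simp only
    rw [le_div_iff₀ (by positivity)]
    push_cast at this ⊢
    have h2 := le_abs_self (2 * c)
    have : (0:ℝ) < k + 1 := by positivity
    nlinarith

theorem exists_opt : ∃ a υ : ℝ, DomL a υ ∧ (∀ b ν, DomL b ν → a ≤ b) ∧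
    Filter.Tendsto (fun k : ℕ => gg (2 * k) 0 / (k:ℝ)) Filter.atTop (nhds (2 * a)) := by
  have ht := sub_s.tendsto_lim bdd_s
  have hle : ∀ k : ℕ, k ≠ 0 → sub_s.lim ≤ -gg (2 * k) 0 / (k:ℝ) := fun k hk => sub_s.lim_le_div bdd_s hk
  set l := sub_s.lim
  have hmin : ∀ b ν, DomL b ν → -l / 2 ≤ b := by
    intro b ν hb
    have : -(2 * b) ≤ l := by
      refine ge_of_tendsto ht ?_
      filter_upwards [Filter.eventually_gt_atTop 0] with k hk
      obtain ⟨j, rfl⟩ : ∃ j, k = j + 1 := ⟨k - 1, by omega⟩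
      have := hb _ _ (ne_even j)
      rw [le_div_iff₀ (by positivity)]
      push_cast at this ⊢
      linarith
    linarith
  obtain ⟨υ, hυ⟩ := minimax (a := -l / 2) (by
    intro n hn
    obtain ⟨k, rfl⟩ := even_of_ne hn
    have := hle (k + 1) (by omega)
    rw [le_div_iff₀ (by positivity)] at this
    push_cast at this ⊢
    linarith)
  refine ⟨-l / 2, υ, hυ, hmin, ?_⟩
  have := ht.neg
  refine (this.congr (fun k => by ring)).trans (by rw [show 2 * (-l / 2) = -l by ring])

theorem xZero_eq {a υ : ℝ} (h : DomL a υ) (hmin : ∀ b ν, DomL b ν → a ≤ b) :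
    xZero = Real.exp (-a) := by
  have hset : ∀ ζ : ℝ, 0 < ζ → ∀ x ∈ {x : ℝ | 0 < x ∧
      Summable (fun p : ℕ × ℕ => (aCount p.1 p.2 : ℝ) * x ^ p.1 * ζ ^ p.2)},
      x ≤ Real.exp (-a) / Real.sqrt ζ := by
    rintro ζ hζ x ⟨hx, hs⟩
    have hu : 0 < Real.sqrt ζ := Real.sqrt_pos.mpr hζ
    rw [summable_iff hx hζ] at hs
    have e1 : x = (x * Real.sqrt ζ) / Real.sqrt ζ := by field_simp
    have e2 : ζ = Real.sqrt ζ ^ 2 := (Real.sq_sqrt hζ.le).symm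
    rw [e1] at hs
    nth_rewrite 3 [e2] at hs
    have := hmin _ _ (dom_of_sum (by positivity) hu hs)
    rw [le_div_iff₀ hu, ← Real.log_le_iff_le_exp (by positivity)]
    linarith
  have hub : ∀ ζ : ℝ, 0 < ζ → rFun ζ * Real.sqrt ζ ≤ Real.exp (-a) := by
    intro ζ hζ
    have hu : 0 < Real.sqrt ζ := Real.sqrt_pos.mpr hζ
    rw [← le_div_iff₀ hu]
    exact Real.sSup_le (hset ζ hζ) (by positivity)
  have hζ : 0 < Real.exp υ ^ 2 := by positivity
  have hsq : Real.sqrt (Real.exp υ ^ 2) = Real.exp υ := Real.sqrt_sq (Real.exp_pos υ).le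
  have hat : Real.exp (-a) ≤ rFun (Real.exp υ ^ 2) * Real.sqrt (Real.exp υ ^ 2) := by
    rw [hsq]
    refine le_of_forall_lt_imp_le_of_dense (fun w hw => ?_)
    rcases le_or_gt w 0 with h0 | h0
    · refine h0.trans (mul_nonneg (Real.sSup_nonneg (fun x hx => hx.1.le)) (Real.exp_pos υ).le)
    · rw [← div_le_iff₀ (Real.exp_pos υ)]
      refine le_csSup ⟨_, hset _ hζ⟩ ⟨by positivity, ?_⟩
      exact (summable_iff (by positivity) hζ).mpr (sum_of_dom h h0 hw)
  refine le_antisymm ?_ ?_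
  · refine Real.sSup_le ?_ (Real.exp_pos _).le
    rintro y ⟨ζ, hζ, rfl⟩
    exact hub ζ hζ
  · refine hat.trans (le_csSup ⟨Real.exp (-a), ?_⟩ ⟨_, hζ, rfl⟩)
    rintro y ⟨ζ, hζ, rfl⟩
    exact hub ζ hζ

theorem aPlus_lower {n : ℕ} {d : ℤ} (hd : 0 ≤ d) : (SS (n + 1) d).card ≤ aPlusN n := by
  rw [aPlusN_eq, ← Nat.card_eq_finsetCard]
  have : Finite {m : ℕ // 0 < m ∧ szM m = n ∧ n < 2 * lvM m} :=
    ((finite_szM n).subset (t := {m : ℕ | 0 < m ∧ szM m = n ∧ n < 2 * lvM m})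
      (by rintro m ⟨h1, h2, -⟩; exact ⟨h1, h2⟩)).to_subtype
  refine Nat.card_le_card_of_injective
    (fun m : SS (n + 1) d => (⟨m.1, by
      have := mem_SS.mp m.2
      refine ⟨this.1, by omega, by omega⟩⟩ : {m : ℕ // 0 < m ∧ szM m = n ∧ n < 2 * lvM m})) ?_
  intro x y hxy
  exact Subtype.ext (congrArg (fun t => t.1) hxy)

theorem aPlus_upper {a υ : ℝ} (h : DomL a υ) (hυ : 0 < υ) (n : ℕ) :
    (aPlusN n : ℝ) ≤ (n + 1) * (2 * Real.exp ((n + 1) * a)) := by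
  rw [aPlusN_eq]
  have hsub : {m : ℕ | 0 < m ∧ szM m = n ∧ n < 2 * lvM m} ⊆
      (((Finset.range (n + 1)).filter (fun k => n < 2 * k)).biUnion
        (fun k => SS (n + 1) (2 * (k:ℤ) - n - 1)) : Finset ℕ) := by
    rintro m ⟨h1, h2, h3⟩
    have := (lvM_bounds m h1).2.1
    simp only [Finset.coe_biUnion, Set.mem_iUnion, Finset.mem_coe, Finset.mem_filter,
      Finset.mem_range, mem_SS]
    exact ⟨lvM m, ⟨by omega, h3⟩, h1, by omega, by omega⟩
  have h1 := Nat.card_mono (Finset.finite_toSet _) hsub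
  have h2 : Nat.card {m : ℕ // 0 < m ∧ szM m = n ∧ n < 2 * lvM m} ≤ ∑ k ∈ (Finset.range (n + 1)).filter
      (fun k => n < 2 * k), (SS (n + 1) (2 * (k:ℤ) - n - 1)).card := by
    refine le_trans h1 ?_
    refine le_trans (le_of_eq (Nat.card_eq_finsetCard _)) Finset.card_biUnion_le
  have h3 : ((Nat.card {m : ℕ // 0 < m ∧ szM m = n ∧ n < 2 * lvM m} : ℕ) : ℝ) ≤
      ∑ k ∈ (Finset.range (n + 1)).filter
      (fun k => n < 2 * k), ((SS (n + 1) (2 * (k:ℤ) - n - 1)).card : ℝ) := by exact_mod_cast h2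
  refine h3.trans ?_
  refine (Finset.sum_le_card_nsmul _ _ (2 * Real.exp ((n + 1) * a)) (fun k hk => ?_)).trans ?_
  · rcases (SS (n + 1) (2 * (k:ℤ) - n - 1)).eq_empty_or_nonempty with he | hne
    · rw [he]; simp; positivity
    · rw [card_eq_exp hne]
      have hd := h _ _ hne
      have hk' : (0:ℝ) ≤ ((2 * (k:ℤ) - n - 1 : ℤ) : ℝ) := by
        have := (Finset.mem_filter.mp hk).2
        exact_mod_cast (by omega : (0:ℤ) ≤ 2 * (k:ℤ) - n - 1)
      gcongr
      have : 0 ≤ ((2 * (k:ℤ) - n - 1 : ℤ) : ℝ) * υ := by positivity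
      push_cast at hd this ⊢
      linarith
  · rw [nsmul_eq_mul]
    gcongr
    have : ((Finset.range (n + 1)).filter (fun k => n < 2 * k)).card ≤ n + 1 :=
      (Finset.card_filter_le _ _).trans (by simp)
    exact_mod_cast this

theorem log_lower {n k : ℕ} (hk : 1 ≤ k) (hn : n + 1 = 2 * k ∨ n + 1 = 2 * k + 5) :
    0 < aPlusN n ∧ gg (2 * k) 0 - |gg 5 1| ≤ Real.log (aPlusN n) := by
  obtain ⟨j, rfl⟩ : ∃ j, k = j + 1 := ⟨k - 1, by omega⟩
  have hl2 : 0 < Real.log 2 := Real.log_pos (by norm_num)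
  have key : ∀ d : ℤ, 0 ≤ d → (SS (n + 1) d).Nonempty → 0 < aPlusN n ∧ gg (n + 1) d ≤ Real.log (aPlusN n) := by
    intro d hd hne
    have h1 := aPlus_lower (n := n) hd
    have h2 := hne.card_pos
    refine ⟨by omega, ?_⟩
    have h3 : ((SS (n + 1) d).card : ℝ) ≤ aPlusN n := by exact_mod_cast h1
    have h4 : (0:ℝ) < (SS (n + 1) d).card := by exact_mod_cast h2
    unfold gg
    exact Real.log_le_log (by positivity) (by linarith)
  have habs := neg_abs_le (gg 5 1)
  rcases hn with hn | hn
  · obtain ⟨p1, p2⟩ := key 0 le_rfl (hn ▸ ne_even j)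
    rw [hn] at p2
    exact ⟨p1, by linarith [abs_nonneg (gg 5 1)]⟩
  · obtain ⟨q1, q2⟩ := gg_add (ne_even j) ne5
    rw [← hn, zero_add] at q1 q2
    obtain ⟨p1, p2⟩ := key 1 (by norm_num) q1
    exact ⟨p1, by linarith⟩

theorem log_limit {a υ : ℝ} (h : DomL a υ) (hυ : 0 < υ) (ha : 0 < a)
    (ht : Filter.Tendsto (fun k : ℕ => gg (2 * k) 0 / (k:ℝ)) Filter.atTop (nhds (2 * a))) :
    Filter.Tendsto (fun n : ℕ => Real.log (aPlusN n) / (n:ℝ)) Filter.atTop (nhds a) := by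
  -- index
  have hix : ∀ n : ℕ, 6 ≤ n → ∃ k, (n + 1 = 2 * k ∨ n + 1 = 2 * k + 5) ∧ 1 ≤ k := by
    intro n hn
    rcases Nat.even_or_odd' n with ⟨c, rfl | rfl⟩
    · exact ⟨c - 2, Or.inr (by omega), by omega⟩
    · exact ⟨c + 1, Or.inl (by omega), by omega⟩
  have htop : Filter.Tendsto (fun n : ℕ => (n:ℝ)) Filter.atTop Filter.atTop := tendsto_natCast_atTop_atTop
  rw [tendsto_order]
  constructor
  · intro b hb
    set ε := (a - b) / 2 with hε
    have hε0 : 0 < ε := by rw [hε]; linarith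
    have h1 := (tendsto_order.mp ht).1 (2 * a - ε) (by linarith)
    obtain ⟨K, hK⟩ := Filter.eventually_atTop.mp h1
    have h2 := htop.eventually_gt_atTop ((4 * a + |gg 5 1|) / ε)
    filter_upwards [h2, Filter.eventually_ge_atTop (2 * K + 6)] with n hn hnK
    obtain ⟨k, hk, hk1⟩ := hix n (by omega)
    obtain ⟨p1, p2⟩ := log_lower hk1 hk
    have h3 := hK k (by omega)
    have hkpos : (0:ℝ) < k := by exact_mod_cast hk1
    have hnpos : (0:ℝ) < n := by exact_mod_cast (by omega : 0 < n)
    rw [lt_div_iff₀ hkpos] at h3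
    rw [div_lt_iff₀ hε0] at hn
    rw [lt_div_iff₀ hnpos]
    have hkn : (k:ℝ) ≤ n := by exact_mod_cast (by omega : k ≤ n)
    have hnk : (n:ℝ) ≤ 2 * k + 4 := by exact_mod_cast (by omega : n ≤ 2 * k + 4)
    have hb' : b = a - 2 * ε := by rw [hε]; ring
    rw [hb']
    nlinarith
  · intro b hb
    have hlog : Filter.Tendsto (fun n : ℕ => (Real.log ((n:ℝ) + 1) + (Real.log 2 + a)) / n + a)
        Filter.atTop (nhds a) := by
      have l1 : Filter.Tendsto (fun x : ℝ => Real.log (x + 1) / x) Filter.atTop (nhds 0) := by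
        have := Real.isLittleO_log_id_atTop.tendsto_div_nhds_zero
        have h5 := this.comp (Filter.tendsto_atTop_add_const_right Filter.atTop (1:ℝ) Filter.tendsto_id)
        have h6 : Filter.Tendsto (fun x : ℝ => (x + 1) / x) Filter.atTop (nhds 1) := by
          have h7 : Filter.Tendsto (fun x : ℝ => 1 + x⁻¹) Filter.atTop (nhds (1 + 0)) :=
            tendsto_const_nhds.add tendsto_inv_atTop_zero
          rw [add_zero] at h7
          refine h7.congr' ?_
          filter_upwards [Filter.eventually_gt_atTop 0] with x hx
          field_simp
        have h8 := h5.mul h6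
        rw [zero_mul] at h8
        refine h8.congr' ?_
        filter_upwards [Filter.eventually_gt_atTop 0] with x hx
        simp only [Function.comp, id]
        have : x + 1 ≠ 0 := by positivity
        field_simp
      have l2 : Filter.Tendsto (fun x : ℝ => (Real.log 2 + a) / x) Filter.atTop (nhds 0) :=
        tendsto_const_nhds.div_atTop Filter.tendsto_id
      have l3 := ((l1.add l2).add_const a).comp htop
      simp only [add_zero, zero_add] at l3
      refine l3.congr (fun n => ?_)
      simp only [Function.comp]
      ring
    filter_upwards [(tendsto_order.mp hlog).2 b hb, Filter.eventually_ge_atTop 6] with n hn hn6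
    refine lt_of_le_of_lt ?_ hn
    obtain ⟨k, hk, hk1⟩ := hix n hn6
    obtain ⟨p1, -⟩ := log_lower hk1 hk
    have hnpos : (0:ℝ) < n := by exact_mod_cast (by omega : 0 < n)
    have h9 := Real.log_le_log (by exact_mod_cast p1) (aPlus_upper h hυ n)
    rw [Real.log_mul (by positivity) (by positivity), Real.log_mul (by norm_num) (Real.exp_pos _).ne',
      Real.log_exp] at h9
    rw [div_le_iff₀ hnpos, add_mul, div_mul_cancel₀ _ hnpos.ne']
    linarith

theorem theorem6 :
    Filter.Tendsto (fun n : ℕ => (aPlusN n : ℝ) ^ (1 / (n : ℝ)))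
      Filter.atTop (nhds (1 / xZero)) ∧
    2.91938 < 1 / xZero ∧ 1 / xZero < 2.91939 := by
  obtain ⟨a, υ, h, hmin, ht⟩ := exists_opt
  obtain ⟨hυ, h1, h2⟩ := localize h hmin
  have ha : 0 < a := lt_trans (Real.log_pos (by norm_num)) h1
  have hx : 1 / xZero = Real.exp a := by
    rw [xZero_eq h hmin, Real.exp_neg]; simp
  rw [hx]
  refine ⟨?_, (Real.log_lt_iff_lt_exp (by norm_num)).mp h1, (Real.lt_log_iff_exp_lt (by norm_num)).mp h2⟩
  have hl := log_limit h hυ ha ht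
  refine ((Real.continuous_exp.tendsto a).comp hl).congr' ?_
  filter_upwards [Filter.eventually_ge_atTop 6] with n hn
  have hpos : 0 < aPlusN n := by
    rcases Nat.even_or_odd' n with ⟨c, rfl | rfl⟩
    · exact (log_lower (k := c - 2) (by omega) (Or.inr (by omega))).1
    · exact (log_lower (k := c + 1) (by omega) (Or.inl (by omega))).1
  simp only [Function.comp]
  rw [Real.rpow_def_of_pos (by exact_mod_cast hpos)]
  congr 1
  ring
end

section
/- (Theorem 7) There exists a continuous function C : [0,1) → (0,∞) such that for every λ ∈ [0,1) the limit lim_{n→∞} (Σ_{k > λn} a_{n,k})^{1/n} exists and equals C(λ); moreover C(1/2) = C_1 and C(λ) < C(1/2) for every λ with 1/2 < λ < 1. -/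
open SimpleGraph

/-- `Σ_{k > λn} a_{n,k}`: the number of rooted trees with `n` vertices and
more than `λn` leaves. -/
noncomputable def aboveCount (lam : ℝ) (n : ℕ) : ℕ :=
  Nat.card (Quotient (Setoid.comap
    (Subtype.val : {t : RTree n // lam * n < (numLeaves t : ℝ)} → RTree n)
    (treeSetoid n)))


/-! ## Unlabelled rooted trees, coded by natural numbers (Matula numbers) -/

theorem exists_matula : ∃ e : ℕ ≃ Multiset ℕ, ∀ n, ∀ c ∈ e n, c < n := by
  have hinf : (Set.ofPred Nat.Prime).Infinite := Nat.infinite_setOfPred_prime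
  obtain ⟨f, hf⟩ : ∃ f : ℕ ≃ Nat.Primes, ∀ c, c + 2 ≤ (f c : ℕ) := by
    refine ⟨Equiv.ofBijective (fun c => (⟨Nat.nth Nat.Prime c, Nat.prime_nth_prime c⟩ : Nat.Primes))
      ⟨?_, ?_⟩, ?_⟩
    · intro a b h
      exact Nat.nth_injective hinf (congrArg Subtype.val h)
    · rintro ⟨p, hp⟩
      refine ⟨Nat.count Nat.Prime p, ?_⟩
      apply Subtype.ext
      exact Nat.nth_count hp
    · intro c
      exact Nat.add_two_le_nth_prime c
  have hA : ∀ M : Multiset Nat.Primes, Multiset.map f (Multiset.map f.symm M) = M := by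
    intro M; simp
  have hB : ∀ M : Multiset ℕ, Multiset.map f.symm (Multiset.map f M) = M := by
    intro M; simp
  refine ⟨(Equiv.pnatEquivNat.symm.trans PNat.factorMultisetEquiv).trans
    ⟨fun M => Multiset.map f.symm M, fun M => Multiset.map f M, hA, hB⟩, ?_⟩
  · intro n c hc
    have hc' : c ∈ Multiset.map f.symm (PNat.factorMultiset (Nat.succPNat n)) := hc
    obtain ⟨q, hq, rfl⟩ := Multiset.mem_map.1 hc'
    have h1 : (q : ℕ+) ∣ Nat.succPNat n := by
      have h2 := Multiset.dvd_prod (Multiset.mem_map_of_mem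
        (fun p : Nat.Primes => (p : ℕ+)) hq)
      have h3 : (PNat.factorMultiset (Nat.succPNat n)).prod = Nat.succPNat n :=
        PNat.prod_factorMultiset _
      have h4 : (PNat.factorMultiset (Nat.succPNat n)).prod =
        (Multiset.map (fun p : Nat.Primes => (p : ℕ+)) (PNat.factorMultiset (Nat.succPNat n))).prod := rfl
      rw [← h4, h3] at h2
      exact h2
    have h5 : ((q : ℕ+) : ℕ) ≤ n + 1 := PNat.le_of_dvd h1
    have h6 := hf (f.symm q)
    rw [Equiv.apply_symm_apply] at h6
    have h7 : ((q : ℕ+) : ℕ) = (q : ℕ) := rfl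
    omega

/-- The multiset of branches of the unlabelled tree with code `n`. -/
noncomputable def brs : ℕ ≃ Multiset ℕ := exists_matula.choose

theorem brs_lt {n c : ℕ} (h : c ∈ brs n) : c < n := exists_matula.choose_spec n c h

/-- Number of vertices. -/
noncomputable def sz (n : ℕ) : ℕ := 1 + ((brs n).attach.map fun c => sz c.1).sum
termination_by n
decreasing_by exact brs_lt c.2

open Classical in
/-- Number of leaves. -/
noncomputable def lv (n : ℕ) : ℕ :=
  if brs n = 0 then 1 else ((brs n).attach.map fun c => lv c.1).sum
termination_by n
decreasing_by exact brs_lt c.2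

theorem sz_eq (n : ℕ) : sz n = 1 + ((brs n).map sz).sum := by
  rw [sz, Multiset.attach_map_val']

/-- Total number of leaves of the branches. -/
noncomputable def lvb (n : ℕ) : ℕ := ((brs n).map lv).sum

theorem lv_eq (n : ℕ) : lv n = if brs n = 0 then 1 else lvb n := by
  classical
  rw [lv, Multiset.attach_map_val', lvb]

theorem U_ind {P : ℕ → Prop} (h : ∀ u, (∀ c ∈ brs u, P c) → P u) (u : ℕ) : P u := by
  induction u using Nat.strong_induction_on with
  | _ u ih => exact h u fun c hc => ih c (brs_lt hc)


/-! ## Parent structures -/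

/-- A rooted tree given by its parent function and its depth function. -/
structure PS (V : Type) where
  p : V → V
  d : V → ℕ
  r : V
  dr : d r = 0
  dp : ∀ w, w ≠ r → d w = d (p w) + 1

namespace PS

theorem ind_down {V : Type} (P : PS V) {Q : V → Prop} (h0 : Q P.r)
    (h : ∀ v, v ≠ P.r → Q (P.p v) → Q v) (v : V) : Q v := by
  induction hk : P.d v using Nat.strong_induction_on generalizing v with
  | _ k ih =>
    by_cases hv : v = P.r
    · rw [hv]; exact h0
    · refine h v hv (ih _ ?_ _ rfl)
      have := P.dp v hv
      omega

theorem exists_match {V W : Type} (S : Finset V) (S' : Finset W) (f : V → ℕ) (g : W → ℕ) (w0 : W)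
    (h : S.val.map f = S'.val.map g) :
    ∃ σ : V → W, (∀ w ∈ S, σ w ∈ S' ∧ g (σ w) = f w) ∧ Set.InjOn σ S := by
  classical
  induction S using Finset.induction_on generalizing S' with
  | empty => exact ⟨fun _ => w0, by simp, by simp⟩
  | insert a S ha ih =>
    have h1 : f a ∈ S'.val.map g := by
      rw [← h]; exact Multiset.mem_map_of_mem f (by simp)
    obtain ⟨b, hb, hgb⟩ := Multiset.mem_map.1 h1
    have hb' : b ∈ S' := hb
    have h2 : S' = insert b (S'.erase b) := (Finset.insert_erase hb').symm
    rw [h2, Finset.insert_val_of_notMem ha,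
      Finset.insert_val_of_notMem (Finset.notMem_erase b S'), Multiset.map_cons, Multiset.map_cons,
      hgb, Multiset.cons_inj_right] at h
    obtain ⟨σ, h3, h4⟩ := ih (S'.erase b) h
    refine ⟨Function.update σ a b, ?_, ?_⟩
    · intro w hw
      by_cases hwa : w = a
      · subst hwa; simp [hb', hgb]
      · have hw' : w ∈ S := (Finset.mem_insert.1 hw).resolve_left hwa
        rw [Function.update_of_ne hwa]
        exact ⟨Finset.mem_of_mem_erase (h3 w hw').1, (h3 w hw').2⟩
    · intro x hx y hy hxy
      have hx : x ∈ insert a S := hx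
      have hy : y ∈ insert a S := hy
      rw [Finset.mem_insert] at hx hy
      by_cases hxa : x = a <;> by_cases hya : y = a
      · rw [hxa, hya]
      · exfalso
        have hy' := hy.resolve_left hya
        subst hxa
        rw [Function.update_self, Function.update_of_ne hya] at hxy
        exact (Finset.ne_of_mem_erase (h3 y hy').1) hxy.symm
      · exfalso
        have hx' := hx.resolve_left hxa
        subst hya
        rw [Function.update_self, Function.update_of_ne hxa] at hxy
        exact (Finset.ne_of_mem_erase (h3 x hx').1) hxy
      · rw [Function.update_of_ne hxa, Function.update_of_ne hya] at hxy
        exact h4 (hx.resolve_left hxa) (hy.resolve_left hya) hxy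

variable {V W : Type} [Fintype V] [Fintype W]

open Classical in
/-- The children of a vertex. -/
noncomputable def ch (P : PS V) (v : V) : Finset V :=
  Finset.univ.filter fun w => w ≠ P.r ∧ P.p w = v

theorem mem_ch {P : PS V} {v w : V} : w ∈ P.ch v ↔ w ≠ P.r ∧ P.p w = v := by
  simp [ch]

theorem d_ch {P : PS V} {v w : V} (h : w ∈ P.ch v) : P.d w = P.d v + 1 := by
  rw [mem_ch] at h
  rw [P.dp w h.1, h.2]

theorem d_le (P : PS V) (v : V) : P.d v ≤ Finset.univ.sup P.d :=
  Finset.le_sup (f := P.d) (Finset.mem_univ v)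

/-- The code of the fringe subtree at `v`. -/
noncomputable def code (P : PS V) (v : V) : ℕ :=
  brs.symm ((P.ch v).attach.val.map fun w => code P w.1)
termination_by Finset.univ.sup P.d - P.d v
decreasing_by
  have h1 := d_ch w.2
  have h2 := d_le P w.1
  omega

theorem brs_code (P : PS V) (v : V) : brs (P.code v) = (P.ch v).val.map P.code := by
  rw [code, Equiv.apply_symm_apply]
  exact Multiset.attach_map_val' (P.ch v).val P.code

theorem code_eq (P : PS V) (v : V) : P.code v = brs.symm ((P.ch v).val.map P.code) := by
  rw [← brs_code, Equiv.symm_apply_apply]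

/-- Downward induction along the tree (from children to parents). -/
theorem ind_up (P : PS V) {Q : V → Prop} (h : ∀ v, (∀ w ∈ P.ch v, Q w) → Q v) (v : V) : Q v := by
  induction hk : Finset.univ.sup P.d - P.d v using Nat.strong_induction_on generalizing v with
  | _ k ih =>
    refine h v fun w hw => ?_
    have h1 := d_ch hw
    have h2 := d_le P w
    exact ih (Finset.univ.sup P.d - P.d w) (by omega) w rfl

theorem exists_sigma (P : PS V) (Q : PS W) (v : V) (v' : W) :
    ∃ σ : V → W, P.code v = Q.code v' →
      (∀ w ∈ P.ch v, σ w ∈ Q.ch v' ∧ Q.code (σ w) = P.code w) ∧ Set.InjOn σ (P.ch v) := by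
  by_cases h : P.code v = Q.code v'
  · have h2 : (P.ch v).val.map P.code = (Q.ch v').val.map Q.code := by
      rw [← brs_code, ← brs_code, h]
    obtain ⟨σ, h3⟩ := exists_match _ _ _ _ v' h2
    exact ⟨σ, fun _ => h3⟩
  · exact ⟨fun _ => v', fun h' => absurd h' h⟩

open Classical in
/-- The embedding obtained from equality of codes. -/
noncomputable def emb (P : PS V) (Q : PS W) (v : V) : W :=
  if h : v = P.r then Q.r else (exists_sigma P Q (P.p v) (emb P Q (P.p v))).choose v
termination_by P.d v
decreasing_by
  have := P.dp v h
  omega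

theorem emb_root (P : PS V) (Q : PS W) : emb P Q P.r = Q.r := by
  rw [emb]; simp

theorem emb_ne (P : PS V) (Q : PS W) {v : V} (h : v ≠ P.r) :
    emb P Q v = (exists_sigma P Q (P.p v) (emb P Q (P.p v))).choose v := by
  rw [emb]; simp [h]

theorem code_emb (P : PS V) (Q : PS W) (h : P.code P.r = Q.code Q.r) (v : V) :
    P.code v = Q.code (emb P Q v) := by
  induction v using ind_down P with
  | h0 => rw [emb_root, h]
  | h v hv ih =>
    rw [emb_ne P Q hv]
    have h1 := (exists_sigma P Q (P.p v) (emb P Q (P.p v))).choose_spec ih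
    exact (h1.1 v (mem_ch.2 ⟨hv, rfl⟩)).2.symm

theorem emb_mem (P : PS V) (Q : PS W) (h : P.code P.r = Q.code Q.r) {v : V} (hv : v ≠ P.r) :
    emb P Q v ∈ Q.ch (emb P Q (P.p v)) := by
  rw [emb_ne P Q hv]
  have h1 := (exists_sigma P Q (P.p v) (emb P Q (P.p v))).choose_spec (code_emb P Q h (P.p v))
  exact (h1.1 v (mem_ch.2 ⟨hv, rfl⟩)).1

theorem emb_inj (P : PS V) (Q : PS W) (h : P.code P.r = Q.code Q.r) :
    Function.Injective (emb P Q) := by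
  intro v
  induction v using ind_down P with
  | h0 =>
    intro w hw
    by_contra hne
    have h1 := mem_ch.1 (emb_mem P Q h (v := w) (fun h' => hne h'.symm))
    rw [← hw, emb_root] at h1
    exact h1.1 rfl
  | h v hv ih =>
    intro w hw
    by_cases hwr : w = P.r
    · exfalso
      have h1 := mem_ch.1 (emb_mem P Q h hv)
      rw [hw, hwr, emb_root] at h1
      exact h1.1 rfl
    · have h1 := mem_ch.1 (emb_mem P Q h hv)
      have h2 := mem_ch.1 (emb_mem P Q h hwr)
      have h3 : P.p v = P.p w := ih (by rw [← h1.2, ← h2.2, hw])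
      have h4 := ((exists_sigma P Q (P.p v) (emb P Q (P.p v))).choose_spec
        (code_emb P Q h (P.p v))).2
      refine h4 (mem_ch.2 ⟨hv, rfl⟩) (mem_ch.2 ⟨hwr, h3.symm⟩) ?_
      rw [emb_ne P Q hv, emb_ne P Q hwr, ← h3] at hw
      exact hw

/-- Equality of codes gives an isomorphism. -/
theorem exists_iso (P : PS V) (Q : PS W) (h : P.code P.r = Q.code Q.r) :
    ∃ e : V ≃ W, e P.r = Q.r ∧ ∀ v, v ≠ P.r → Q.p (e v) = e (P.p v) := by
  have h1 := emb_inj P Q h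
  have h2 := emb_inj Q P h.symm
  have hc : Fintype.card V = Fintype.card W :=
    le_antisymm (Fintype.card_le_of_injective _ h1) (Fintype.card_le_of_injective _ h2)
  have hb : Function.Bijective (emb P Q) :=
    (Fintype.bijective_iff_injective_and_card _).2 ⟨h1, hc⟩
  refine ⟨Equiv.ofBijective _ hb, emb_root P Q, ?_⟩
  intro v hv
  exact (mem_ch.1 (emb_mem P Q h hv)).2

/-- Isomorphism gives equality of codes. -/
theorem code_of_iso (P : PS V) (Q : PS W) (e : V ≃ W) (hr : e P.r = Q.r)
    (he : ∀ v, v ≠ P.r → Q.p (e v) = e (P.p v)) (v : V) : P.code v = Q.code (e v) := by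
  induction v using ind_up P with
  | h v ih =>
    rw [code_eq, code_eq]
    have hch : Q.ch (e v) = (P.ch v).map e.toEmbedding := by
      ext w
      obtain ⟨x, rfl⟩ := e.surjective w
      simp only [mem_ch, Finset.mem_map_equiv, Equiv.symm_apply_apply]
      rw [← hr]
      constructor
      · rintro ⟨a, b⟩
        have hx : x ≠ P.r := fun h => a (by rw [h])
        exact ⟨hx, e.injective (by rw [← he x hx, b])⟩
      · rintro ⟨a, b⟩
        exact ⟨fun h => a (e.injective h), by rw [he x a, b]⟩
    rw [hch, Finset.map_val, Multiset.map_map]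
    congr 1
    refine Multiset.map_congr rfl fun w hw => ?_
    exact ih w hw

/-- The childless vertices. -/
def cl (P : PS V) (v : V) : Prop := P.ch v = ∅

theorem card_cl_of_iso (P : PS V) (Q : PS W) (e : V ≃ W) (hr : e P.r = Q.r)
    (he : ∀ v, v ≠ P.r → Q.p (e v) = e (P.p v)) :
    Nat.card {v // P.cl v} = Nat.card {v // Q.cl v} := by
  refine Nat.card_congr (e.subtypeEquiv fun v => ?_)
  have h1 := brs_code P v
  have h2 := brs_code Q (e v)
  rw [← code_of_iso P Q e hr he v, h1] at h2
  unfold cl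
  rw [← Finset.val_eq_zero, ← Finset.val_eq_zero, ← Multiset.map_eq_zero (f := P.code), h2,
    Multiset.map_eq_zero]

/-- Realisation of a code by a parent structure. -/
theorem realise (u : ℕ) : ∃ (V : Type) (_ : Fintype V) (P : PS V), P.code P.r = u ∧
    Fintype.card V = sz u ∧ Nat.card {v // P.cl v} = lv u := by
  classical
  induction u using U_ind with
  | h u ih =>
    obtain ⟨l, hl⟩ := Quot.exists_rep (brs u)
    have hl : brs u = (l : Multiset ℕ) := hl.symm
    have ih' : ∀ i : Fin l.length, ∃ (V : Type) (_ : Fintype V) (P : PS V),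
        P.code P.r = l.get i ∧ Fintype.card V = sz (l.get i) ∧
        Nat.card {v // P.cl v} = lv (l.get i) := by
      intro i
      exact ih _ (by rw [hl]; exact Multiset.mem_coe.2 (l.get_mem i))
    choose X hX P hP1 hP2 hP3 using ih'
    let Q : PS (Option (Σ i, X i)) :=
      { p := fun x => match x with
          | none => none
          | some ⟨i, y⟩ => if y = (P i).r then none else some ⟨i, (P i).p y⟩
        d := fun x => match x with
          | none => 0
          | some ⟨i, y⟩ => (P i).d y + 1
        r := none
        dr := rfl
        dp := by
          rintro (_ | ⟨i, y⟩) h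
          · exact absurd rfl h
          · by_cases hy : y = (P i).r
            · simp [hy, (P i).dr]
            · simp [hy, (P i).dp y hy] }
    have hps : ∀ i y, Q.p (some ⟨i, y⟩) = if y = (P i).r then none else some ⟨i, (P i).p y⟩ :=
      fun _ _ => rfl
    have hr : Q.r = none := rfl
    have hch : ∀ i y, Q.ch (some ⟨i, y⟩) = ((P i).ch y).map
        ((Function.Embedding.sigmaMk i).trans Function.Embedding.some) := by
      intro i y
      ext w
      simp only [mem_ch, Finset.mem_map, Function.Embedding.trans_apply,
        Function.Embedding.sigmaMk_apply, Function.Embedding.some_apply, hr]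
      constructor
      · rintro ⟨hw, hw'⟩
        rcases w with _ | ⟨j, z⟩
        · exact absurd rfl hw
        · rw [hps] at hw'
          split_ifs at hw' with hz
          have h1 := Option.some.inj hw'
          obtain ⟨h2, h3⟩ := Sigma.mk.inj_iff.1 h1
          subst h2
          exact ⟨z, ⟨hz, eq_of_heq h3⟩, rfl⟩
      · rintro ⟨z, ⟨hz, hz'⟩, rfl⟩
        refine ⟨by simp, ?_⟩
        rw [hps, if_neg hz, hz']
    have hch0 : Q.ch none = Finset.univ.image (fun i => some ⟨i, (P i).r⟩) := by
      ext w
      simp only [mem_ch, Finset.mem_image, Finset.mem_univ, true_and, hr]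
      constructor
      · rintro ⟨hw, hw'⟩
        rcases w with _ | ⟨j, z⟩
        · exact absurd rfl hw
        · rw [hps] at hw'
          split_ifs at hw' with hz
          exact ⟨j, by rw [hz]⟩
      · rintro ⟨i, rfl⟩
        exact ⟨by simp, by rw [hps, if_pos rfl]⟩
    have hinj : Function.Injective (fun i => (some ⟨i, (P i).r⟩ : Option (Σ i, X i))) := by
      intro i j h
      exact (Sigma.mk.inj_iff.1 (Option.some.inj h)).1
    have hcode : ∀ i y, Q.code (some ⟨i, y⟩) = (P i).code y := by
      intro i y
      induction y using ind_up (P i) with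
      | h y ih =>
        rw [code_eq, code_eq, hch, Finset.map_val, Multiset.map_map]
        congr 1
        exact Multiset.map_congr rfl fun z hz => ih z hz
    have hlu : (Finset.univ.val.map fun i : Fin l.length => l.get i) = brs u := by
      rw [hl, Fin.univ_val_map, List.ofFn_get]
    have hsum : ∀ f : ℕ → ℕ, ∑ i : Fin l.length, f (l.get i) = ((brs u).map f).sum := by
      intro f
      rw [← hlu, Multiset.map_map]; rfl
    refine ⟨Option (Σ i, X i), inferInstance, Q, ?_, ?_, ?_⟩
    · rw [code_eq, hr, hch0, Finset.image_val_of_injOn hinj.injOn, Multiset.map_map,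
        Equiv.symm_apply_eq, ← hlu]
      refine Multiset.map_congr rfl fun i _ => ?_
      rw [Function.comp_apply, hcode, hP1]
    · rw [Fintype.card_option, Fintype.card_sigma, sz_eq, ← hsum, add_comm]
      congr 1
      exact Finset.sum_congr rfl fun i _ => hP2 i
    · have hcl : ∀ i y, Q.cl (some ⟨i, y⟩) ↔ (P i).cl y := by
        intro i y
        unfold cl
        rw [hch, Finset.map_eq_empty]
      have hcl0 : Q.cl none ↔ brs u = 0 := by
        unfold cl
        rw [hch0, Finset.image_eq_empty, ← Finset.val_eq_zero, ← hlu, Multiset.map_eq_zero]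
      rw [Nat.card_eq_fintype_card, Fintype.card_subtype, lv_eq]
      have hsplit : (Finset.univ.filter fun v => Q.cl v).card =
          (if brs u = 0 then 1 else 0) + ∑ i, Nat.card {v // (P i).cl v} := by
        rw [Finset.card_filter, Fintype.sum_option, Fintype.sum_sigma]
        congr 1
        · simp only [hcl0]
        · refine Finset.sum_congr rfl fun i _ => ?_
          rw [Nat.card_eq_fintype_card, Fintype.card_subtype, Finset.card_filter]
          simp only [hcl]
      rw [hsplit, Finset.sum_congr rfl fun i _ => hP3 i, hsum lv, ← lvb]
      split_ifs with h0
      · simp [lvb, h0]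
      · simp

theorem card_eq_sz (P : PS V) : Fintype.card V = sz (P.code P.r) := by
  obtain ⟨W, hW, Q, h1, h2, h3⟩ := realise (P.code P.r)
  obtain ⟨e, he⟩ := exists_iso P Q h1.symm
  rw [← h2, Fintype.card_congr e]

theorem card_eq_lv (P : PS V) : Nat.card {v // P.cl v} = lv (P.code P.r) := by
  obtain ⟨W, hW, Q, h1, h2, h3⟩ := realise (P.code P.r)
  obtain ⟨e, he, he'⟩ := exists_iso P Q h1.symm
  rw [← h3, card_cl_of_iso P Q e he he']

end PS


/-! ## From graphs to parent structures -/

/-- The parent structure `P` represents the rooted tree `t`. -/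
def RepBy {n : ℕ} (t : RTree n) (P : PS (Fin n)) : Prop :=
  P.r = t.root ∧ ∀ v w, t.adj.Adj v w ↔ (v ≠ P.r ∧ P.p v = w) ∨ (w ≠ P.r ∧ P.p w = v)

theorem exists_closer {V : Type} {G : SimpleGraph V} (hG : G.Connected) (r v : V) (hv : v ≠ r) :
    ∃ w, G.Adj v w ∧ G.dist v r = G.dist w r + 1 := by
  obtain ⟨q, hq⟩ := hG.exists_walk_length_eq_dist v r
  cases q with
  | nil => exact absurd rfl hv
  | @cons _ w _ h q =>
    refine ⟨w, h, ?_⟩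
    rw [SimpleGraph.Walk.length_cons] at hq
    have h1 := SimpleGraph.dist_le q
    have h2 : G.dist v r ≤ G.dist w r + 1 := by
      obtain ⟨q', hq'⟩ := hG.exists_walk_length_eq_dist w r
      have := SimpleGraph.dist_le (SimpleGraph.Walk.cons h q')
      rw [SimpleGraph.Walk.length_cons] at this
      omega
    omega

theorem closer_unique {V : Type} {G : SimpleGraph V} (hG : G.Connected) (hA : G.IsAcyclic)
    (r v w w' : V) (h : G.Adj v w) (h' : G.Adj v w') (hw : G.dist v r = G.dist w r + 1)
    (hw' : G.dist v r = G.dist w' r + 1) : w = w' := by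
  obtain ⟨q, hq⟩ := hG.exists_walk_length_eq_dist w r
  obtain ⟨q', hq'⟩ := hG.exists_walk_length_eq_dist w' r
  have h1 := SimpleGraph.Walk.isPath_of_length_eq_dist (SimpleGraph.Walk.cons h q)
    (by rw [SimpleGraph.Walk.length_cons]; omega)
  have h2 := SimpleGraph.Walk.isPath_of_length_eq_dist (SimpleGraph.Walk.cons h' q')
    (by rw [SimpleGraph.Walk.length_cons]; omega)
  have h3 := (SimpleGraph.isAcyclic_iff_subsingleton_path.1 hA v r).elim ⟨_, h1⟩ ⟨_, h2⟩
  have h4 := congrArg Subtype.val h3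
  have h5 := congrArg SimpleGraph.Walk.snd h4
  simpa using h5

theorem exists_rep {n : ℕ} (t : RTree n) : ∃ P : PS (Fin n), RepBy t P := by
  classical
  have h := exists_closer t.connected t.root
  let f : Fin n → Fin n := fun v => if hv : v ≠ t.root then (h v hv).choose else v
  have hf : ∀ v, v ≠ t.root → t.adj.Adj v (f v) ∧
      t.adj.dist v t.root = t.adj.dist (f v) t.root + 1 := by
    intro v hv
    have : f v = (h v hv).choose := dif_pos hv
    rw [this]
    exact (h v hv).choose_spec
  refine ⟨⟨f, fun v => t.adj.dist v t.root, t.root, by simp, fun w hw => (hf w hw).2⟩, rfl, ?_⟩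
  have key : ∀ v w, t.adj.Adj v w → t.adj.dist v t.root = t.adj.dist w t.root + 1 →
      v ≠ t.root ∧ f v = w := by
    intro v w hvw hd
    have hv : v ≠ t.root := by
      rintro rfl
      simp at hd
    exact ⟨hv, closer_unique t.connected t.acyclic t.root v _ _ (hf v hv).1 hvw (hf v hv).2 hd⟩
  intro v w
  constructor
  · intro hvw
    have := (SimpleGraph.IsTree.mk t.connected t.acyclic).dist_eq_dist_add_one_of_adj t.root hvw
    rw [SimpleGraph.dist_comm, SimpleGraph.dist_comm (u := t.root) (v := w)] at this
    rcases this with h1 | h1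
    · exact Or.inl (key v w hvw h1)
    · exact Or.inr (key w v hvw.symm h1)
  · rintro (⟨h1, h2⟩ | ⟨h1, h2⟩)
    · have := (hf v h1).1
      rw [← h2]; exact this
    · have := (hf w h1).1
      rw [← h2]; exact this.symm

theorem PS.p_ne {V : Type} (P : PS V) {v : V} (hv : v ≠ P.r) : P.p v ≠ v := by
  intro h
  have := P.dp v hv
  rw [h] at this
  omega

theorem exists_rtree {n : ℕ} (P : PS (Fin n)) : ∃ t : RTree n, RepBy t P := by
  classical
  let G : SimpleGraph (Fin n) :=
    { Adj := fun v w => (v ≠ P.r ∧ P.p v = w) ∨ (w ≠ P.r ∧ P.p w = v)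
      symm := ⟨fun v w h => h.symm⟩
      loopless := ⟨fun v h => by
        rcases h with h | h <;> exact P.p_ne h.1 h.2⟩ }
  have hadj : ∀ v w, G.Adj v w ↔ (v ≠ P.r ∧ P.p v = w) ∨ (w ≠ P.r ∧ P.p w = v) := fun _ _ => Iff.rfl
  have hreach : ∀ v, G.Reachable v P.r := by
    intro v
    induction v using PS.ind_down P with
    | h0 => exact SimpleGraph.Reachable.refl _
    | h v hv ih =>
      have h1 : G.Adj v (P.p v) := (hadj _ _).2 (Or.inl ⟨hv, rfl⟩)
      exact h1.reachable.trans ih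
  have hconn : G.Connected := by
    have : Nonempty (Fin n) := ⟨P.r⟩
    exact ⟨fun v w => (hreach v).trans (hreach w).symm⟩
  have hcard : Nat.card G.edgeSet + 1 = Nat.card (Fin n) := by
    refine le_antisymm ?_ hconn.card_vert_le_card_edgeSet_add_one
    have hsub : G.edgeSet ⊆ ((Finset.univ.erase P.r).image fun v => s(v, P.p v) : Finset _) := by
      intro e he
      induction e using Sym2.ind with
      | _ v w =>
        rw [SimpleGraph.mem_edgeSet, hadj] at he
        rw [Finset.mem_coe, Finset.mem_image]
        rcases he with ⟨h1, h2⟩ | ⟨h1, h2⟩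
        · exact ⟨v, by simp [h1], by rw [h2]⟩
        · exact ⟨w, by simp [h1], by rw [h2, Sym2.eq_swap]⟩
    have h1 : Nat.card G.edgeSet ≤ ((Finset.univ.erase P.r).image fun v => s(v, P.p v)).card := by
      have := Set.ncard_le_ncard hsub (Finset.finite_toSet _)
      rw [Set.ncard_coe_finset] at this
      exact this
    have h2 := Finset.card_image_le (s := Finset.univ.erase P.r) (f := fun v => s(v, P.p v))
    have h3 : (Finset.univ.erase P.r).card + 1 = n := by
      rw [Finset.card_erase_add_one (Finset.mem_univ _)]; simp
    rw [Nat.card_fin]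
    omega
  have hT := SimpleGraph.isTree_iff_connected_and_card.2 ⟨hconn, hcard⟩
  exact ⟨⟨G, hT.connected, hT.isAcyclic, P.r⟩, rfl, hadj⟩

theorem iso_iff {n : ℕ} {t t' : RTree n} {P P' : PS (Fin n)} (h : RepBy t P) (h' : RepBy t' P') :
    (∃ e : t.adj ≃g t'.adj, e t.root = t'.root) ↔ P.code P.r = P'.code P'.r := by
  constructor
  · rintro ⟨e, he⟩
    have hr : e P.r = P'.r := by rw [h.1, h'.1, he]
    have hp : ∀ v, v ≠ P.r → P'.p (e v) = e (P.p v) := by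
      intro v
      induction v using PS.ind_down P with
      | h0 => intro h; exact absurd rfl h
      | h v hv ih =>
        intro _
        have h1 : t.adj.Adj v (P.p v) := (h.2 _ _).2 (Or.inl ⟨hv, rfl⟩)
        rcases (h'.2 _ _).1 (e.map_adj_iff.2 h1) with h2 | h2
        · exact h2.2
        · exfalso
          have h3 : P.p v ≠ P.r := by
            intro h4
            rw [h4] at h2
            exact h2.1 hr
          rw [ih h3] at h2
          have h5 := e.injective h2.2
          have h6 := P.dp v hv
          have h7 := P.dp _ h3
          rw [h5] at h7
          omega
    rw [← hr]
    exact PS.code_of_iso P P' e.toEquiv hr hp P.r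
  · intro hc
    obtain ⟨e, hr, hp⟩ := PS.exists_iso P P' hc
    refine ⟨⟨e, ?_⟩, ?_⟩
    · intro v w
      rw [h.2, h'.2, ← hr]
      have key : ∀ v w, (e v ≠ e P.r ∧ P'.p (e v) = e w) ↔ (v ≠ P.r ∧ P.p v = w) := by
        intro v w
        rw [e.injective.ne_iff]
        constructor
        · rintro ⟨a, b⟩
          rw [hp v a] at b
          exact ⟨a, e.injective b⟩
        · rintro ⟨a, b⟩
          rw [hp v a, b]
          exact ⟨a, rfl⟩
      rw [key, key]
    · change e t.root = t'.root
      rw [← h.1, ← h'.1, hr]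

theorem leaf_iff {n : ℕ} {t : RTree n} {P : PS (Fin n)} (h : RepBy t P) (v : Fin n) :
    IsLeafV t v ↔ P.cl v := by
  classical
  unfold IsLeafV PS.cl
  by_cases hn : n = 1
  · subst hn
    refine iff_of_true (Or.inl rfl) ?_
    rw [Finset.eq_empty_iff_forall_notMem]
    intro w hw
    exact (PS.mem_ch.1 hw).1 (Subsingleton.elim _ _)
  · simp only [hn, false_or]
    rw [← h.1]
    by_cases hv : v = P.r
    · refine iff_of_false (fun h => h.2 hv) ?_
      intro hc
      rw [hv] at hc
      have hall : ∀ w, w = P.r := by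
        intro w
        induction w using PS.ind_down P with
        | h0 => rfl
        | h w hw ih =>
          exfalso
          have : w ∈ P.ch P.r := PS.mem_ch.2 ⟨hw, ih⟩
          rw [hc] at this
          simp at this
      have h1 : Fintype.card (Fin n) ≤ 1 :=
        Fintype.card_le_one_iff.2 fun a b => (hall a).trans (hall b).symm
      rw [Fintype.card_fin] at h1
      have := P.r.pos
      omega
    · have hnb : t.adj.neighborSet v = (insert (P.p v) (P.ch v) : Finset (Fin n)) := by
        ext w
        rw [SimpleGraph.mem_neighborSet, h.2, Finset.coe_insert, Set.mem_insert_iff, Finset.mem_coe,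
          PS.mem_ch]
        simp only [ne_eq, hv, not_false_eq_true, true_and]
        rw [eq_comm]
      have hni : P.p v ∉ P.ch v := by
        intro hm
        have h1 := PS.d_ch hm
        have h2 := P.dp v hv
        omega
      rw [hnb, Set.ncard_coe_finset, Finset.card_insert_of_notMem hni]
      simp [hv]

theorem numLeaves_eq {n : ℕ} {t : RTree n} {P : PS (Fin n)} (h : RepBy t P) :
    numLeaves t = lv (P.code P.r) := by
  rw [← PS.card_eq_lv]
  exact Nat.card_congr (Equiv.subtypeEquivRight (leaf_iff h))

/-- Transport of a parent structure along an equivalence. -/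
theorem realise_fin (u : ℕ) : ∃ P : PS (Fin (sz u)), P.code P.r = u := by
  obtain ⟨V, hV, P, h1, h2, _⟩ := PS.realise u
  let e : V ≃ Fin (sz u) := Fintype.equivFinOfCardEq h2
  let Q : PS (Fin (sz u)) :=
    { p := fun x => e (P.p (e.symm x))
      d := fun x => P.d (e.symm x)
      r := e P.r
      dr := by simp [P.dr]
      dp := by
        intro w hw
        have : e.symm w ≠ P.r := by
          intro h; apply hw; rw [← h]; simp
        simp [P.dp _ this] }
  refine ⟨Q, ?_⟩
  have := PS.code_of_iso P Q e rfl (by intro v _; simp [Q]) P.r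
  exact this.symm.trans h1

/-- The code of a rooted tree. -/
noncomputable def tcode {n : ℕ} (t : RTree n) : ℕ :=
  (exists_rep t).choose.code (exists_rep t).choose.r

theorem sz_tcode {n : ℕ} (t : RTree n) : sz (tcode t) = n := by
  unfold tcode
  rw [← PS.card_eq_sz, Fintype.card_fin]

theorem lv_tcode {n : ℕ} (t : RTree n) : lv (tcode t) = numLeaves t :=
  (numLeaves_eq (exists_rep t).choose_spec).symm

theorem tcode_eq_iff {n : ℕ} (t t' : RTree n) : (treeSetoid n).r t t' ↔ tcode t = tcode t' :=
  iso_iff (exists_rep t).choose_spec (exists_rep t').choose_spec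

theorem tcode_surj (u : ℕ) : ∃ t : RTree (sz u), tcode t = u := by
  obtain ⟨P, hP⟩ := realise_fin u
  obtain ⟨t, ht⟩ := exists_rtree P
  refine ⟨t, ?_⟩
  exact ((iso_iff (exists_rep t).choose_spec ht).1 ⟨RelIso.refl _, rfl⟩).trans hP

theorem finite_sz (n : ℕ) : {u | sz u = n}.Finite := by
  have hR : Finite (RTree n) := by
    refine Finite.of_injective (β := SimpleGraph (Fin n) × Fin n) (fun t => (t.adj, t.root)) ?_
    rintro ⟨a, _, _, b⟩ ⟨a', _, _, b'⟩ h
    simp only [Prod.mk.injEq] at h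
    obtain ⟨rfl, rfl⟩ := h
    rfl
  refine (Set.finite_range (tcode : RTree n → ℕ)).subset ?_
  rintro u rfl
  exact tcode_surj u

theorem card_quotient (n : ℕ) (Q : ℕ → Prop) :
    Nat.card (Quotient (Setoid.comap
      (Subtype.val : {t : RTree n // Q (numLeaves t)} → RTree n) (treeSetoid n))) =
    Nat.card {u // sz u = n ∧ Q (lv u)} := by
  refine Nat.card_congr (Equiv.ofBijective (Quotient.lift (fun t => ⟨tcode t.1, sz_tcode t.1, by
    rw [lv_tcode]; exact t.2⟩) ?_) ⟨?_, ?_⟩)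
  · intro a b hab
    exact Subtype.ext ((tcode_eq_iff a.1 b.1).1 hab)
  · intro a b
    induction a using Quotient.inductionOn with
    | h a =>
    induction b using Quotient.inductionOn with
    | h b =>
    intro hab
    exact Quotient.sound ((tcode_eq_iff a.1 b.1).2 (congrArg Subtype.val hab))
  · rintro ⟨u, rfl, hu⟩
    obtain ⟨t, ht⟩ := tcode_surj u
    refine ⟨Quotient.mk _ ⟨t, ?_⟩, ?_⟩
    · rw [← lv_tcode, ht]; exact hu
    · exact Subtype.ext ht


/-! ## Basic combinatorics of coded trees -/

/-- The finite set of trees with `n` vertices. -/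
noncomputable def FT (n : ℕ) : Finset ℕ := (finite_sz n).toFinset

theorem mem_FT {n u : ℕ} : u ∈ FT n ↔ sz u = n := by simp [FT]

theorem sz_mk (M : Multiset ℕ) : sz (brs.symm M) = 1 + (M.map sz).sum := by
  rw [sz_eq, Equiv.apply_symm_apply]

theorem lvb_mk (M : Multiset ℕ) : lvb (brs.symm M) = (M.map lv).sum := by
  rw [lvb, Equiv.apply_symm_apply]

theorem lv_mk {M : Multiset ℕ} (h : M ≠ 0) : lv (brs.symm M) = (M.map lv).sum := by
  rw [lv_eq, Equiv.apply_symm_apply, if_neg h, lvb_mk]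

/-- The one-vertex tree. -/
noncomputable def tleaf : ℕ := brs.symm 0

theorem sz_tleaf : sz tleaf = 1 := by simp [tleaf, sz_mk]

theorem lv_tleaf : lv tleaf = 1 := by rw [tleaf, lv_eq]; simp

theorem sz_pos (u : ℕ) : 1 ≤ sz u := by rw [sz_eq]; omega

theorem sum_sz_ge (M : Multiset ℕ) : Multiset.card M ≤ (M.map sz).sum := by
  induction M using Multiset.induction_on with
  | empty => simp
  | cons a s ih =>
    have := sz_pos a
    simp only [Multiset.card_cons, Multiset.map_cons, Multiset.sum_cons]; omega

theorem brs_eq_zero {u : ℕ} : brs u = 0 ↔ sz u = 1 := by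
  constructor
  · intro h; rw [sz_eq, h]; simp
  · intro h
    rw [sz_eq] at h
    have := sum_sz_ge (brs u)
    rw [← Multiset.card_eq_zero]; omega

theorem eq_tleaf {u : ℕ} (h : sz u = 1) : u = tleaf := by
  rw [tleaf, Equiv.eq_symm_apply, brs_eq_zero, h]

theorem lv_eq_lvb {u : ℕ} (h : 2 ≤ sz u) : lv u = lvb u := by
  rw [lv_eq, if_neg]
  rw [brs_eq_zero]; omega

theorem lvb_tleaf : lvb tleaf = 0 := by simp [tleaf, lvb_mk]

theorem lvb_le_lv (u : ℕ) : lvb u ≤ lv u := by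
  rcases (sz_pos u).eq_or_lt with h | h
  · rw [eq_tleaf h.symm, lvb_tleaf]; omega
  · exact (lv_eq_lvb h).ge

theorem lv_pos (u : ℕ) : 1 ≤ lv u := by
  induction u using U_ind with
  | h u ih =>
    rcases (sz_pos u).eq_or_lt with h | h
    · rw [eq_tleaf h.symm, lv_tleaf]
    · rw [lv_eq_lvb h, lvb]
      have h0 : brs u ≠ 0 := by rw [Ne, brs_eq_zero]; omega
      obtain ⟨c, hc⟩ := Multiset.exists_mem_of_ne_zero h0
      exact (ih c hc).trans (Multiset.single_le_sum (by simp) _ (Multiset.mem_map_of_mem lv hc))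

theorem lv_le_sz (u : ℕ) : lv u ≤ sz u := by
  induction u using U_ind with
  | h u ih =>
    rcases (sz_pos u).eq_or_lt with h | h
    · rw [eq_tleaf h.symm, lv_tleaf, sz_tleaf]
    · rw [lv_eq_lvb h, lvb, sz_eq]
      have := Multiset.sum_map_le_sum_map (s := brs u) lv sz ih
      omega

theorem sz_lt_of_mem {c u : ℕ} (h : c ∈ brs u) : sz c < sz u := by
  rw [sz_eq u]
  have := Multiset.single_le_sum (s := (brs u).map sz) (by simp) _ (Multiset.mem_map_of_mem sz h)
  omega

theorem FT_zero : FT 0 = ∅ := by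
  rw [Finset.eq_empty_iff_forall_notMem]
  intro u hu
  have := sz_pos u
  rw [mem_FT] at hu; omega

theorem FT_one : FT 1 = {tleaf} := by
  ext u
  rw [mem_FT, Finset.mem_singleton]
  constructor
  · exact eq_tleaf
  · rintro rfl; exact sz_tleaf

/-- Attach the tree `c` as a new branch at the root of `u`. -/
noncomputable def att (u c : ℕ) : ℕ := brs.symm (c ::ₘ brs u)

theorem sz_att (u c : ℕ) : sz (att u c) = sz u + sz c := by
  rw [att, sz_mk, Multiset.map_cons, Multiset.sum_cons, sz_eq u]; omega

theorem lv_att (u c : ℕ) : lv (att u c) = lvb u + lv c := by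
  rw [att, lv_mk (Multiset.cons_ne_zero), Multiset.map_cons, Multiset.sum_cons, lvb]; omega

theorem att_inj {u c u' c' : ℕ} (hu : sz u = sz u') (hc : sz c = sz c') (h : sz u ≤ sz c)
    (he : att u c = att u' c') : u = u' ∧ c = c' := by
  have h1 := brs.symm.injective he
  rcases Multiset.cons_eq_cons.1 h1 with ⟨a, b⟩ | ⟨_, cs, a, b⟩
  · exact ⟨brs.injective b, a⟩
  · exfalso
    have : c' ∈ brs u := by rw [a]; exact Multiset.mem_cons_self _ _
    have := sz_lt_of_mem this
    omega

theorem exists_glue (i j : ℕ) : ∃ G : ℕ × ℕ → ℕ,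
    (∀ x ∈ FT i ×ˢ FT j, G x ∈ FT (i + j) ∧ lvb x.1 + lvb x.2 ≤ lv (G x)) ∧
    Set.InjOn G (FT i ×ˢ FT j : Finset (ℕ × ℕ)) := by
  rcases le_total i j with h | h
  · refine ⟨fun x => att x.1 x.2, ?_, ?_⟩
    · rintro ⟨a, b⟩ hx
      simp only [Finset.mem_product, mem_FT] at hx ⊢
      have := lvb_le_lv b
      rw [sz_att, lv_att]; omega
    · rintro ⟨a, b⟩ hx ⟨a', b'⟩ hx' he
      simp only [Finset.mem_coe, Finset.mem_product, mem_FT] at hx hx' he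
      obtain ⟨rfl, rfl⟩ := att_inj (by omega) (by omega) (by omega) he
      rfl
  · refine ⟨fun x => att x.2 x.1, ?_, ?_⟩
    · rintro ⟨a, b⟩ hx
      simp only [Finset.mem_product, mem_FT] at hx ⊢
      have := lvb_le_lv a
      rw [sz_att, lv_att]; omega
    · rintro ⟨a, b⟩ hx ⟨a', b'⟩ hx' he
      simp only [Finset.mem_coe, Finset.mem_product, mem_FT] at hx hx' he
      obtain ⟨rfl, rfl⟩ := att_inj (by omega) (by omega) (by omega) he
      rfl

/-- Generating polynomial by the number of leaves. -/
noncomputable def gA (n : ℕ) (v : ℝ) : ℝ := ∑ u ∈ FT n, v ^ lv u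

/-- Generating polynomial by the number of leaves in the branches. -/
noncomputable def gO (n : ℕ) (v : ℝ) : ℝ := ∑ u ∈ FT n, v ^ lvb u

/-- The number of trees. -/
noncomputable def na (n : ℕ) : ℝ := ((FT n).card : ℝ)

theorem gO_one (n : ℕ) : gO n 1 = na n := by simp [gO, na]
theorem gA_one (n : ℕ) : gA n 1 = na n := by simp [gA, na]

theorem gO_eq {n : ℕ} (hn : 2 ≤ n) (v : ℝ) : gO n v = gA n v := by
  refine Finset.sum_congr rfl fun u hu => ?_
  rw [mem_FT] at hu
  rw [lv_eq_lvb (by omega)]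

theorem gO_zero (v : ℝ) : gO 0 v = 0 := by simp [gO, FT_zero]
theorem gO_1 (v : ℝ) : gO 1 v = 1 := by simp [gO, FT_one, lvb_tleaf]
theorem gA_1 (v : ℝ) : gA 1 v = v := by simp [gA, FT_one, lv_tleaf]

theorem gA_nonneg (n : ℕ) {v : ℝ} (hv : 1 ≤ v) : 0 ≤ gA n v :=
  Finset.sum_nonneg fun _ _ => by positivity

theorem gO_nonneg (n : ℕ) {v : ℝ} (hv : 1 ≤ v) : 0 ≤ gO n v :=
  Finset.sum_nonneg fun _ _ => by positivity

theorem na_nonneg (n : ℕ) : 0 ≤ na n := Nat.cast_nonneg _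

theorem na_mul_gO (i j : ℕ) {v : ℝ} (hv : 1 ≤ v) : na j * gO i v ≤ gA (i + j) v := by
  obtain ⟨G, h1, h2⟩ := exists_glue i j
  calc na j * gO i v = ∑ x ∈ FT i ×ˢ FT j, v ^ lvb x.1 := by
        rw [Finset.sum_product, gO, Finset.mul_sum]
        simp [na]
    _ ≤ ∑ x ∈ FT i ×ˢ FT j, v ^ lv (G x) := by
        refine Finset.sum_le_sum fun x hx => ?_
        exact pow_le_pow_right₀ hv (by have := (h1 x hx).2; omega)
    _ = ∑ u ∈ (FT i ×ˢ FT j).image G, v ^ lv u := by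
        rw [Finset.sum_image h2]
    _ ≤ gA (i + j) v := by
        refine Finset.sum_le_sum_of_subset_of_nonneg ?_ fun _ _ _ => by positivity
        intro u hu
        obtain ⟨x, hx, rfl⟩ := Finset.mem_image.1 hu
        exact (h1 x hx).1

theorem na_mul (i j : ℕ) : na i * na j ≤ na (i + j) := by
  have := na_mul_gO i j (v := 1) le_rfl
  rw [gO_one, gA_one] at this
  linarith

theorem gA_succ {n : ℕ} (hn : 2 ≤ n) {v : ℝ} (hv : 1 ≤ v) : (1 + v) * gA n v ≤ gA (n + 1) v := by
  have hi1 : Set.InjOn (fun u => att tleaf u) (FT n : Finset ℕ) := by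
    intro a ha b hb h
    simp only [Finset.mem_coe, mem_FT] at ha hb
    exact (att_inj rfl (by omega) (by rw [sz_tleaf]; omega) h).2
  have hi2 : Set.InjOn (fun u => att u tleaf) (FT n : Finset ℕ) := by
    intro a ha b hb h
    have h1 := brs.symm.injective h
    exact brs.injective ((Multiset.cons_inj_right _).1 h1)
  have hd : Disjoint ((FT n).image fun u => att tleaf u) ((FT n).image fun u => att u tleaf) := by
    rw [Finset.disjoint_left]
    intro x hx hx'
    obtain ⟨a, ha, rfl⟩ := Finset.mem_image.1 hx
    obtain ⟨b, hb, h⟩ := Finset.mem_image.1 hx'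
    have h1 := congrArg Multiset.card (brs.symm.injective h)
    have h2 : brs tleaf = 0 := brs_eq_zero.2 sz_tleaf
    rw [h2] at h1
    simp only [Multiset.card_cons, Multiset.card_zero, Nat.add_eq_right, Multiset.card_eq_zero,
      brs_eq_zero] at h1
    rw [mem_FT] at hb
    omega
  calc (1 + v) * gA n v = ∑ u ∈ FT n, v ^ lv (att tleaf u) + ∑ u ∈ FT n, v ^ lv (att u tleaf) := by
        rw [add_mul, one_mul, gA, Finset.mul_sum]
        congr 1
        · refine Finset.sum_congr rfl fun u _ => ?_
          rw [lv_att, lvb_tleaf, zero_add]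
        · refine Finset.sum_congr rfl fun u hu => ?_
          rw [mem_FT] at hu
          rw [lv_att, lv_tleaf, lv_eq_lvb (by omega), pow_succ]; ring
    _ = ∑ u ∈ ((FT n).image fun u => att tleaf u) ∪ ((FT n).image fun u => att u tleaf), v ^ lv u := by
        rw [Finset.sum_union hd, Finset.sum_image hi1, Finset.sum_image hi2]
    _ ≤ gA (n + 1) v := by
        refine Finset.sum_le_sum_of_subset_of_nonneg ?_ fun _ _ _ => by positivity
        intro u hu
        rcases Finset.mem_union.1 hu with hu | hu
        · obtain ⟨x, hx, rfl⟩ := Finset.mem_image.1 hu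
          rw [mem_FT] at hx ⊢
          rw [sz_att, sz_tleaf]; omega
        · obtain ⟨x, hx, rfl⟩ := Finset.mem_image.1 hu
          rw [mem_FT] at hx ⊢
          rw [sz_att, sz_tleaf]; omega

theorem gA_two_ge {v : ℝ} (hv : 1 ≤ v) : v ≤ gA 2 v := by
  have h : att tleaf tleaf ∈ FT 2 := by rw [mem_FT, sz_att, sz_tleaf]
  have := Finset.single_le_sum (f := fun u => v ^ lv u) (fun _ _ => by positivity) h
  simp only [lv_att, lvb_tleaf, lv_tleaf, zero_add, pow_one] at this
  exact this

theorem na_ge (m : ℕ) : (2 : ℝ) ^ m ≤ na (m + 2) := by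
  induction m with
  | zero => simpa [gA_one] using gA_two_ge (v := 1) le_rfl
  | succ m ih =>
    have := gA_succ (n := m + 2) (by omega) (v := 1) le_rfl
    rw [gA_one, gA_one] at this
    rw [pow_succ, show m + 1 + 2 = m + 2 + 1 by ring]
    linarith

theorem na_pos {m : ℕ} (hm : 1 ≤ m) : 0 < na m := by
  rcases hm.eq_or_lt with h | h
  · rw [← h]; simp [na, FT_one]
  · obtain ⟨k, rfl⟩ := Nat.exists_eq_add_of_le' h
    exact lt_of_lt_of_le (by positivity) (na_ge k)

theorem sum_gO_le (n : ℕ) {v : ℝ} (hv : 1 ≤ v) :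
    ∑ l ∈ Finset.range (n + 1), v ^ (l + 1) * gO (n + 1 - l) v ≤ v * gA (n + 2) v := by
  induction n with
  | zero =>
    simp [gO_1]
    have := gA_two_ge hv
    nlinarith
  | succ n ih =>
    rw [Finset.sum_range_succ']
    have h1 : ∑ k ∈ Finset.range (n + 1), v ^ (k + 1 + 1) * gO (n + 1 + 1 - (k + 1)) v
        = v * ∑ l ∈ Finset.range (n + 1), v ^ (l + 1) * gO (n + 1 - l) v := by
      rw [Finset.mul_sum]
      refine Finset.sum_congr rfl fun k _ => ?_
      rw [Nat.add_sub_add_right, pow_succ v (k + 1)]; ring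
    rw [h1]
    have h2 := gA_succ (n := n + 2) (by omega) hv
    simp only [zero_add, pow_one, Nat.sub_zero]
    rw [gO_eq (by omega)]
    have h3 := mul_le_mul_of_nonneg_left ih (by linarith : (0:ℝ) ≤ v)
    have h4 := mul_le_mul_of_nonneg_left h2 (by linarith : (0:ℝ) ≤ v)
    rw [show n + 1 + 2 = n + 2 + 1 by ring]
    rw [show n + 1 + 1 = n + 2 by ring]
    nlinarith


/-! ## The recurrence -/

/-- `∑ (lv τ - θ m) w ^ lv τ` over the trees with `m` vertices. -/
noncomputable def gD (θ : ℝ) (m : ℕ) (w : ℝ) : ℝ := ∑ τ ∈ FT m, ((lv τ : ℝ) - θ * m) * w ^ lv τ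

theorem sum_count (n m l : ℕ) {τ : ℕ} (hτ : sz τ = m) (hl : 1 ≤ l) (v : ℝ) :
    ∑ u ∈ (FT n).filter (fun u => l ≤ (brs u).count τ), v ^ lv u =
      v ^ (l * lv τ) * gO (n - l * m) v := by
  rw [gO, Finset.mul_sum]
  refine Finset.sum_bij' (fun u _ => brs.symm (brs u - Multiset.replicate l τ))
    (fun w _ => brs.symm (Multiset.replicate l τ + brs w)) ?_ ?_ ?_ ?_ ?_
  · intro u hu
    rw [Finset.mem_filter, mem_FT, Multiset.le_count_iff_replicate_le] at hu
    rw [mem_FT, sz_mk]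
    have h1 := sz_eq u
    rw [← add_tsub_cancel_of_le hu.2] at h1
    simp only [Multiset.map_add, Multiset.map_replicate, Multiset.sum_add, Multiset.sum_replicate,
      smul_eq_mul, hτ] at h1
    omega
  · intro w hw
    have h0 := sz_pos w
    have h1 := sz_eq w
    rw [mem_FT] at hw
    rw [Finset.mem_filter, mem_FT, sz_mk, Multiset.le_count_iff_replicate_le,
      Equiv.apply_symm_apply]
    refine ⟨?_, Multiset.le_add_right _ _⟩
    simp only [Multiset.map_add, Multiset.map_replicate, Multiset.sum_add, Multiset.sum_replicate,
      smul_eq_mul, hτ]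
    omega
  · intro u hu
    rw [Finset.mem_filter, mem_FT, Multiset.le_count_iff_replicate_le] at hu
    rw [Equiv.apply_symm_apply, add_tsub_cancel_of_le hu.2, Equiv.symm_apply_apply]
  · intro w hw
    rw [Equiv.apply_symm_apply, add_tsub_cancel_left, Equiv.symm_apply_apply]
  · intro u hu
    rw [Finset.mem_filter, mem_FT, Multiset.le_count_iff_replicate_le] at hu
    rw [← pow_add, lvb_mk]
    have hne : brs u ≠ 0 := by
      intro h0
      have h1 := Multiset.card_le_card hu.2
      rw [h0] at h1
      simp at h1
      omega
    congr 1
    rw [lv_eq, if_neg hne, lvb]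
    conv_lhs => rw [← add_tsub_cancel_of_le hu.2]
    simp

theorem count_le_sz (u τ : ℕ) : (brs u).count τ < sz u := by
  have h1 := Multiset.count_le_card τ (brs u)
  have h2 := sum_sz_ge (brs u)
  rw [sz_eq]; omega

theorem sum_range_ite (n c : ℕ) (h : c ≤ n) (x : ℝ) :
    ∑ l ∈ Finset.range n, (if l + 1 ≤ c then x else 0) = c * x := by
  rw [← Finset.sum_filter]
  have : (Finset.range n).filter (fun l => l + 1 ≤ c) = Finset.range c := by
    ext l; simp; omega
  rw [this]; simp

theorem sum_brs (n u : ℕ) (hu : sz u = n) (f : ℕ → ℝ) :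
    ((brs u).map f).sum = ∑ m ∈ Finset.range n, ∑ τ ∈ FT m, ∑ l ∈ Finset.range n,
      (if l + 1 ≤ (brs u).count τ then f τ else 0) := by
  classical
  have h1 : ∀ τ, ∑ l ∈ Finset.range n, (if l + 1 ≤ (brs u).count τ then f τ else 0)
      = (brs u).count τ * f τ := fun τ =>
    sum_range_ite n _ (by have := count_le_sz u τ; omega) _
  simp_rw [h1]
  rw [← Finset.sum_biUnion]
  · rw [Finset.sum_multiset_map_count]
    refine (Finset.sum_subset (s₂ := (Finset.range n).biUnion FT) ?_ ?_).trans ?_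
    · intro c hc
      rw [Multiset.mem_toFinset] at hc
      have := sz_lt_of_mem hc
      rw [Finset.mem_biUnion]
      exact ⟨sz c, by rw [Finset.mem_range]; omega, mem_FT.2 rfl⟩
    · intro c _ hc
      rw [Multiset.mem_toFinset] at hc
      rw [Multiset.count_eq_zero_of_notMem hc, zero_smul]
    · refine Finset.sum_congr rfl fun c _ => ?_
      rw [nsmul_eq_mul]
  · intro a _ b _ hab
    rw [Function.onFun, Finset.disjoint_left]
    intro x hx hx'
    rw [mem_FT] at hx hx'
    exact hab (hx.symm.trans hx')

theorem f_eq {u : ℕ} (hu : 2 ≤ sz u) (θ : ℝ) :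
    (lv u : ℝ) - θ * sz u = -θ + ((brs u).map fun c => (lv c : ℝ) - θ * sz c).sum := by
  rw [lv_eq_lvb hu, lvb, sz_eq u]
  generalize brs u = M
  induction M using Multiset.induction_on with
  | empty => simp
  | cons a s ih =>
    simp only [Multiset.map_cons, Multiset.sum_cons]
    push_cast at ih ⊢
    linarith

theorem gD_rec {n : ℕ} (hn : 2 ≤ n) (θ v : ℝ) :
    gD θ n v = -θ * gA n v + ∑ m ∈ Finset.range n, ∑ l ∈ Finset.range n,
      gD θ m (v ^ (l + 1)) * gO (n - (l + 1) * m) v := by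
  have h1 : gD θ n v = ∑ u ∈ FT n, (-θ + ∑ m ∈ Finset.range n, ∑ τ ∈ FT m, ∑ l ∈ Finset.range n,
      (if l + 1 ≤ (brs u).count τ then (lv τ : ℝ) - θ * sz τ else 0)) * v ^ lv u := by
    refine Finset.sum_congr rfl fun u hu => ?_
    rw [mem_FT] at hu
    rw [← sum_brs n u hu (fun τ => (lv τ : ℝ) - θ * sz τ), ← f_eq (by omega), hu]
  rw [h1]
  simp_rw [add_mul]
  rw [Finset.sum_add_distrib, ← Finset.mul_sum]
  congr 1
  simp_rw [Finset.sum_mul]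
  rw [Finset.sum_comm]
  refine Finset.sum_congr rfl fun m _ => ?_
  rw [Finset.sum_comm]
  simp_rw [gD, Finset.sum_mul]
  rw [Finset.sum_comm (s := Finset.range n)]
  refine Finset.sum_congr rfl fun τ hτ => ?_
  rw [mem_FT] at hτ
  rw [Finset.sum_comm]
  refine Finset.sum_congr rfl fun l _ => ?_
  rw [show l * m + 1 * m = (l + 1) * m by ring, mul_assoc, ← pow_mul, ← sum_count n m (l + 1) hτ (by omega) v, Finset.mul_sum,
    Finset.sum_filter]
  refine Finset.sum_congr rfl fun u _ => ?_
  rw [hτ]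
  split_ifs <;> ring


/-! ## Exponential tilting estimate -/

theorem gD_le {θ : ℝ} (hθ : 0 ≤ θ) (m : ℕ) {w : ℝ} (hw : 1 ≤ w) :
    gD θ m w ≤ gD θ m 1 + m * na m * (w ^ m - 1) := by
  have h : m * na m * (w ^ m - 1) = ∑ τ ∈ FT m, (m : ℝ) * (w ^ m - 1) := by
    rw [Finset.sum_const, nsmul_eq_mul, na]; ring
  rw [h, gD, gD, ← Finset.sum_add_distrib]
  refine Finset.sum_le_sum fun τ hτ => ?_
  rw [mem_FT] at hτ
  have h1 : lv τ ≤ m := hτ ▸ lv_le_sz τ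
  have h2 : (lv τ : ℝ) ≤ m := by exact_mod_cast h1
  have h3 : w ^ lv τ ≤ w ^ m := pow_le_pow_right₀ hw h1
  have h4 : 1 ≤ w ^ lv τ := one_le_pow₀ hw
  have h5 : 0 ≤ θ * m := by positivity
  rw [one_pow]
  have h6 : ((lv τ : ℝ) - θ * m) * (w ^ lv τ - 1) ≤ m * (w ^ m - 1) :=
    mul_le_mul (by linarith) (by linarith) (by linarith) (by positivity)
  linarith

theorem gD_zero (θ w : ℝ) : gD θ 0 w = 0 := by simp [gD, FT_zero]

theorem gD_1 (θ w : ℝ) : gD θ 1 w = (1 - θ) * w := by simp [gD, FT_one, lv_tleaf]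

theorem gD_split (k : ℕ) {θ v : ℝ} (hθ : θ ≤ 1) (hv : 1 ≤ v) :
    gD θ (k + 2) v ≤ (-θ + (1 - θ) * v) * gA (k + 2) v +
      ∑ m ∈ Finset.range k, ∑ l ∈ Finset.range (k + 2),
        gD θ (m + 2) (v ^ (l + 1)) * gO (k + 2 - (l + 1) * (m + 2)) v := by
  rw [gD_rec (by omega), Finset.sum_range_succ', Finset.sum_range_succ']
  simp only [gD_zero, zero_mul, Finset.sum_const_zero, add_zero, zero_add, gD_1, mul_one]
  have h1 : ∑ l ∈ Finset.range (k + 2), (1 - θ) * v ^ (l + 1) * gO (k + 2 - (l + 1)) v =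
      (1 - θ) * ∑ l ∈ Finset.range (k + 1), v ^ (l + 1) * gO (k + 1 - l) v := by
    rw [Finset.sum_range_succ, Finset.mul_sum]
    rw [show k + 2 - (k + 1 + 1) = 0 by omega, gO_zero, mul_zero, add_zero]
    refine Finset.sum_congr rfl fun l _ => ?_
    rw [show k + 2 - (l + 1) = k + 1 - l by omega]; ring
  rw [h1]
  have h2 := mul_le_mul_of_nonneg_left (sum_gO_le k hv) (by linarith : (0 : ℝ) ≤ 1 - θ)
  have h3 : ∀ m, m + 1 + 1 = m + 2 := fun m => rfl
  simp only [h3]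
  linarith

theorem gD_one_nonpos {θ : ℝ} (hθ : 1 / 2 ≤ θ) (hθ1 : θ ≤ 1) (n : ℕ) (hn : 2 ≤ n) :
    gD θ n 1 ≤ 0 := by
  induction n using Nat.strong_induction_on with
  | _ n ih =>
    obtain ⟨k, rfl⟩ := Nat.exists_eq_add_of_le' hn
    refine (gD_split k hθ1 le_rfl).trans ?_
    have h1 : (-θ + (1 - θ) * 1) * gA (k + 2) 1 ≤ 0 :=
      mul_nonpos_of_nonpos_of_nonneg (by linarith) (gA_nonneg _ le_rfl)
    have h2 : ∑ m ∈ Finset.range k, ∑ l ∈ Finset.range (k + 2),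
        gD θ (m + 2) ((1 : ℝ) ^ (l + 1)) * gO (k + 2 - (l + 1) * (m + 2)) 1 ≤ 0 := by
      refine Finset.sum_nonpos fun m hm => Finset.sum_nonpos fun l _ => ?_
      rw [Finset.mem_range] at hm
      rw [one_pow]
      exact mul_nonpos_of_nonpos_of_nonneg (ih (m + 2) (by omega) (by omega)) (gO_nonneg _ le_rfl)
    linarith

theorem pow_sub_one_le {v : ℝ} (hv : 1 ≤ v) (K : ℕ) : v ^ K - 1 ≤ (v - 1) * K * v ^ K := by
  induction K with
  | zero => simp
  | succ K ih =>
    have h1 : 1 ≤ v ^ K := one_le_pow₀ hv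
    push_cast
    rw [pow_succ]
    have h2 := mul_le_mul_of_nonneg_left ih (by linarith : (0 : ℝ) ≤ v)
    have h3 : 0 ≤ (v - 1) * (v ^ K * v - 1) :=
      mul_nonneg (by linarith) (by nlinarith)
    linarith

/-- The coefficients of the error term. -/
noncomputable def cc (l m : ℕ) : ℝ :=
  4 * (((l : ℝ) + 2) * (18 / 25) ^ l) * (((m : ℝ) + 2) ^ 2 * (18 / 25) ^ m)

theorem term_le {θ v : ℝ} (hθ : 1 / 2 ≤ θ) (hθ1 : θ ≤ 1) (hv : 1 ≤ v) (hv2 : v ≤ 6 / 5)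
    (n m l : ℕ) :
    gD θ (m + 2) (v ^ (l + 2)) * gO (n - (l + 2) * (m + 2)) v ≤ (v - 1) * cc l m * gA n v := by
  have hA := gA_nonneg n hv
  have hv0 : 0 ≤ v - 1 := by linarith
  have hc : 0 ≤ cc l m := by unfold cc; positivity
  by_cases hlt : n ≤ (l + 2) * (m + 2)
  · rw [Nat.sub_eq_zero_of_le hlt, gO_zero, mul_zero]
    positivity
  push Not at hlt
  set g := gO (n - (l + 2) * (m + 2)) v with hg
  have hg0 : 0 ≤ g := gO_nonneg _ hv
  set P := (l + 1) * (m + 2) with hP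
  have hPe : (l + 2) * (m + 2) = (m + 2) + P := by rw [hP]; ring
  have h1 := gD_le (θ := θ) (by linarith) (m + 2) (w := v ^ (l + 2)) (one_le_pow₀ hv)
  have h2 := gD_one_nonpos hθ hθ1 (m + 2) (by omega)
  have hna := na_nonneg (m + 2)
  -- lower bound for `gA`
  have hP2 : 2 ≤ P := by rw [hP]; nlinarith
  obtain ⟨j, hj⟩ := Nat.exists_eq_add_of_le' hP2
  have h3 : (2 : ℝ) ^ P ≤ 4 * na P := by
    have := na_ge j
    rw [hj, pow_add]; linarith
  have h4 : na (m + 2) * na P * g ≤ gA n v := by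
    have h5 := na_mul_gO (n - (l + 2) * (m + 2)) ((l + 2) * (m + 2)) hv
    rw [Nat.sub_add_cancel hlt.le, ← hg] at h5
    refine le_trans (mul_le_mul_of_nonneg_right ?_ hg0) h5
    rw [hPe]; exact na_mul _ _
  have h6 : na (m + 2) * (2 : ℝ) ^ P * g ≤ 4 * gA n v := by
    have : na (m + 2) * (2 : ℝ) ^ P * g ≤ na (m + 2) * (4 * na P) * g := by gcongr
    linarith
  -- upper bound
  have h7 : (v ^ (l + 2)) ^ (m + 2) - 1 ≤
      (v - 1) * (((l : ℝ) + 2) * (m + 2)) * (2 ^ P * ((18 / 25) ^ l * (18 / 25) ^ m)) := by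
    rw [← pow_mul]
    refine (pow_sub_one_le hv _).trans ?_
    push_cast
    refine mul_le_mul_of_nonneg_left ?_ (by positivity)
    calc v ^ ((l + 2) * (m + 2)) ≤ v ^ (2 * P) := by
          refine pow_le_pow_right₀ hv ?_
          rw [hP]; nlinarith
      _ = (v ^ 2) ^ P := by rw [pow_mul]
      _ ≤ (2 * (18 / 25)) ^ P := by
          refine pow_le_pow_left₀ (by positivity) ?_ _
          nlinarith
      _ = 2 ^ P * (18 / 25) ^ P := by rw [mul_pow]
      _ ≤ 2 ^ P * ((18 / 25) ^ l * (18 / 25) ^ m) := by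
          rw [← pow_add]
          refine mul_le_mul_of_nonneg_left ?_ (by positivity)
          refine pow_le_pow_of_le_one (by norm_num) (by norm_num) ?_
          rw [hP]; nlinarith
  push_cast at h1
  calc gD θ (m + 2) (v ^ (l + 2)) * g
      ≤ (((m : ℝ) + 2) * na (m + 2) * ((v ^ (l + 2)) ^ (m + 2) - 1)) * g :=
        mul_le_mul_of_nonneg_right (by linarith) hg0
    _ ≤ (((m : ℝ) + 2) * na (m + 2) *
        ((v - 1) * (((l : ℝ) + 2) * (m + 2)) * (2 ^ P * ((18 / 25) ^ l * (18 / 25) ^ m)))) * g := by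
        gcongr
    _ = ((v - 1) * (((l : ℝ) + 2) * (18 / 25) ^ l * (((m : ℝ) + 2) ^ 2 * (18 / 25) ^ m))) *
        (na (m + 2) * (2 : ℝ) ^ P * g) := by ring
    _ ≤ ((v - 1) * (((l : ℝ) + 2) * (18 / 25) ^ l * (((m : ℝ) + 2) ^ 2 * (18 / 25) ^ m))) *
        (4 * gA n v) := mul_le_mul_of_nonneg_left h6 (by positivity)
    _ = (v - 1) * cc l m * gA n v := by unfold cc; ring

theorem exists_S : ∃ S : ℝ, 0 ≤ S ∧ ∀ a b : ℕ,
    ∑ m ∈ Finset.range a, ∑ l ∈ Finset.range b, cc l m ≤ S := by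
  have hr : ‖(18 / 25 : ℝ)‖ < 1 := by norm_num [abs_of_pos]
  have s0 := summable_pow_mul_geometric_of_norm_lt_one 0 hr
  have s1 := summable_pow_mul_geometric_of_norm_lt_one 1 hr
  have s2 := summable_pow_mul_geometric_of_norm_lt_one 2 hr
  have t1 : Summable fun l : ℕ => ((l : ℝ) + 2) * (18 / 25) ^ l := by
    refine (s1.add (s0.mul_left 2)).congr fun l => ?_
    ring
  have t2 : Summable fun l : ℕ => ((l : ℝ) + 2) ^ 2 * (18 / 25) ^ l := by
    refine ((s2.add (s1.mul_left 4)).add (s0.mul_left 4)).congr fun l => ?_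
    ring
  refine ⟨4 * (∑' l : ℕ, ((l : ℝ) + 2) * (18 / 25) ^ l) *
    ∑' l : ℕ, ((l : ℝ) + 2) ^ 2 * (18 / 25) ^ l, ?_, ?_⟩
  · have h1 : 0 ≤ ∑' l : ℕ, ((l : ℝ) + 2) * (18 / 25) ^ l := tsum_nonneg fun l => by positivity
    have h2 : 0 ≤ ∑' l : ℕ, ((l : ℝ) + 2) ^ 2 * (18 / 25) ^ l := tsum_nonneg fun l => by positivity
    positivity
  · intro a b
    have h1 := t1.sum_le_tsum (Finset.range b) fun l _ => by positivity
    have h2 := t2.sum_le_tsum (Finset.range a) fun l _ => by positivity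
    have h3 : 0 ≤ ∑ l ∈ Finset.range b, ((l : ℝ) + 2) * (18 / 25) ^ l :=
      Finset.sum_nonneg fun l _ => by positivity
    have h4 : 0 ≤ ∑ l ∈ Finset.range a, ((l : ℝ) + 2) ^ 2 * (18 / 25) ^ l :=
      Finset.sum_nonneg fun l _ => by positivity
    calc ∑ m ∈ Finset.range a, ∑ l ∈ Finset.range b, cc l m
        = 4 * (∑ l ∈ Finset.range b, ((l : ℝ) + 2) * (18 / 25) ^ l) *
          ∑ m ∈ Finset.range a, ((m : ℝ) + 2) ^ 2 * (18 / 25) ^ m := by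
          simp_rw [cc, ← Finset.sum_mul, ← Finset.mul_sum]
      _ ≤ _ := by gcongr

theorem gD_nonpos {θ v S : ℝ} (hθ : 1 / 2 ≤ θ) (hθ1 : θ ≤ 1) (hv : 1 ≤ v) (hv2 : v ≤ 6 / 5)
    (hS : ∀ a b : ℕ, ∑ m ∈ Finset.range a, ∑ l ∈ Finset.range b, cc l m ≤ S)
    (hvS : (v - 1) * S + (1 - θ) * v ≤ θ) (n : ℕ) (hn : 2 ≤ n) : gD θ n v ≤ 0 := by
  induction n using Nat.strong_induction_on with
  | _ n ih =>
    obtain ⟨k, rfl⟩ := Nat.exists_eq_add_of_le' hn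
    refine (gD_split k hθ1 hv).trans ?_
    have hA := gA_nonneg (k + 2) hv
    have h2 : ∑ m ∈ Finset.range k, ∑ l ∈ Finset.range (k + 2),
        gD θ (m + 2) (v ^ (l + 1)) * gO (k + 2 - (l + 1) * (m + 2)) v ≤
        ∑ m ∈ Finset.range k, ∑ l ∈ Finset.range (k + 1), (v - 1) * cc l m * gA (k + 2) v := by
      refine Finset.sum_le_sum fun m hm => ?_
      rw [Finset.mem_range] at hm
      rw [Finset.sum_range_succ']
      have h3 : gD θ (m + 2) (v ^ (0 + 1)) * gO (k + 2 - (0 + 1) * (m + 2)) v ≤ 0 := by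
        rw [zero_add, pow_one]
        exact mul_nonpos_of_nonpos_of_nonneg (ih (m + 2) (by omega) (by omega)) (gO_nonneg _ hv)
      have h4 : ∑ l ∈ Finset.range (k + 1),
          gD θ (m + 2) (v ^ (l + 1 + 1)) * gO (k + 2 - (l + 1 + 1) * (m + 2)) v ≤
          ∑ l ∈ Finset.range (k + 1), (v - 1) * cc l m * gA (k + 2) v :=
        Finset.sum_le_sum fun l _ => term_le hθ hθ1 hv hv2 (k + 2) m l
      linarith
    have h5 : ∑ m ∈ Finset.range k, ∑ l ∈ Finset.range (k + 1), (v - 1) * cc l m * gA (k + 2) v =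
        (v - 1) * (∑ m ∈ Finset.range k, ∑ l ∈ Finset.range (k + 1), cc l m) * gA (k + 2) v := by
      simp_rw [← Finset.sum_mul, ← Finset.mul_sum]
    have h6 : (v - 1) * (∑ m ∈ Finset.range k, ∑ l ∈ Finset.range (k + 1), cc l m) * gA (k + 2) v
        ≤ (v - 1) * S * gA (k + 2) v := by
      have : 0 ≤ v - 1 := by linarith
      gcongr
      exact hS _ _
    have h7 : (-θ + (1 - θ) * v + (v - 1) * S) * gA (k + 2) v ≤ 0 :=
      mul_nonpos_of_nonpos_of_nonneg (by linarith) hA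
    linarith

/-- Number of trees with more than `lam * n` leaves. -/
noncomputable def Bc (lam : ℝ) (n : ℕ) : ℕ := ((FT n).filter fun u => lam * n < (lv u : ℝ)).card

theorem chernoff {θ : ℝ} (hθ : 1 / 2 < θ) (hθ1 : θ ≤ 1) : ∃ s : ℝ, 0 < s ∧
    ∀ (lam : ℝ) (n : ℕ), 2 ≤ n → (Bc lam n : ℝ) * Real.exp ((lam - θ) * n * s) ≤ na n := by
  obtain ⟨S, hS0, hS⟩ := exists_S
  -- choose the range of `v`
  obtain ⟨δ, hδ, hδ1, hδ2⟩ : ∃ δ : ℝ, 0 < δ ∧ δ ≤ 1 / 5 ∧ δ * (S + 1) ≤ 2 * θ - 1 := by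
    refine ⟨min (1 / 5) ((2 * θ - 1) / (S + 1)), ?_, min_le_left _ _, ?_⟩
    · refine lt_min (by norm_num) (div_pos (by linarith) (by linarith))
    · have h1 : 0 < S + 1 := by linarith
      exact (le_div_iff₀ h1).1 (min_le_right _ _)
  have hneg : ∀ v : ℝ, 1 ≤ v → v ≤ 1 + δ → ∀ n, 2 ≤ n → gD θ n v ≤ 0 := by
    intro v h1 h2 n hn
    refine gD_nonpos hθ.le hθ1 h1 (by linarith) hS ?_ n hn
    have h3 : (v - 1) * (S + 1) ≤ δ * (S + 1) := by
      have : 0 ≤ S + 1 := by linarith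
      gcongr; linarith
    nlinarith
  refine ⟨Real.log (1 + δ), Real.log_pos (by linarith), ?_⟩
  intro lam n hn
  set s := Real.log (1 + δ) with hs
  have hs0 : 0 < s := Real.log_pos (by linarith)
  let h : ℝ → ℝ := fun x => ∑ τ ∈ FT n, Real.exp (((lv τ : ℝ) - θ * n) * x)
  have hd : ∀ x, HasDerivAt h (∑ τ ∈ FT n, ((lv τ : ℝ) - θ * n) *
      Real.exp (((lv τ : ℝ) - θ * n) * x)) x := by
    intro x
    refine HasDerivAt.fun_sum fun τ _ => ?_
    have := ((hasDerivAt_id x).const_mul ((lv τ : ℝ) - θ * n)).exp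
    simp only [id, mul_one] at this
    exact this.congr_deriv (mul_comm _ _)
  have hanti : AntitoneOn h (Set.Icc 0 s) := by
    refine antitoneOn_of_deriv_nonpos (convex_Icc 0 s)
      (fun x _ => (hd x).continuousAt.continuousWithinAt)
      (fun x _ => (hd x).differentiableAt.differentiableWithinAt) ?_
    intro x hx
    rw [interior_Icc] at hx
    rw [(hd x).deriv]
    have h1 : ∑ τ ∈ FT n, ((lv τ : ℝ) - θ * n) * Real.exp (((lv τ : ℝ) - θ * n) * x) =
        Real.exp (-(θ * n * x)) * gD θ n (Real.exp x) := by
      rw [gD, Finset.mul_sum]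
      refine Finset.sum_congr rfl fun τ _ => ?_
      have h2 : Real.exp (((lv τ : ℝ) - θ * n) * x) =
          Real.exp (-(θ * n * x)) * Real.exp x ^ lv τ := by
        rw [← Real.exp_nat_mul, ← Real.exp_add]
        congr 1; ring
      rw [h2]; ring
    rw [h1]
    refine mul_nonpos_of_nonneg_of_nonpos (Real.exp_pos _).le (hneg _ ?_ ?_ n hn)
    · exact Real.one_le_exp hx.1.le
    · rw [← Real.exp_log (show 0 < 1 + δ by linarith)]
      exact Real.exp_le_exp.2 hx.2.le
  have h1 := hanti (Set.left_mem_Icc.2 hs0.le) (Set.right_mem_Icc.2 hs0.le) hs0.le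
  have h2 : h 0 = na n := by simp [h, na]
  rw [h2] at h1
  refine le_trans ?_ h1
  calc (Bc lam n : ℝ) * Real.exp ((lam - θ) * n * s)
      = ∑ τ ∈ (FT n).filter (fun u => lam * n < (lv u : ℝ)), Real.exp ((lam - θ) * n * s) := by
        rw [Finset.sum_const, nsmul_eq_mul, Bc]
    _ ≤ ∑ τ ∈ (FT n).filter (fun u => lam * n < (lv u : ℝ)),
        Real.exp (((lv τ : ℝ) - θ * n) * s) := by
        refine Finset.sum_le_sum fun τ hτ => Real.exp_le_exp.2 ?_
        have := (Finset.mem_filter.1 hτ).2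
        gcongr
        nlinarith
    _ ≤ h s := Finset.sum_le_sum_of_subset_of_nonneg (Finset.filter_subset _ _)
        fun _ _ _ => (Real.exp_pos _).le


/-! ## Counting trees with many leaves -/

theorem card_sub_eq (n : ℕ) (Q : ℕ → Prop) [DecidablePred Q] :
    Nat.card {u // sz u = n ∧ Q (lv u)} = ((FT n).filter fun u => Q (lv u)).card := by
  have h : Nat.card {u // u ∈ (FT n).filter fun u => Q (lv u)} =
      ((FT n).filter fun u => Q (lv u)).card := by
    rw [Nat.card_eq_fintype_card, Fintype.card_coe]
  rw [← h]
  refine Nat.card_congr (Equiv.subtypeEquivRight fun u => ?_)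
  rw [Finset.mem_filter, mem_FT]

theorem aboveCount_eq (lam : ℝ) (n : ℕ) : aboveCount lam n = Bc lam n := by
  classical
  exact (card_quotient n fun k => lam * n < (k : ℝ)).trans (card_sub_eq n fun k => lam * n < (k : ℝ))

theorem aPlusN_eq_s10 (n : ℕ) : aPlusN n = Bc (1 / 2) n := by
  classical
  refine ((card_quotient n fun k => n < 2 * k).trans (card_sub_eq n fun k => n < 2 * k)).trans ?_
  unfold Bc
  congr 1
  refine Finset.filter_congr fun u _ => ?_
  rw [← @Nat.cast_lt ℝ]
  push_cast
  constructor <;> intro h <;> linarith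

theorem Bc_mul {p q : ℕ} (hp : 2 ≤ p) (hq : 2 ≤ q) {a b c : ℝ}
    (h : c * ((p : ℝ) + q) ≤ a * p + b * q) : Bc a p * Bc b q ≤ Bc c (p + q) := by
  obtain ⟨G, h1, h2⟩ := exists_glue p q
  unfold Bc
  rw [← Finset.card_product]
  refine Finset.card_le_card_of_injOn G ?_ ?_
  · rintro ⟨x, y⟩ hx
    simp only [Finset.mem_coe, Finset.mem_product, Finset.mem_filter] at hx ⊢
    obtain ⟨h3, h4⟩ := h1 (x, y) (Finset.mem_product.2 ⟨hx.1.1, hx.2.1⟩)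
    refine ⟨h3, ?_⟩
    have hx1 := mem_FT.1 hx.1.1
    have hx2 := mem_FT.1 hx.2.1
    simp only at h4
    rw [← lv_eq_lvb (u := x) (by omega), ← lv_eq_lvb (u := y) (by omega)] at h4
    have h5 : (lv x : ℝ) + lv y ≤ lv (G (x, y)) := by exact_mod_cast h4
    push_cast
    linarith [hx.1.2, hx.2.2]
  · refine h2.mono ?_
    rintro ⟨x, y⟩ hx
    simp only [Finset.mem_coe, Finset.mem_product, Finset.mem_filter] at hx ⊢
    exact ⟨hx.1.1, hx.2.1⟩

theorem Bc_le_succ {n : ℕ} (hn : 2 ≤ n) {a : ℝ} (ha : a ≤ 1) : Bc a n ≤ Bc a (n + 1) := by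
  refine Finset.card_le_card_of_injOn (fun u => att u tleaf) ?_ ?_
  · intro u hu
    simp only [Finset.mem_coe, Finset.mem_filter, mem_FT] at hu ⊢
    rw [sz_att, sz_tleaf, lv_att, lv_tleaf, ← lv_eq_lvb (by omega), hu.1]
    refine ⟨rfl, ?_⟩
    push_cast
    linarith [hu.2]
  · intro x _ y _ h
    have h1 := brs.symm.injective h
    exact brs.injective ((Multiset.cons_inj_right _).1 h1)

theorem Bc_pos {n : ℕ} (hn : 2 ≤ n) {a : ℝ} (ha : a * n < (n : ℝ) - 1) : 0 < Bc a n := by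
  obtain ⟨k, rfl⟩ := Nat.exists_eq_add_of_le' hn
  refine Finset.card_pos.2 ⟨brs.symm (Multiset.replicate (k + 1) tleaf), ?_⟩
  rw [Finset.mem_filter, mem_FT, sz_mk, lv_mk (by simp [Multiset.replicate_succ])]
  simp only [Multiset.map_replicate, Multiset.sum_replicate, sz_tleaf, lv_tleaf]
  refine ⟨by simp; omega, ?_⟩
  push_cast at ha ⊢
  simp
  linarith

theorem Bc_zero (n : ℕ) : (Bc 0 n : ℝ) = na n := by
  rw [Bc, na, Finset.filter_true_of_mem]
  intro u _
  have := lv_pos u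
  rw [zero_mul]
  exact_mod_cast this

theorem Bc_le_na (a : ℝ) (n : ℕ) : (Bc a n : ℝ) ≤ na n := by
  rw [Bc, na]
  exact_mod_cast Finset.card_filter_le _ _

theorem na_le_Bc (n : ℕ) : na n ≤ Bc (1 / 2) (2 * n + 1) := by
  rw [na, Bc]
  norm_cast
  refine Finset.card_le_card_of_injOn
    (fun u => brs.symm (brs u + Multiset.replicate (n + 1) tleaf)) ?_ ?_
  · intro u hu
    simp only [Finset.mem_coe, Finset.mem_filter, mem_FT] at hu ⊢
    rw [sz_mk, lv_mk (by simp [Multiset.replicate_succ])]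
    have h1 := sz_eq u
    simp only [Multiset.map_add, Multiset.map_replicate, Multiset.sum_add, Multiset.sum_replicate,
      sz_tleaf, lv_tleaf, smul_eq_mul, mul_one]
    refine ⟨by omega, ?_⟩
    push_cast
    have : (0 : ℝ) ≤ (((brs u).map lv).sum : ℕ) := Nat.cast_nonneg _
    push_cast at this
    linarith
  · intro x _ y _ h
    have h1 := brs.symm.injective h
    exact brs.injective (add_right_cancel h1)

/-! ## The limit -/

/-- Logarithm of the number of trees with more than `a * n` leaves. -/
noncomputable def Lc (a : ℝ) (n : ℕ) : ℝ := Real.log (Bc a n)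

theorem Lc_nonneg (a : ℝ) (n : ℕ) : 0 ≤ Lc a n := Real.log_natCast_nonneg _

theorem Lc_zero (a : ℝ) : Lc a 0 = 0 := by simp [Lc, Bc, FT_zero]

theorem Lc_one (a : ℝ) : Lc a 1 = 0 := by
  have h : Bc a 1 ≤ 1 := by
    unfold Bc
    refine (Finset.card_filter_le _ _).trans ?_
    rw [FT_one]; simp
  unfold Lc
  interval_cases Bc a 1 <;> simp

theorem Lc_mono {a : ℝ} (ha : a ≤ 1) : Monotone (Lc a) := by
  refine monotone_nat_of_le_succ fun n => ?_
  rcases Nat.lt_or_ge n 2 with h | h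
  · have : Lc a n = 0 := by
      interval_cases n
      · exact Lc_zero a
      · exact Lc_one a
    rw [this]; exact Lc_nonneg _ _
  · rcases Nat.eq_zero_or_pos (Bc a n) with h0 | h0
    · rw [Lc, h0, Nat.cast_zero, Real.log_zero]; exact Lc_nonneg _ _
    · refine Real.log_le_log (by exact_mod_cast h0) ?_
      exact_mod_cast Bc_le_succ h ha

theorem Lc_add {p q : ℕ} (hp : 2 ≤ p) (hq : 2 ≤ q) {a b c : ℝ}
    (h : c * ((p : ℝ) + q) ≤ a * p + b * q) (h1 : 0 < Bc a p) (h2 : 0 < Bc b q) :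
    Lc a p + Lc b q ≤ Lc c (p + q) := by
  have h1' : (0 : ℝ) < Bc a p := by exact_mod_cast h1
  have h2' : (0 : ℝ) < Bc b q := by exact_mod_cast h2
  rw [Lc, Lc, ← Real.log_mul h1'.ne' h2'.ne']
  refine Real.log_le_log (by positivity) ?_
  exact_mod_cast Bc_mul hp hq h

theorem Lc_super {a : ℝ} (ha : a ≤ 1) (p q : ℕ) : Lc a p + Lc a q ≤ Lc a (p + q) := by
  have hm := Lc_mono ha
  have hp : Lc a p ≤ Lc a (p + q) := hm (by omega)
  have hq : Lc a q ≤ Lc a (p + q) := hm (by omega)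
  have small : ∀ n, n < 2 → Lc a n = 0 := by
    intro n h
    interval_cases n
    · exact Lc_zero a
    · exact Lc_one a
  have zero : ∀ n, Bc a n = 0 → Lc a n = 0 := by
    intro n h
    rw [Lc, h, Nat.cast_zero, Real.log_zero]
  rcases Nat.lt_or_ge p 2 with h | h
  · rw [small p h, zero_add]; exact hq
  rcases Nat.lt_or_ge q 2 with h' | h'
  · rw [small q h', add_zero]; exact hp
  rcases Nat.eq_zero_or_pos (Bc a p) with h0 | h0
  · rw [zero p h0, zero_add]; exact hq
  rcases Nat.eq_zero_or_pos (Bc a q) with h0' | h0'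
  · rw [zero q h0', add_zero]; exact hp
  exact Lc_add h h' (by ring_nf; exact le_rfl) h0 h0'

open Filter Topology

theorem na_bound (C1 : ℝ)
    (hC1 : Tendsto (fun n : ℕ => (aPlusN n : ℝ) ^ (1 / (n : ℝ))) atTop (𝓝 C1)) :
    ∃ K : ℝ, 0 ≤ K ∧ ∀ n, Real.log (na n) ≤ K * n := by
  obtain ⟨R, hR⟩ := hC1.bddAbove_range
  have hR' : ∀ n : ℕ, (aPlusN n : ℝ) ^ (1 / (n : ℝ)) ≤ max R 1 := fun n =>
    (hR ⟨n, rfl⟩).trans (le_max_left _ _)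
  set Q := max R 1 with hQ
  have hQ1 : 1 ≤ Q := le_max_right _ _
  have hlQ : 0 ≤ Real.log Q := Real.log_nonneg hQ1
  have h1 : ∀ n : ℕ, 1 ≤ n → (Bc (1 / 2) n : ℝ) ≤ Q ^ n := by
    intro n hn
    have h2 := hR' n
    rw [aPlusN_eq_s10] at h2
    have h3 : (0 : ℝ) ≤ Bc (1 / 2) n := Nat.cast_nonneg _
    have h4 := pow_le_pow_left₀ (Real.rpow_nonneg h3 _) h2 n
    rw [one_div (n : ℝ), Real.rpow_inv_natCast_pow h3 (by omega)] at h4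
    exact h4
  refine ⟨3 * Real.log Q, by positivity, ?_⟩
  intro n
  rcases Nat.eq_zero_or_pos n with h0 | h0
  · rw [h0]; simp [na, FT_zero]
  · have h5 := (na_le_Bc n).trans (h1 (2 * n + 1) (by omega))
    have h6 := Real.log_le_log (na_pos h0) h5
    rw [Real.log_pow] at h6
    push_cast at h6
    have h7 : (1 : ℝ) ≤ n := by exact_mod_cast h0
    nlinarith

theorem Lc_le {K : ℝ} (hK0 : 0 ≤ K) (hK : ∀ n, Real.log (na n) ≤ K * n) (a : ℝ) (n : ℕ) :
    Lc a n ≤ K * n := by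
  rcases Nat.eq_zero_or_pos (Bc a n) with h0 | h0
  · rw [Lc, h0, Nat.cast_zero, Real.log_zero]; positivity
  · exact (Real.log_le_log (by exact_mod_cast h0) (Bc_le_na a n)).trans (hK n)

theorem exists_lim {K : ℝ} (hK0 : 0 ≤ K) (hK : ∀ n, Real.log (na n) ≤ K * n) :
    ∃ g : ℝ → ℝ, ∀ a < 1, Tendsto (fun n : ℕ => Lc a n / n) atTop (𝓝 (g a)) := by
  have : ∀ a : ℝ, ∃ y : ℝ, a < 1 → Tendsto (fun n : ℕ => Lc a n / n) atTop (𝓝 y) := by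
    intro a
    by_cases ha : a < 1
    · have hs : Subadditive fun n => -Lc a n := by
        intro p q
        have := Lc_super ha.le p q
        linarith
      have hb : BddBelow (Set.range fun n : ℕ => -Lc a n / n) := by
        refine ⟨-K, ?_⟩
        rintro _ ⟨n, rfl⟩
        change -K ≤ -Lc a n / n
        have h1 := Lc_le hK0 hK a n
        rcases Nat.eq_zero_or_pos n with h0 | h0
        · rw [h0]; simpa using hK0
        · rw [le_div_iff₀ (by exact_mod_cast h0)]
          linarith
      refine ⟨-hs.lim, fun _ => ?_⟩
      refine (hs.tendsto_lim hb).neg.congr fun n => ?_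
      ring
    · exact ⟨0, fun h => absurd h ha⟩
  choose g hg using this
  exact ⟨g, hg⟩

theorem Bc_ev_pos {a : ℝ} (ha : a < 1) : ∀ᶠ n : ℕ in atTop, 0 < Bc a n := by
  have h1 : Tendsto (fun n : ℕ => (n : ℝ)) atTop atTop := tendsto_natCast_atTop_atTop
  filter_upwards [h1.eventually_gt_atTop (1 / (1 - a)), eventually_ge_atTop 2] with n hn hn2
  refine Bc_pos hn2 ?_
  rw [div_lt_iff₀ (by linarith)] at hn
  linarith

theorem concave_core {g : ℝ → ℝ} (hg : ∀ a < 1, Tendsto (fun n : ℕ => Lc a n / n) atTop (𝓝 (g a)))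
    {a b t : ℝ} (ha : a < 1) (hba : b ≤ a) (ht : 0 < t) (ht1 : t < 1) :
    t * g a + (1 - t) * g b ≤ g (t * a + (1 - t) * b) := by
  have hb : b < 1 := by linarith
  have hc : t * a + (1 - t) * b < 1 := by nlinarith
  let q : ℕ → ℕ := fun n => ⌊(1 - t) * n⌋₊
  let p : ℕ → ℕ := fun n => n - q n
  have hcast : Tendsto (fun n : ℕ => (n : ℝ)) atTop atTop := tendsto_natCast_atTop_atTop
  have hq_le : ∀ n, (q n : ℝ) ≤ (1 - t) * n := fun n =>
    Nat.floor_le (mul_nonneg (by linarith) (Nat.cast_nonneg _))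
  have hqn : ∀ n, q n ≤ n := by
    intro n
    have h1 := hq_le n
    have h2 : (0 : ℝ) ≤ n := Nat.cast_nonneg _
    have : (q n : ℝ) ≤ n := by nlinarith
    exact_mod_cast this
  have hpq : ∀ n, p n + q n = n := fun n => Nat.sub_add_cancel (hqn n)
  have hpqR : ∀ n, (p n : ℝ) + q n = n := fun n => by exact_mod_cast hpq n
  have hp_ge : ∀ n : ℕ, t * n ≤ p n := by
    intro n
    have h1 := hq_le n
    have h2 := hpqR n
    linarith
  have hq_top : Tendsto q atTop atTop :=
    tendsto_nat_floor_atTop.comp (hcast.const_mul_atTop (by linarith))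
  have hp_top : Tendsto p atTop atTop := by
    refine (tendsto_natCast_atTop_iff (R := ℝ)).1 ?_
    exact tendsto_atTop_mono hp_ge (hcast.const_mul_atTop ht)
  have hq_lim : Tendsto (fun n : ℕ => (q n : ℝ) / n) atTop (𝓝 (1 - t)) :=
    (tendsto_nat_floor_mul_div_atTop (R := ℝ) (a := 1 - t) (by linarith)).comp hcast
  have hp_lim : Tendsto (fun n : ℕ => (p n : ℝ) / n) atTop (𝓝 t) := by
    have h1 : Tendsto (fun n : ℕ => 1 - (q n : ℝ) / n) atTop (𝓝 t) := by
      have := hq_lim.const_sub 1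
      rwa [sub_sub_cancel] at this
    refine h1.congr' ?_
    filter_upwards [eventually_gt_atTop 0] with n hn
    have hn' : (n : ℝ) ≠ 0 := by exact_mod_cast hn.ne'
    rw [eq_div_iff hn', sub_mul, div_mul_cancel₀ _ hn', ← hpqR n]; ring
  have key : ∀ (c : ℝ) (f : ℕ → ℕ) (x : ℝ), c < 1 → Tendsto f atTop atTop →
      Tendsto (fun n : ℕ => (f n : ℝ) / n) atTop (𝓝 x) →
      Tendsto (fun n : ℕ => Lc c (f n) / n) atTop (𝓝 (x * g c)) := by
    intro c f x hc hf hfx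
    refine (hfx.mul ((hg c hc).comp hf)).congr' ?_
    filter_upwards [hf.eventually_gt_atTop 0] with n hn
    have hn' : (f n : ℝ) ≠ 0 := by exact_mod_cast hn.ne'
    simp only [Function.comp]
    field_simp
  refine le_of_tendsto_of_tendsto ((key a p t ha hp_top hp_lim).add (key b q _ hb hq_top hq_lim))
    (hg _ hc) ?_
  filter_upwards [hp_top.eventually_ge_atTop 2, hq_top.eventually_ge_atTop 2,
    hp_top.eventually (Bc_ev_pos ha), hq_top.eventually (Bc_ev_pos hb)] with n h1 h2 h3 h4
  rw [← add_div]
  refine div_le_div_of_nonneg_right ?_ (Nat.cast_nonneg _)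
  have h5 := Lc_add (c := t * a + (1 - t) * b) h1 h2 (a := a) (b := b) ?_ h3 h4
  · rwa [hpq n] at h5
  · have h6 := hpqR n
    have h7 := hp_ge n
    have h8 : (q n : ℝ) = n - p n := by linarith
    rw [h6, h8]
    nlinarith

theorem concave_g {g : ℝ → ℝ} (hg : ∀ a < 1, Tendsto (fun n : ℕ => Lc a n / n) atTop (𝓝 (g a))) :
    ConcaveOn ℝ (Set.Iio 1) g := by
  refine ⟨convex_Iio 1, ?_⟩
  intro x hx y hy a b ha hb hab
  rw [Set.mem_Iio] at hx hy
  simp only [smul_eq_mul]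
  rcases ha.eq_or_lt with h | h
  · have hb1 : b = 1 := by linarith
    rw [← h, hb1]; simp
  rcases hb.eq_or_lt with h' | h'
  · have ha1 : a = 1 := by linarith
    rw [← h', ha1]; simp
  rcases le_total y x with hxy | hxy
  · have := concave_core hg hx hxy h (by linarith)
    rwa [show 1 - a = b by linarith] at this
  · have := concave_core hg hy hxy h' (by linarith)
    rw [show 1 - b = a by linarith] at this
    rw [add_comm (a * x), add_comm (a * g x)]
    exact this

theorem g_lt {g : ℝ → ℝ} (hg : ∀ a < 1, Tendsto (fun n : ℕ => Lc a n / n) atTop (𝓝 (g a)))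
    {a : ℝ} (ha : 1 / 2 < a) (ha1 : a < 1) : g a < g 0 := by
  obtain ⟨θ, h1, h2⟩ := exists_between ha
  obtain ⟨s, hs, hch⟩ := chernoff h1 (by linarith)
  have hpos : 0 < (a - θ) * s := mul_pos (by linarith) hs
  suffices h : g a + (a - θ) * s ≤ g 0 by linarith
  refine le_of_tendsto_of_tendsto ((hg a ha1).add_const _) (hg 0 (by norm_num)) ?_
  filter_upwards [Bc_ev_pos ha1, eventually_ge_atTop 2] with n hn hn2
  have hn0 : (0 : ℝ) < n := by exact_mod_cast (by omega : 0 < n)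
  have hB : (0 : ℝ) < Bc a n := by exact_mod_cast hn
  rw [le_div_iff₀ hn0, add_mul, div_mul_cancel₀ _ hn0.ne']
  have h3 := Real.log_le_log (by positivity) (hch a n hn2)
  rw [Real.log_mul hB.ne' (Real.exp_pos _).ne', Real.log_exp, ← Bc_zero] at h3
  simp only [Lc]
  linarith

theorem lim_exp {g : ℝ → ℝ} (hg : ∀ a < 1, Tendsto (fun n : ℕ => Lc a n / n) atTop (𝓝 (g a)))
    {a : ℝ} (ha : a < 1) :
    Tendsto (fun n : ℕ => (aboveCount a n : ℝ) ^ (1 / (n : ℝ))) atTop (𝓝 (Real.exp (g a))) := by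
  refine ((Real.continuous_exp.tendsto _).comp (hg a ha)).congr' ?_
  filter_upwards [Bc_ev_pos ha] with n hn
  have hB : (0 : ℝ) < Bc a n := by exact_mod_cast hn
  rw [aboveCount_eq, Real.rpow_def_of_pos hB]
  simp only [Function.comp, Lc]
  congr 1
  ring

/-- Theorem 7: there is a continuous function `C(λ)` with
`(Σ_{k>λn} a_{n,k})^{1/n} → C(λ)`, `C(1/2) = C₁`, and `C(λ) < C(1/2)` for
`λ > 1/2`. -/
theorem theorem7 (C1 : ℝ)
    (hC1 : Filter.Tendsto (fun n : ℕ => (aPlusN n : ℝ) ^ (1 / (n : ℝ)))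
      Filter.atTop (nhds C1)) :
    ∃ C : ℝ → ℝ, ContinuousOn C (Set.Ico 0 1) ∧
      (∀ lam ∈ Set.Ico (0 : ℝ) 1, 0 < C lam) ∧
      (∀ lam ∈ Set.Ico (0 : ℝ) 1,
        Filter.Tendsto (fun n : ℕ => (aboveCount lam n : ℝ) ^ (1 / (n : ℝ)))
          Filter.atTop (nhds (C lam))) ∧
      C (1 / 2) = C1 ∧
      (∀ lam ∈ Set.Ioo (1 / 2 : ℝ) 1, C lam < C (1 / 2)) := by
  obtain ⟨K, hK0, hK⟩ := na_bound C1 hC1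
  obtain ⟨g, hg⟩ := exists_lim hK0 hK
  have hcc := concave_g hg
  refine ⟨fun a => Real.exp (g a), ?_, fun _ _ => Real.exp_pos _, fun a ha => lim_exp hg ha.2,
    ?_, ?_⟩
  · have h1 : ContinuousOn g (Set.Iio 1) := by
      have := hcc.continuousOn_interior
      rwa [interior_Iio] at this
    exact Real.continuous_exp.comp_continuousOn (h1.mono fun x hx => hx.2)
  · refine tendsto_nhds_unique (lim_exp hg (by norm_num)) (hC1.congr fun n => ?_)
    rw [aPlusN_eq_s10, aboveCount_eq]
  · intro a ha
    refine Real.exp_lt_exp.2 ?_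
    have h0 := g_lt hg ha.1 ha.2
    have ha0 : 0 < a := by linarith [ha.1]
    have ht : 1 / (2 * a) < 1 := by
      rw [div_lt_one (by positivity)]; linarith [ha.1]
    have h1 := concave_core hg (a := a) (b := 0) (t := 1 / (2 * a)) ha.2 ha0.le (by positivity) ht
    rw [mul_zero, add_zero, show 1 / (2 * a) * a = 1 / 2 by field_simp] at h1
    nlinarith
end
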